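/- arXiv:1012.5329 — 2 statements merged into one kernel-verified Lean document; each statement's English description precedes it below -/
import Mathlib

section
/- Let C be a clutter with edge ideal I(C) in the polynomial ring R = K[x_1,...,x_n] over a field K. If ht(I(C)) = 1, then reg(R/I(C)) = pd(R/I_c(C)) - 1, where I_c(C) is the ideal of vertex covers (Alexander dual) of I(C), reg denotes Castelnuovo-Mumford regularity, and pd denotes projective dimension over R. -/
open MvPolynomial

/-- A clutter on the vertex set `Fin n`: a family of edges, none containing another. -/
structure Clutter (n : ℕ) : Type where
  edges : Finset (Finset (Fin n))
  antichain : ∀ e ∈ edges, ∀ f ∈ edges, e ⊆ f → e = f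

/-- The squarefree monomial `∏_{i ∈ e} xᵢ` associated to a set of vertices. -/
noncomputable def edgeMonomial (K : Type) [Field K] {n : ℕ} (e : Finset (Fin n)) :
    MvPolynomial (Fin n) K :=
  ∏ i ∈ e, X i

/-- The edge ideal of a clutter. -/
noncomputable def Clutter.edgeIdeal (K : Type) [Field K] {n : ℕ} (C : Clutter n) :
    Ideal (MvPolynomial (Fin n) K) :=
  Ideal.span (edgeMonomial K '' ↑C.edges)

/-- A vertex cover of a clutter: a set of vertices meeting every edge. -/
def Clutter.IsVertexCover {n : ℕ} (C : Clutter n) (S : Finset (Fin n)) : Prop :=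
  ∀ e ∈ C.edges, ∃ i ∈ e, i ∈ S

/-- The ideal of vertex covers (Alexander dual) of a clutter. -/
noncomputable def Clutter.coverIdeal (K : Type) [Field K] {n : ℕ} (C : Clutter n) :
    Ideal (MvPolynomial (Fin n) K) :=
  Ideal.span (edgeMonomial K '' {S : Finset (Fin n) | C.IsVertexCover S})

/-- A finite graded free resolution of `R/I`, where `R = K[x₁,…,xₙ]`.
`F_i = ⊕_j R(-tw i j)` with `rk i` summands, differentials `δ i : F_{i+1} → F_i`
given by matrices with homogeneous entries of the correct degrees, exact, and
augmented by a degree-preserving surjection `F₀ → R/I`. -/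
structure GFR (n : ℕ) (K : Type) [Field K] (I : Ideal (MvPolynomial (Fin n) K)) : Type where
  len : ℕ
  rk : ℕ → ℕ
  rk_zero : ∀ i, len < i → rk i = 0
  tw : (i : ℕ) → Fin (rk i) → ℕ
  δ : (i : ℕ) → ((Fin (rk (i + 1)) → MvPolynomial (Fin n) K) →ₗ[MvPolynomial (Fin n) K]
        (Fin (rk i) → MvPolynomial (Fin n) K))
  δ_homog : ∀ (i : ℕ) (k : Fin (rk (i + 1))) (j : Fin (rk i)),
      δ i (Pi.single k 1) j = 0 ∨
        (tw i j ≤ tw (i + 1) k ∧ (δ i (Pi.single k 1) j).IsHomogeneous (tw (i + 1) k - tw i j))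
  aug : (Fin (rk 0) → MvPolynomial (Fin n) K) →ₗ[MvPolynomial (Fin n) K] MvPolynomial (Fin n) K
  aug_homog : ∀ j : Fin (rk 0), (aug (Pi.single j 1)).IsHomogeneous (tw 0 j)
  aug_surj : ∀ r : MvPolynomial (Fin n) K, ∃ x, r - aug x ∈ I
  exact_zero : LinearMap.range (δ 0) = Submodule.comap aug I
  exact_succ : ∀ i : ℕ, LinearMap.range (δ (i + 1)) = LinearMap.ker (δ i)

/-- The Castelnuovo–Mumford regularity of `R/I`:
the least `r` such that `R/I` admits a (finite) graded free resolution all of whose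
`i`-th twists are at most `r + i`.  (This value is attained by the minimal graded free
resolution, so it equals `max { j - i : b_{ij}(R/I) ≠ 0 }`.) -/
noncomputable def regR {n : ℕ} {K : Type} [Field K] (I : Ideal (MvPolynomial (Fin n) K)) : ℕ :=
  sInf { r : ℕ | ∃ F : GFR n K I, ∀ (i : ℕ) (j : Fin (F.rk i)), F.tw i j ≤ r + i }

/-- The projective dimension of `R/I` over `R = K[x₁,…,xₙ]`: the least possible length of
a (finite, graded) free resolution of `R/I`. -/
noncomputable def pdR {n : ℕ} {K : Type} [Field K] (I : Ideal (MvPolynomial (Fin n) K)) : ℕ :=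
  sInf { d : ℕ | ∃ F : GFR n K I, ∀ i : ℕ, d < i → F.rk i = 0 }

/-- The height of an ideal: the infimum of the heights of the primes containing it
(in the prime spectrum, ordered by inclusion). -/
noncomputable def idealHeight {A : Type} [CommRing A] (I : Ideal A) : WithTop ℕ :=
  ⨅ (p : PrimeSpectrum A) (_ : I ≤ p.asIdeal), Order.height p

section VanSec

variable {K : Type} [Field K] {n : ℕ} {W : Type} [AddCommGroup W] [Module K W]

/-- sign functions on the Boolean lattice -/
structure IsSign (s : Fin n → Finset (Fin n) → K) : Prop where
  sq : ∀ v γ, s v γ * s v γ = 1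
  anti : ∀ v w γ, v ∈ γ → w ∈ γ → v ≠ w →
    s v γ * s w (γ.erase v) + s w γ * s v (γ.erase w) = 0

/-- the cube differential -/
def DD (s : Fin n → Finset (Fin n) → K) (α : Finset (Fin n)) (c : Finset (Fin n) → W)
    (γ : Finset (Fin n)) : W :=
  ∑ v ∈ γ \ α, s v γ • c (γ.erase v)

lemma DD_add (s : Fin n → Finset (Fin n) → K) (α) (b c : Finset (Fin n) → W) (γ) :
    DD s α (fun γ => b γ + c γ) γ = DD s α b γ + DD s α c γ := by
  simp [DD, Finset.sum_add_distrib]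

lemma DD_sub (s : Fin n → Finset (Fin n) → K) (α) (b c : Finset (Fin n) → W) (γ) :
    DD s α (fun γ => b γ - c γ) γ = DD s α b γ - DD s α c γ := by
  simp [DD, smul_sub]

lemma DD_congr (s : Fin n → Finset (Fin n) → K) (α) (b c : Finset (Fin n) → W) (γ)
    (h : ∀ v ∈ γ, v ∉ α → b (γ.erase v) = c (γ.erase v)) :
    DD s α b γ = DD s α c γ := by
  apply Finset.sum_congr rfl
  intro v hv
  rw [Finset.mem_sdiff] at hv
  rw [h v hv.1 hv.2]

lemma DD_map {W' : Type} [AddCommGroup W'] [Module K W'] (f : W →ₗ[K] W')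
    (s : Fin n → Finset (Fin n) → K) (α) (b : Finset (Fin n) → W) (γ) :
    DD s α (fun γ => f (b γ)) γ = f (DD s α b γ) := by
  simp [DD, map_sum]

lemma DD_DD {s : Fin n → Finset (Fin n) → K} (hs : IsSign s) (α) (c : Finset (Fin n) → W) (γ) :
    DD s α (DD s α c) γ = 0 := by
  simp only [DD, Finset.smul_sum]
  rw [Finset.sum_sigma']
  apply Finset.sum_involution (fun (p : (_ : Fin n) × Fin n) _ => ⟨p.2, p.1⟩)
  · rintro ⟨v, w⟩ h
    simp only [Finset.mem_sigma, Finset.mem_sdiff, Finset.mem_erase] at h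
    obtain ⟨⟨h1, h2⟩, ⟨h3, h4⟩, h5⟩ := h
    simp only [smul_smul]
    rw [Finset.erase_right_comm, ← add_smul, hs.anti v w γ h1 h4 (Ne.symm h3), zero_smul]
  · rintro ⟨v, w⟩ h _ heq
    simp only [Finset.mem_sigma, Finset.mem_sdiff, Finset.mem_erase] at h
    simp only [Sigma.mk.injEq, heq_eq_eq] at heq
    exact h.2.1.1 heq.1
  · rintro ⟨v, w⟩ h
    simp only [Finset.mem_sigma, Finset.mem_sdiff, Finset.mem_erase] at h ⊢
    tauto
  · rintro ⟨v, w⟩ h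
    rfl

/-- vanishing of the cohomology of the cube `[α, β]` in (absolute) degree `j` -/
def Van (s : Fin n → Finset (Fin n) → K) (N : Finset (Fin n) → Submodule K W)
    (α β : Finset (Fin n)) (j : ℕ) : Prop :=
  ∀ c : Finset (Fin n) → W, (∀ γ, α ⊆ γ → γ ⊆ β → γ.card = j → c γ ∈ N γ) →
    (∀ γ, α ⊆ γ → γ ⊆ β → γ.card = j + 1 → DD s α c γ = 0) →
    ∃ b : Finset (Fin n) → W, (∀ γ, α ⊆ γ → γ ⊆ β → γ.card + 1 = j → b γ ∈ N γ) ∧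
      ∀ γ, α ⊆ γ → γ ⊆ β → γ.card = j → DD s α b γ = c γ

lemma DD_insert (s : Fin n → Finset (Fin n) → K) {α γ : Finset (Fin n)} {v} (hv : v ∉ α)
    (hg : v ∈ γ) (c : Finset (Fin n) → W) :
    DD s α c γ = s v γ • c (γ.erase v) + DD s (insert v α) c γ := by
  have : γ \ α = insert v (γ \ insert v α) := by
    ext x; simp only [Finset.mem_sdiff, Finset.mem_insert]
    by_cases hx : x = v <;> simp_all
  unfold DD
  rw [this, Finset.sum_insert (by simp)]

lemma sub_of_insert {β γ : Finset (Fin n)} {v} (h : γ ⊆ insert v β) (hv : v ∉ γ) : γ ⊆ β := by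
  intro x hx
  have := h hx
  rw [Finset.mem_insert] at this
  rcases this with rfl | h
  · exact absurd hx hv
  · exact h

lemma sub_erase_of {α γ : Finset (Fin n)} {v} (h : α ⊆ γ) (hv : v ∉ α) : α ⊆ γ.erase v := by
  intro x hx
  rw [Finset.mem_erase]
  exact ⟨fun e => hv (e ▸ hx), h hx⟩

lemma van_A {s : Fin n → Finset (Fin n) → K} (hs : IsSign s) (N : Finset (Fin n) → Submodule K W)
    (hN : ∀ σ τ, σ ⊆ τ → N σ ≤ N τ) {α β : Finset (Fin n)} {v} (hab : α ⊆ β) (hv : v ∉ β) {j : ℕ}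
    (h1 : Van s N α β j) (h2 : Van s N α (insert v β) (j + 1)) :
    Van s N (insert v α) (insert v β) (j + 1) := by
  have hva : v ∉ α := fun h => hv (hab h)
  intro c hc hdc
  obtain ⟨b, hb, hdb⟩ := h2 (fun γ => if v ∈ γ then c γ else 0)
    (by
      intro γ ha hb hj
      split_ifs with h
      · exact hc γ (Finset.insert_subset h ha) hb hj
      · exact zero_mem _)
    (by
      intro γ ha hb hj
      by_cases h : v ∈ γ
      · rw [DD_insert s hva h]
        simp only [Finset.notMem_erase, if_false, smul_zero, zero_add]
        rw [← hdc γ (Finset.insert_subset h ha) hb hj]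
        apply DD_congr
        intro w hw hw'
        rw [if_pos]
        rw [Finset.mem_erase]
        refine ⟨?_, h⟩
        rintro rfl
        simp at hw'
      · apply Finset.sum_eq_zero
        intro w hw
        beta_reduce
        rw [if_neg, smul_zero]
        intro h'
        exact h (Finset.mem_of_mem_erase h'))
  obtain ⟨e, he, hde⟩ := h1 b
    (fun γ ha hg hj => hb γ ha (hg.trans (Finset.subset_insert _ _)) (by omega))
    (by
      intro γ ha hg hj
      rw [hdb γ ha (hg.trans (Finset.subset_insert _ _)) hj, if_neg]
      exact fun h => hv (hg h))
  let e' : Finset (Fin n) → W := fun γ => if v ∈ γ then 0 else e γ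
  have he' : ∀ γ, α ⊆ γ → γ ⊆ insert v β → γ.card + 1 = j → e' γ ∈ N γ := by
    intro γ ha hg hj
    simp only [e']
    split_ifs with h
    · exact zero_mem _
    · exact he γ ha (sub_of_insert hg h) hj
  refine ⟨fun γ => b γ - DD s α e' γ, ?_, ?_⟩
  · intro γ ha hg hj
    have ha' : α ⊆ γ := (Finset.subset_insert _ _).trans ha
    apply sub_mem (hb γ ha' hg hj)
    apply sum_mem
    intro w hw
    rw [Finset.mem_sdiff] at hw
    apply Submodule.smul_mem
    apply hN _ _ (Finset.erase_subset w γ)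
    apply he' _ (sub_erase_of ha' hw.2) ((Finset.erase_subset _ _).trans hg)
    rw [Finset.card_erase_of_mem hw.1]
    have := Finset.card_pos.2 ⟨w, hw.1⟩
    omega
  · intro γ ha hg hj
    have ha' : α ⊆ γ := (Finset.subset_insert _ _).trans ha
    have hvg : v ∈ γ := ha (Finset.mem_insert_self _ _)
    have key := DD_insert s hva hvg (fun γ => b γ - DD s α e' γ)
    rw [DD_sub, DD_DD hs, sub_zero, hdb γ ha' hg hj, if_pos hvg] at key
    have h0 : b (γ.erase v) - DD s α e' (γ.erase v) = 0 := by
      rw [sub_eq_zero, ← hde (γ.erase v) (sub_erase_of ha' hva)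
        (sub_of_insert ((Finset.erase_subset _ _).trans hg) (by simp))
        (by rw [Finset.card_erase_of_mem hvg]; omega)]
      apply DD_congr
      intro w hw _
      simp [e']
    rw [h0, smul_zero, zero_add] at key
    exact key.symm

lemma van_B {s : Fin n → Finset (Fin n) → K} (hs : IsSign s) (N : Finset (Fin n) → Submodule K W)
    (hN : ∀ σ τ, σ ⊆ τ → N σ ≤ N τ) {α β : Finset (Fin n)} {v} (hab : α ⊆ β) (hv : v ∉ β) {j : ℕ}
    (h1 : Van s N α (insert v β) j) (h2 : Van s N (insert v α) (insert v β) (j + 1)) :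
    Van s N α β j := by
  have hva : v ∉ α := fun h => hv (hab h)
  intro c hc hdc
  let c' : Finset (Fin n) → W := fun γ => if v ∈ γ then 0 else c γ
  have hc' : ∀ γ, α ⊆ γ → γ ⊆ insert v β → γ.card = j → c' γ ∈ N γ := by
    intro γ ha hg hj
    simp only [c']
    split_ifs with h
    · exact zero_mem _
    · exact hc γ ha (sub_of_insert hg h) hj
  have hdc' : ∀ γ, v ∉ γ → DD s α c' γ = DD s α c γ := by
    intro γ h
    apply DD_congr
    intro w _ _
    simp [c', h]
  obtain ⟨b, hb, hdb⟩ := h2 (DD s α c')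
    (by
      intro γ ha hg hj
      have ha' : α ⊆ γ := (Finset.subset_insert _ _).trans ha
      apply sum_mem
      intro w hw
      rw [Finset.mem_sdiff] at hw
      apply Submodule.smul_mem
      apply hN _ _ (Finset.erase_subset w γ)
      apply hc' _ (sub_erase_of ha' hw.2) ((Finset.erase_subset _ _).trans hg)
      rw [Finset.card_erase_of_mem hw.1]
      omega)
    (by
      intro γ ha hg hj
      have ha' : α ⊆ γ := (Finset.subset_insert _ _).trans ha
      have hvg : v ∈ γ := ha (Finset.mem_insert_self _ _)
      have key := DD_insert s hva hvg (DD s α c')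
      rw [DD_DD hs, hdc' _ (by simp), hdc _ (sub_erase_of ha' hva)
        (sub_of_insert ((Finset.erase_subset _ _).trans hg) (by simp))
        (by rw [Finset.card_erase_of_mem hvg]; omega), smul_zero, zero_add] at key
      exact key.symm)
  let b' : Finset (Fin n) → W := fun γ => if v ∈ γ then b γ else 0
  have hb' : ∀ γ, v ∉ γ → b' γ = 0 := by intro γ h; simp [b', h]
  obtain ⟨e, he, hde⟩ := h1 (fun γ => c' γ - b' γ)
    (by
      intro γ ha hg hj
      apply sub_mem (hc' γ ha hg hj)
      simp only [b']
      split_ifs with h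
      · exact hb γ (Finset.insert_subset h ha) hg (by omega)
      · exact zero_mem _)
    (by
      intro γ ha hg hj
      rw [DD_sub]
      by_cases h : v ∈ γ
      · rw [sub_eq_zero, ← hdb γ (Finset.insert_subset h ha) hg hj, DD_insert s hva h b',
          hb' _ (by simp), smul_zero, zero_add]
        apply DD_congr
        intro w hw hw'
        have : v ∈ γ.erase w := by
          rw [Finset.mem_erase]
          refine ⟨?_, h⟩
          rintro rfl
          simp at hw'
        simp only [b', if_pos this]
      · rw [hdc' γ h, hdc γ ha (sub_of_insert hg h) hj, zero_sub, neg_eq_zero]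
        apply Finset.sum_eq_zero
        intro w hw
        rw [hb' _ (fun h' => h (Finset.mem_of_mem_erase h')), smul_zero])
  refine ⟨e, fun γ ha hg hj => he γ ha (hg.trans (Finset.subset_insert _ _)) hj, ?_⟩
  intro γ ha hg hj
  have hvg : v ∉ γ := fun h => hv (hg h)
  rw [hde γ ha (hg.trans (Finset.subset_insert _ _)) hj, hb' _ hvg, sub_zero]
  simp [c', hvg]

/-- the two families of vanishing conditions agree -/
lemma van_iff {s : Fin n → Finset (Fin n) → K} (hs : IsSign s)
    (N : Finset (Fin n) → Submodule K W)
    (hN : ∀ σ τ, σ ⊆ τ → N σ ≤ N τ) (r : ℕ) :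
    (∀ σ j, r < j → Van s N ∅ σ j) ↔ (∀ α j, α.card + r < j → Van s N α Finset.univ j) := by
  constructor
  · intro h
    have : ∀ α β : Finset (Fin n), α ⊆ β → ∀ j, α.card + r < j → Van s N α β j := by
      intro α
      induction α using Finset.induction_on with
      | empty => intro β _ j hj; exact h β j (by simpa using hj)
      | insert v α hv ih =>
        intro β hab j hj
        rw [Finset.card_insert_of_notMem hv] at hj
        obtain ⟨i, rfl⟩ : ∃ i, j = i + 1 := ⟨j - 1, by omega⟩
        have hvb : v ∈ β := hab (Finset.mem_insert_self _ _)
        have hab' : α ⊆ β.erase v := sub_erase_of ((Finset.subset_insert _ _).trans hab) hv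
        have e : insert v (β.erase v) = β := Finset.insert_erase hvb
        have := van_A hs N hN hab' (Finset.notMem_erase v β) (j := i)
          (ih _ hab' _ (by omega)) (ih _ (by rw [e]; exact (Finset.subset_insert _ _).trans hab) _ (by omega))
        rwa [e] at this
    intro α j hj
    exact this α _ (Finset.subset_univ _) j hj
  · intro h
    have : ∀ (δ α : Finset (Fin n)), α ⊆ δᶜ → ∀ j, α.card + r < j → Van s N α δᶜ j := by
      intro δ
      induction δ using Finset.induction_on with
      | empty => intro α _ j hj; simpa using h α j hj
      | insert v δ hv ih =>
        intro α hab j hj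
        have hvc : v ∉ (insert v δ)ᶜ := by simp
        have e : insert v (insert v δ)ᶜ = δᶜ := by
          ext x; by_cases hx : x = v <;> simp [hx, hv]
        have hva : v ∉ α := fun h => hvc (hab h)
        apply van_B hs N hN hab hvc
        · rw [e]; exact ih α (by rw [← e]; exact hab.trans (Finset.subset_insert _ _)) j hj
        · rw [e]
          apply ih
          · rw [← e]; exact Finset.insert_subset_insert v hab
          · rw [Finset.card_insert_of_notMem hva]; omega
    intro σ j hj
    have := this σᶜ ∅ (by simp) j (by simpa using hj)
    simpa using this

/-- cones are acyclic -/
lemma van_cone {s : Fin n → Finset (Fin n) → K} (hs : IsSign s)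
    (N : Finset (Fin n) → Submodule K W) {α β : Finset (Fin n)} {v} (hva : v ∉ α) (hvb : v ∈ β)
    (hN : ∀ γ, N (insert v γ) ≤ N γ) (j : ℕ) : Van s N α β j := by
  intro c hc hdc
  refine ⟨fun γ => if v ∈ γ then 0 else s v (insert v γ) • c (insert v γ), ?_, ?_⟩
  · intro γ ha hg hj
    dsimp only
    split_ifs with h
    · exact zero_mem _
    · apply Submodule.smul_mem
      apply hN
      apply hc _ (ha.trans (Finset.subset_insert _ _)) (Finset.insert_subset hvb hg)
      rw [Finset.card_insert_of_notMem h]; exact hj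
  · intro γ ha hg hj
    by_cases h : v ∈ γ
    · rw [DD_insert s hva h]
      simp only [Finset.notMem_erase, if_false, Finset.insert_erase h, smul_smul, hs.sq, one_smul]
      rw [add_eq_left]
      apply Finset.sum_eq_zero
      intro w hw
      rw [Finset.mem_sdiff, Finset.mem_insert] at hw
      beta_reduce
      rw [if_pos, smul_zero]
      rw [Finset.mem_erase]
      exact ⟨fun e => hw.2 (Or.inl e.symm), h⟩
    · have key := hdc (insert v γ) (ha.trans (Finset.subset_insert _ _))
        (Finset.insert_subset hvb hg) (by rw [Finset.card_insert_of_notMem h, hj])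
      rw [DD_insert s hva (Finset.mem_insert_self _ _), Finset.erase_insert h] at key
      have h2 := congrArg (fun x => s v (insert v γ) • x) key
      simp only [smul_add, smul_smul, hs.sq, one_smul, smul_zero] at h2
      rw [eq_neg_of_add_eq_zero_left h2, DD, DD, Finset.smul_sum, ← Finset.sum_neg_distrib]
      have e : insert v γ \ insert v α = γ \ α := by
        ext x; simp only [Finset.mem_sdiff, Finset.mem_insert]
        by_cases hx : x = v
        · subst hx; simp [h]
        · simp [hx]
      rw [e]
      apply Finset.sum_congr rfl
      intro w hw
      rw [Finset.mem_sdiff] at hw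
      have hwv : w ≠ v := fun e => h (e ▸ hw.1)
      have hvw : v ∉ γ.erase w := fun h' => h (Finset.mem_of_mem_erase h')
      rw [if_neg hvw]
      have e2 : (insert v γ).erase w = insert v (γ.erase w) := by
        rw [Finset.erase_insert_of_ne hwv.symm]
      rw [e2, smul_smul, smul_smul, ← neg_smul]
      congr 1
      have a := hs.anti v w (insert v γ) (Finset.mem_insert_self _ _)
        (Finset.mem_insert_of_mem hw.1) hwv.symm
      rw [Finset.erase_insert h, e2] at a
      have q1 := hs.sq v (insert v γ)
      have q2 := hs.sq v (insert v (γ.erase w))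
      linear_combination (s v (insert v γ) * s v (insert v (γ.erase w))) * a
        - (s w γ * s v (insert v (γ.erase w))) * q1 - (s w (insert v γ) * s v (insert v γ)) * q2

lemma van_bot (s : Fin n → Finset (Fin n) → K)
    (N : Finset (Fin n) → Submodule K W) {α β : Finset (Fin n)} {j : ℕ}
    (hN : ∀ γ, α ⊆ γ → γ ⊆ β → γ.card = j → N γ = ⊥) : Van s N α β j := by
  intro c hc hdc
  refine ⟨fun _ => 0, fun _ _ _ _ => zero_mem _, ?_⟩
  intro γ ha hg hj
  have := hc γ ha hg hj
  rw [hN γ ha hg hj, Submodule.mem_bot] at this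
  simp [this, DD]

lemma van_pi {m : ℕ} (s : Fin n → Finset (Fin n) → K)
    (N : Finset (Fin n) → Submodule K (Fin m → K)) (Nk : Fin m → Finset (Fin n) → Submodule K K)
    {α β : Finset (Fin n)} {j : ℕ} (hN : ∀ γ f, f ∈ N γ ↔ ∀ k, f k ∈ Nk k γ)
    (h : ∀ k, Van s (Nk k) α β j) : Van s N α β j := by
  intro c hc hdc
  have : ∀ k, ∃ b : Finset (Fin n) → K, (∀ γ, α ⊆ γ → γ ⊆ β → γ.card + 1 = j → b γ ∈ Nk k γ) ∧
      ∀ γ, α ⊆ γ → γ ⊆ β → γ.card = j → DD s α b γ = c γ k := by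
    intro k
    apply h k (fun γ => c γ k)
    · intro γ ha hg hj
      exact (hN _ _).1 (hc γ ha hg hj) k
    · intro γ ha hg hj
      have := hdc γ ha hg hj
      have e := DD_map (LinearMap.proj k : (Fin m → K) →ₗ[K] K) s α c γ
      rw [this, map_zero] at e
      exact e
  choose b hb hdb using this
  refine ⟨fun γ k => b k γ, ?_, ?_⟩
  · intro γ ha hg hj
    exact (hN _ _).2 (fun k => hb k γ ha hg hj)
  · intro γ ha hg hj
    ext k
    rw [← hdb k γ ha hg hj]
    exact (DD_map (LinearMap.proj k : (Fin m → K) →ₗ[K] K) s α (fun γ k => b k γ) γ).symm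

/-- the radical (image of the lower terms) -/
def radN (N : Finset (Fin n) → Submodule K W) (σ : Finset (Fin n)) : Submodule K W :=
  ⨆ v ∈ σ, N (σ.erase v)

lemma mem_radN_of {N : Finset (Fin n) → Submodule K W}
    (hN : ∀ σ τ, σ ⊆ τ → N σ ≤ N τ) {σ τ : Finset (Fin n)} (h : τ ⊂ σ) : N τ ≤ radN N σ := by
  obtain ⟨v, hv, hv'⟩ := Finset.exists_of_ssubset h
  exact (hN _ _ (sub_erase_of h.1 hv')).trans (le_iSup₂_of_le v hv le_rfl)

lemma van_top_of {s : Fin n → Finset (Fin n) → K} (hs : IsSign s)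
    (N : Finset (Fin n) → Submodule K W) {σ : Finset (Fin n)}
    (h : N σ ≤ radN N σ) : Van s N ∅ σ σ.card := by
  intro c hc hdc
  have key : ∀ x ∈ radN N σ, ∃ b : Finset (Fin n) → W,
      (∀ γ, γ.card + 1 = σ.card → b γ ∈ N γ) ∧ DD s ∅ b σ = x := by
    intro x hx
    let T : Submodule K W :=
      { carrier := {x | ∃ b : Finset (Fin n) → W,
          (∀ γ, γ.card + 1 = σ.card → b γ ∈ N γ) ∧ DD s ∅ b σ = x}
        zero_mem' := ⟨fun _ => 0, fun _ _ => zero_mem _, by simp [DD]⟩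
        add_mem' := by
          rintro _ _ ⟨b, hb, rfl⟩ ⟨b', hb', rfl⟩
          exact ⟨fun γ => b γ + b' γ, fun γ h => add_mem (hb γ h) (hb' γ h), DD_add _ _ _ _ _⟩
        smul_mem' := by
          rintro a _ ⟨b, hb, rfl⟩
          exact ⟨fun γ => a • b γ, fun γ h => Submodule.smul_mem _ _ (hb γ h),
            DD_map (a • LinearMap.id : W →ₗ[K] W) _ _ _ _⟩ }
    suffices radN N σ ≤ T from this hx
    apply iSup₂_le
    intro v hv y hy
    refine ⟨fun γ => if γ = σ.erase v then s v σ • y else 0, ?_, ?_⟩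
    · intro γ hγ
      dsimp only
      split_ifs with e
      · subst e; exact Submodule.smul_mem _ _ hy
      · exact zero_mem _
    · unfold DD
      rw [Finset.sum_eq_single v]
      · simp [smul_smul, hs.sq]
      · intro w hw hne
        beta_reduce
        rw [if_neg, smul_zero]
        intro e
        have : w ∈ σ.erase v := by
          rw [Finset.mem_erase]; exact ⟨hne, by simpa using hw⟩
        rw [← e] at this
        simp at this
      · intro h; simp [hv] at h
  obtain ⟨b, hb, hdb⟩ := key (c σ) (h (hc σ (by simp) le_rfl rfl))
  refine ⟨b, fun γ _ _ hj => hb γ hj, ?_⟩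
  intro γ _ hg hj
  rw [Finset.eq_of_subset_of_card_le hg hj.ge]
  exact hdb

lemma le_rad_of_van {s : Fin n → Finset (Fin n) → K}
    (N : Finset (Fin n) → Submodule K W) {σ : Finset (Fin n)}
    (h : Van s N ∅ σ σ.card) : N σ ≤ radN N σ := by
  intro x hx
  obtain ⟨b, hb, hdb⟩ := h (fun _ => x)
    (by
      intro γ _ hg hj
      rw [Finset.eq_of_subset_of_card_le hg hj.ge]; exact hx)
    (by
      intro γ _ hg hj
      have := Finset.card_le_card hg
      omega)
  rw [← hdb σ (by simp) le_rfl rfl]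
  apply sum_mem
  intro v hv
  have hv : v ∈ σ := by simpa using hv
  apply Submodule.smul_mem
  apply (le_iSup₂_of_le v hv le_rfl : N (σ.erase v) ≤ radN N σ)
  apply hb _ (by simp) (Finset.erase_subset _ _)
  rw [Finset.card_erase_of_mem hv]
  have := Finset.card_pos.2 ⟨v, hv⟩
  omega

end VanSec

section StSec

variable {K : Type} [Field K] {n : ℕ}

/-- elements of `K^m` supported on generators below `τ` -/
def suppSub (K : Type) [Field K] {n m : ℕ} (sg : Fin m → Finset (Fin n)) (τ : Finset (Fin n)) :
    Submodule K (Fin m → K) where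
  carrier := {g | ∀ k, g k ≠ 0 → sg k ⊆ τ}
  zero_mem' := by intro k h; simp at h
  add_mem' := by
    intro a b ha hb k h
    by_cases h1 : a k = 0
    · apply hb; intro h2; apply h; simp [h1, h2]
    · exact ha k h1
  smul_mem' := by
    intro c a ha k h
    apply ha; intro h2; apply h; simp [h2]

lemma mem_suppSub {m : ℕ} {sg : Fin m → Finset (Fin n)} {τ} {g : Fin m → K} :
    g ∈ suppSub K sg τ ↔ ∀ k, g k ≠ 0 → sg k ⊆ τ := Iff.rfl

/-- a syzygy family: filtered vector space inside a free squarefree module -/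
structure St (K : Type) [Field K] (n : ℕ) : Type where
  m : ℕ
  sg : Fin m → Finset (Fin n)
  N : Finset (Fin n) → Submodule K (Fin m → K)
  mono : ∀ σ τ, σ ⊆ τ → N σ ≤ N τ
  mini : ∀ σ f, f ∈ N σ → ∀ j, f j ≠ 0 → sg j ⊂ σ

/-- the linear map given by a family of vectors -/
def lc {m m' : ℕ} (w : Fin m' → Fin m → K) : (Fin m' → K) →ₗ[K] (Fin m → K) :=
  Fintype.linearCombination K w

lemma lc_apply {m m' : ℕ} (w : Fin m' → Fin m → K) (g : Fin m' → K) :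
    lc w g = ∑ k, g k • w k := rfl

/-- `S'` is the minimal first syzygy of `S` -/
structure IsStep (S S' : St K n) (w : Fin S'.m → Fin S.m → K) : Prop where
  wmem : ∀ k, w k ∈ S.N (S'.sg k)
  gen : ∀ τ, ∀ f ∈ S.N τ, ∃ g ∈ suppSub K S'.sg τ, lc w g = f
  ker : ∀ τ g, g ∈ S'.N τ ↔ g ∈ suppSub K S'.sg τ ∧ lc w g = 0
  nogen : ∀ σ, S.N σ ≤ radN S.N σ → ∀ k, S'.sg k ≠ σ

lemma lc_mem {S S' : St K n} {w} (h : IsStep S S' w) {τ g} (hg : g ∈ suppSub K S'.sg τ) :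
    lc w g ∈ S.N τ := by
  rw [lc_apply]
  apply sum_mem
  intro k _
  by_cases h0 : g k = 0
  · simp [h0]
  · exact Submodule.smul_mem _ _ (S.mono _ _ (hg k h0) (h.wmem k))

lemma exists_step (S : St K n) : ∃ (S' : St K n) (w : Fin S'.m → Fin S.m → K), IsStep S S' w := by
  classical
  have hC : ∀ σ, ∃ C : Submodule K (Fin S.m → K), C ⊓ radN S.N σ = ⊥ ∧ C ⊔ radN S.N σ = S.N σ := by
    intro σ
    have hle : radN S.N σ ≤ S.N σ := iSup₂_le fun v _ => S.mono _ _ (Finset.erase_subset _ _)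
    obtain ⟨C0, h0⟩ := Submodule.exists_isCompl (radN S.N σ)
    refine ⟨C0 ⊓ S.N σ, ?_, ?_⟩
    · apply le_bot_iff.1
      refine le_trans ?_ h0.inf_eq_bot.le
      exact le_inf inf_le_right (inf_le_left.trans inf_le_left)
    · rw [sup_comm, ← sup_inf_assoc_of_le _ hle, h0.sup_eq_top, top_inf_eq]
  choose C hC1 hC2 using hC
  have hCN : ∀ σ, C σ ≤ S.N σ := fun σ => (hC2 σ) ▸ le_sup_left
  let ι := Σ σ : Finset (Fin n), Fin (Module.finrank K (C σ))
  let bs : ∀ σ, Module.Basis (Fin (Module.finrank K (C σ))) K (C σ) :=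
    fun σ => Module.finBasis K (C σ)
  let e : Fin (Fintype.card ι) ≃ ι := (Fintype.equivFin ι).symm
  let sg : Fin (Fintype.card ι) → Finset (Fin n) := fun k => (e k).1
  let w : Fin (Fintype.card ι) → Fin S.m → K := fun k => (bs (e k).1 (e k).2 : Fin S.m → K)
  have hw : ∀ k, w k ∈ C (sg k) := fun k => (bs (e k).1 (e k).2).2
  have hwN : ∀ k, w k ∈ S.N (sg k) := fun k => hCN _ (hw k)
  have mini : ∀ τ g, g ∈ suppSub K sg τ → lc w g = 0 → ∀ j, g j ≠ 0 → sg j ⊂ τ := by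
    intro τ g hg h0 j hj
    rw [Finset.ssubset_iff_subset_ne]
    refine ⟨hg j hj, fun hjt => hj ?_⟩
    have hsplit := Finset.sum_filter_add_sum_filter_not Finset.univ (fun k => sg k = τ)
      (fun k => g k • w k)
    rw [← lc_apply, h0] at hsplit
    have m1 : ∑ k with sg k = τ, g k • w k ∈ C τ := by
      apply sum_mem
      intro k hk
      rw [Finset.mem_filter] at hk
      exact Submodule.smul_mem _ _ (hk.2 ▸ hw k)
    have m2 : ∑ k with ¬ sg k = τ, g k • w k ∈ radN S.N τ := by
      apply sum_mem
      intro k hk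
      rw [Finset.mem_filter] at hk
      by_cases h0 : g k = 0
      · simp [h0]
      · exact Submodule.smul_mem _ _
          (mem_radN_of S.mono (Finset.ssubset_iff_subset_ne.2 ⟨hg k h0, hk.2⟩) (hwN k))
    have m3 : ∑ k with sg k = τ, g k • w k = 0 := by
      rw [← Submodule.mem_bot K, ← hC1 τ]
      refine ⟨m1, ?_⟩
      rw [eq_neg_of_add_eq_zero_left hsplit]
      exact neg_mem m2
    -- convert to the basis
    have m4 : ∑ i, g (e.symm ⟨τ, i⟩) • bs τ i = 0 := by
      apply Subtype.ext
      rw [Submodule.coe_zero, ← m3]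
      simp only [Submodule.coe_sum, Submodule.coe_smul]
      symm
      refine Finset.sum_bij' (fun k hk => Fin.cast (by
          have : sg k = τ := (Finset.mem_filter.1 hk).2
          rw [← this]) (e k).2) (fun i _ => e.symm ⟨τ, i⟩)
        ?_ ?_ ?_ ?_ ?_
      · intros; exact Finset.mem_univ _
      · intro i _; simp [sg]
      · intro k hk
        have : sg k = τ := (Finset.mem_filter.1 hk).2
        apply e.injective
        simp only [Equiv.apply_symm_apply]
        subst this
        rfl
      · intro i _
        ext
        rw [Fin.val_cast, Equiv.apply_symm_apply]
      · intro k hk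
        have : sg k = τ := (Finset.mem_filter.1 hk).2
        subst this
        have : e.symm ⟨sg k, (e k).2⟩ = k := by
          apply e.injective; simp [sg]
        simp only [Fin.cast_eq_self]
        rw [this]
    have li := Fintype.linearIndependent_iff.1 (bs τ).linearIndependent _ m4
    subst hjt
    have := li (e j).2
    rwa [show e.symm ⟨sg j, (e j).2⟩ = j from by apply e.injective; simp [sg]] at this
  refine ⟨⟨Fintype.card ι, sg, fun τ => suppSub K sg τ ⊓ LinearMap.ker (lc w), ?_, ?_⟩, w, ?_⟩
  · intro σ τ hst
    exact inf_le_inf_right _ (fun g hg k hk => (hg k hk).trans hst)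
  · intro σ f hf
    exact mini σ f hf.1 hf.2
  refine ⟨hwN, ?_, ?_, ?_⟩
  · suffices ∀ τ, S.N τ ≤ (suppSub K sg τ).map (lc w) by
      intro τ f hf
      obtain ⟨g, h1, h2⟩ := this τ hf
      exact ⟨g, h1, h2⟩
    intro τ
    induction τ using Finset.strongInduction with
    | H τ ih =>
      rw [← hC2 τ]
      apply sup_le
      · intro c hc
        have hrep := (bs τ).sum_repr ⟨c, hc⟩
        have hrep' := congrArg Subtype.val hrep
        simp only [Submodule.coe_sum, Submodule.coe_smul] at hrep'
        rw [← hrep']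
        apply sum_mem
        intro i _
        apply Submodule.smul_mem
        refine ⟨Pi.single (e.symm ⟨τ, i⟩) 1, ?_, ?_⟩
        · intro k hk
          have : k = e.symm ⟨τ, i⟩ := by
            by_contra hne; exact hk (by simp [hne])
          subst this
          simp [sg]
        · rw [lc, Fintype.linearCombination_apply_single, one_smul]
          simp only [w]
          rw [Equiv.apply_symm_apply]
      · apply iSup₂_le
        intro v hv
        refine (ih _ (Finset.erase_ssubset hv)).trans (Submodule.map_mono ?_)
        exact fun g hg k hk => (hg k hk).trans (Finset.erase_subset _ _)
  · intro τ g
    rfl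
  · intro σ hσ k hk
    have hb : C σ = ⊥ := by
      rw [← le_bot_iff, ← hC1 σ]
      exact le_inf le_rfl ((hCN σ).trans hσ)
    have : Module.finrank K (C σ) = 0 := by rw [hb]; simp
    subst hk
    have i := (e k).2
    have h2 : Module.finrank K (C (e k).1) = 0 := this
    rw [h2] at i
    exact i.elim0

lemma van_suppSub {s : Fin n → Finset (Fin n) → K} (hs : IsSign s) {m : ℕ}
    (sg : Fin m → Finset (Fin n)) (σ : Finset (Fin n)) (j : ℕ) (hj : j < σ.card) :
    Van s (suppSub K sg) ∅ σ j := by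
  classical
  let Nk : Fin m → Finset (Fin n) → Submodule K K := fun k γ => if sg k ⊆ γ then ⊤ else ⊥
  apply van_pi s (suppSub K sg) Nk
  · intro γ f
    rw [mem_suppSub]
    apply forall_congr'
    intro k
    simp only [Nk]
    split_ifs with h
    · exact ⟨fun _ => Submodule.mem_top, fun _ _ => h⟩
    · rw [Submodule.mem_bot]
      exact ⟨fun h1 => by_contra fun h2 => h (h1 h2), fun h1 h2 => (h2 h1).elim⟩
  · intro k
    by_cases h : sg k ⊂ σ
    · obtain ⟨v, hv, hv'⟩ := Finset.exists_of_ssubset h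
      apply van_cone hs (Nk k) (v := v) (by simp) hv
      intro γ
      simp only [Nk]
      by_cases h1 : sg k ⊆ γ
      · rw [if_pos h1]; exact le_top
      · rw [if_neg, if_neg h1]
        intro h2
        exact h1 (sub_of_insert h2 hv')
    · apply van_bot
      intro γ _ hg hc
      simp only [Nk]
      rw [if_neg]
      intro h2
      apply h
      rw [Finset.ssubset_iff_subset_ne]
      refine ⟨h2.trans hg, ?_⟩
      rintro h3
      have := Finset.card_le_card h2
      rw [h3] at this
      omega

lemma no_gen_of_van {s : Fin n → Finset (Fin n) → K} {S S' : St K n} {w} (h : IsStep S S' w)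
    {σ} (hv : Van s S.N ∅ σ σ.card) : ∀ k, S'.sg k ≠ σ :=
  h.nogen σ (le_rad_of_van _ hv)

lemma van_of_no_gen {s : Fin n → Finset (Fin n) → K} (hs : IsSign s) {S S' : St K n} {w}
    (h : IsStep S S' w) {σ} (hk : ∀ k, S'.sg k ≠ σ) : Van s S.N ∅ σ σ.card := by
  apply van_top_of hs
  intro f hf
  obtain ⟨g, hg, rfl⟩ := h.gen σ f hf
  rw [lc_apply]
  apply sum_mem
  intro k _
  by_cases h0 : g k = 0
  · simp [h0]
  · exact Submodule.smul_mem _ _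
      (mem_radN_of S.mono (Finset.ssubset_iff_subset_ne.2 ⟨hg k h0, hk k⟩) (h.wmem k))

lemma DD_mem {s : Fin n → Finset (Fin n) → K} {W : Type} [AddCommGroup W] [Module K W]
    {N : Finset (Fin n) → Submodule K W}
    (hN : ∀ σ τ, σ ⊆ τ → N σ ≤ N τ) {σ γ : Finset (Fin n)} {c : Finset (Fin n) → W} {j : ℕ}
    (hc : ∀ γ, ∅ ⊆ γ → γ ⊆ σ → γ.card = j → c γ ∈ N γ) (hg : γ ⊆ σ) (hj : γ.card = j + 1) :
    DD s ∅ c γ ∈ N γ := by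
  apply sum_mem
  intro v hv
  have hv : v ∈ γ := by simpa using hv
  apply Submodule.smul_mem
  apply hN _ _ (Finset.erase_subset v γ)
  apply hc _ (by simp) ((Finset.erase_subset _ _).trans hg)
  rw [Finset.card_erase_of_mem hv, hj]; rfl

lemma suppSub_mono {m : ℕ} (sg : Fin m → Finset (Fin n)) (σ τ) (h : σ ⊆ τ) :
    suppSub K sg σ ≤ suppSub K sg τ := fun _ hg k hk => (hg k hk).trans h

lemma van_step_up {s : Fin n → Finset (Fin n) → K} (hs : IsSign s) {S S' : St K n} {w}
    (h : IsStep S S' w) {σ j} (hj : j < σ.card) (hv : Van s S.N ∅ σ j) :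
    Van s S'.N ∅ σ (j + 1) := by
  classical
  intro c hc hdc
  have hc' : ∀ γ, ∅ ⊆ γ → γ ⊆ σ → γ.card = j + 1 → c γ ∈ suppSub K S'.sg γ :=
    fun γ h1 h2 h3 => ((h.ker _ _).1 (hc γ h1 h2 h3)).1
  have hP : ∃ b : Finset (Fin n) → (Fin S'.m → K),
      (∀ γ, ∅ ⊆ γ → γ ⊆ σ → γ.card + 1 = j + 1 → b γ ∈ suppSub K S'.sg γ) ∧
      ∀ γ, ∅ ⊆ γ → γ ⊆ σ → γ.card = j + 1 → DD s ∅ b γ = c γ := by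
    by_cases hlt : j + 1 < σ.card
    · exact van_suppSub hs S'.sg σ (j + 1) hlt c hc' hdc
    · have hcard : σ.card = j + 1 := by omega
      have h1 : c σ ∈ radN (suppSub K S'.sg) σ := by
        have hcs := hc σ (by simp) le_rfl hcard
        rw [← Finset.univ_sum_single (c σ)]
        apply sum_mem
        intro k _
        by_cases h0 : c σ k = 0
        · rw [h0, Pi.single_zero]; exact zero_mem _
        · apply mem_radN_of (suppSub_mono S'.sg) (S'.mini σ _ hcs k h0)
          intro k' hk'
          have : k' = k := by
            by_contra hne; exact hk' (by simp [hne])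
          rw [this]
      have h2 := van_top_of hs (fun γ =>
        if γ = σ then radN (suppSub K S'.sg) σ else suppSub K S'.sg γ) (σ := σ) (by
          rw [if_pos rfl]
          apply iSup₂_mono
          intro v hv
          beta_reduce
          rw [if_neg]
          intro e
          have := Finset.notMem_erase v σ
          rw [e] at this; exact this hv)
      rw [hcard] at h2
      obtain ⟨b, hb, hdb⟩ := h2 c (by
        intro γ _ hg hcd
        have : γ = σ := Finset.eq_of_subset_of_card_le hg (by omega)
        subst this
        beta_reduce
        rw [if_pos rfl]
        exact h1) (by
        intro γ _ hg hcd
        have := Finset.card_le_card hg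
        omega)
      refine ⟨b, ?_, hdb⟩
      intro γ h1 hg h3
      have := hb γ h1 hg h3
      beta_reduce at this
      rw [if_neg (by rintro rfl; omega)] at this
      exact this
  obtain ⟨b, hb, hdb⟩ := hP
  obtain ⟨e, he, hde⟩ := hv (fun γ => lc w (b γ))
    (fun γ h1 h2 h3 => lc_mem h (hb γ h1 h2 (by omega)))
    (by
      intro γ h1 h2 h3
      rw [DD_map, hdb γ h1 h2 h3]
      exact ((h.ker _ _).1 (hc γ h1 h2 h3)).2)
  have : ∀ γ, ∃ g : Fin S'.m → K, (γ ⊆ σ → γ.card + 1 = j → g ∈ suppSub K S'.sg γ ∧ lc w g = e γ) := by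
    intro γ
    by_cases hh : γ ⊆ σ ∧ γ.card + 1 = j
    · obtain ⟨g, hg⟩ := h.gen γ (e γ) (he γ (by simp) hh.1 hh.2)
      exact ⟨g, fun _ _ => hg⟩
    · exact ⟨0, fun h1 h2 => (hh ⟨h1, h2⟩).elim⟩
  choose e' he' using this
  refine ⟨fun γ => b γ - DD s ∅ e' γ, ?_, ?_⟩
  · intro γ h1 h2 h3
    rw [h.ker]
    constructor
    · apply sub_mem (hb γ h1 h2 h3)
      apply sum_mem
      intro v hv
      have hv : v ∈ γ := by simpa using hv
      apply Submodule.smul_mem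
      apply suppSub_mono _ _ _ (Finset.erase_subset v γ)
      refine (he' _ ((Finset.erase_subset _ _).trans h2) ?_).1
      rw [Finset.card_erase_of_mem hv]
      have := Finset.card_pos.2 ⟨v, hv⟩
      omega
    · rw [map_sub, sub_eq_zero, ← hde γ h1 h2 (by omega), ← DD_map]
      apply DD_congr
      intro v hv _
      refine ((he' _ ((Finset.erase_subset _ _).trans h2) ?_).2).symm
      rw [Finset.card_erase_of_mem hv]
      have := Finset.card_pos.2 ⟨v, hv⟩
      omega
  · intro γ h1 h2 h3
    rw [DD_sub, DD_DD hs, sub_zero, hdb γ h1 h2 h3]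

lemma van_step_down {s : Fin n → Finset (Fin n) → K} (hs : IsSign s) {S S' : St K n} {w}
    (h : IsStep S S' w) {σ j} (hj : j < σ.card) (hv : Van s S'.N ∅ σ (j + 1)) :
    Van s S.N ∅ σ j := by
  classical
  intro c hc hdc
  have : ∀ γ, ∃ g : Fin S'.m → K, (γ ⊆ σ → γ.card = j → g ∈ suppSub K S'.sg γ ∧ lc w g = c γ) := by
    intro γ
    by_cases hh : γ ⊆ σ ∧ γ.card = j
    · obtain ⟨g, hg⟩ := h.gen γ (c γ) (hc γ (by simp) hh.1 hh.2)
      exact ⟨g, fun _ _ => hg⟩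
    · exact ⟨0, fun h1 h2 => (hh ⟨h1, h2⟩).elim⟩
  choose c' hc' using this
  obtain ⟨b, hb, hdb⟩ := hv (DD s ∅ c')
    (by
      intro γ h1 h2 h3
      rw [h.ker]
      refine ⟨DD_mem (suppSub_mono _) (fun γ _ h2 h3 => (hc' γ h2 h3).1) h2 h3, ?_⟩
      rw [← DD_map, ← hdc γ h1 h2 h3]
      apply DD_congr
      intro v hv _
      refine (hc' _ ((Finset.erase_subset _ _).trans h2) ?_).2
      rw [Finset.card_erase_of_mem hv, h3]; rfl)
    (fun γ _ _ _ => DD_DD hs _ _ _)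
  obtain ⟨e, he, hde⟩ := van_suppSub hs S'.sg σ j hj (fun γ => c' γ - b γ)
    (fun γ h1 h2 h3 => sub_mem (hc' γ h2 h3).1 ((h.ker _ _).1 (hb γ h1 h2 (by omega))).1)
    (by
      intro γ h1 h2 h3
      rw [DD_sub, hdb γ h1 h2 h3, sub_self])
  refine ⟨fun γ => lc w (e γ), fun γ h1 h2 h3 => lc_mem h (he γ h1 h2 h3), ?_⟩
  intro γ h1 h2 h3
  rw [DD_map, hde γ h1 h2 h3, map_sub, (hc' γ h2 h3).2,
    ((h.ker _ _).1 (hb γ h1 h2 (by omega))).2, sub_zero]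

/-- an infinite sequence of minimal syzygies -/
structure StSeq (K : Type) [Field K] (n : ℕ) (S0 : St K n) : Type where
  S : ℕ → St K n
  S_zero : S 0 = S0
  w : ∀ i, Fin (S (i + 1)).m → Fin (S i).m → K
  step : ∀ i, IsStep (S i) (S (i + 1)) (w i)

lemma exists_seq (S0 : St K n) : Nonempty (StSeq K n S0) := by
  choose nxt w hw using (exists_step : ∀ S : St K n, _)
  let S : ℕ → St K n := fun i => Nat.rec S0 (fun _ T => nxt T) i
  exact ⟨⟨S, rfl, fun i => w (S i), fun i => hw (S i)⟩⟩

lemma StSeq.van {S0 : St K n} (Q : StSeq K n S0) {s : Fin n → Finset (Fin n) → K} (hs : IsSign s)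
    {σ j} (i : ℕ) (h : j + i ≤ σ.card) :
    Van s S0.N ∅ σ j ↔ Van s (Q.S i).N ∅ σ (j + i) := by
  induction i with
  | zero => rw [Q.S_zero]; rfl
  | succ i ih =>
    rw [ih (by omega)]
    have hlt : j + i < σ.card := by omega
    exact ⟨van_step_up hs (Q.step i) hlt, van_step_down hs (Q.step i) hlt⟩

lemma StSeq.bot {S0 : St K n} (Q : StSeq K n S0) (i : ℕ) : ∀ σ, σ.card < i → (Q.S i).N σ = ⊥ := by
  induction i with
  | zero => intro σ h; omega
  | succ i ih =>
    intro σ h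
    rw [eq_bot_iff]
    intro f hf
    rw [Submodule.mem_bot]
    ext j
    by_contra hj
    have h1 := (Q.S (i + 1)).mini σ f hf j hj
    have h2 := Finset.card_lt_card h1
    exact (Q.step i).nogen _ (by rw [ih _ (by omega)]; exact bot_le) j rfl

lemma StSeq.no_gen_iff {S0 : St K n} (Q : StSeq K n S0) {s : Fin n → Finset (Fin n) → K}
    (hs : IsSign s) (i : ℕ) (σ) :
    (∀ k, (Q.S (i + 1)).sg k ≠ σ) ↔ (i ≤ σ.card → Van s S0.N ∅ σ (σ.card - i)) := by
  constructor
  · intro h hi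
    rw [Q.van hs i (by omega), Nat.sub_add_cancel hi]
    exact van_of_no_gen hs (Q.step i) h
  · intro h
    by_cases hi : i ≤ σ.card
    · have := h hi
      rw [Q.van hs i (by omega), Nat.sub_add_cancel hi] at this
      exact no_gen_of_van (Q.step i) this
    · exact (Q.step i).nogen _ (by rw [Q.bot i _ (by omega)]; exact bot_le)

lemma StSeq.m_zero {S0 : St K n} (Q : StSeq K n S0) (i : ℕ) (h : n + 1 < i) : (Q.S i).m = 0 := by
  obtain ⟨i, rfl⟩ : ∃ i', i = i' + 1 := ⟨i - 1, by omega⟩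
  by_contra hne
  have k : Fin (Q.S (i + 1)).m := ⟨0, Nat.pos_of_ne_zero hne⟩
  refine (Q.step i).nogen _ ?_ k rfl
  rw [Q.bot i]
  · exact bot_le
  · have := Finset.card_le_univ ((Q.S (i + 1)).sg k)
    simp at this
    omega

end StSec

open MvPolynomial

section RSec

variable {K : Type} [Field K] {n : ℕ}

/-- exponent vector of a squarefree monomial -/
noncomputable def ind (τ : Finset (Fin n)) : Fin n →₀ ℕ := ∑ i ∈ τ, Finsupp.single i 1

lemma ind_apply (τ : Finset (Fin n)) (i) : ind τ i = if i ∈ τ then 1 else 0 := by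
  simp [ind, Finsupp.finsetSum_apply, Finsupp.single_apply]

lemma ind_le_iff (τ : Finset (Fin n)) (a : Fin n →₀ ℕ) : ind τ ≤ a ↔ τ ⊆ a.support := by
  rw [Finsupp.le_def]
  constructor
  · intro h i hi
    have := h i
    rw [ind_apply, if_pos hi] at this
    rw [Finsupp.mem_support_iff]; omega
  · intro h i
    rw [ind_apply]
    split_ifs with hi
    · have := h hi
      rw [Finsupp.mem_support_iff] at this; omega
    · omega

lemma ind_mono {σ τ : Finset (Fin n)} (h : σ ⊆ τ) : ind σ ≤ ind τ := by
  rw [Finsupp.le_def]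
  intro i
  rw [ind_apply, ind_apply]
  split_ifs with h1 h2
  · exact le_rfl
  · exact absurd (h h1) h2
  · omega
  · omega

lemma ind_degree (τ : Finset (Fin n)) : (ind τ).degree = τ.card := by
  simp [ind]

lemma edgeMonomial_eq (e : Finset (Fin n)) : edgeMonomial K e = monomial (ind e) 1 := by
  simp [edgeMonomial, ind, monomial_sum_one, X]

/-- the differential attached to a scalar matrix -/
noncomputable def dmap {m m' : ℕ} (sg : Fin m → Finset (Fin n)) (sg' : Fin m' → Finset (Fin n))
    (w : Fin m' → Fin m → K) :
    (Fin m' → MvPolynomial (Fin n) K) →ₗ[MvPolynomial (Fin n) K] (Fin m → MvPolynomial (Fin n) K) :=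
  Fintype.linearCombination (MvPolynomial (Fin n) K)
    (fun k j => monomial (ind (sg' k) - ind (sg j)) (w k j))

lemma dmap_apply {m m' : ℕ} (sg : Fin m → Finset (Fin n)) (sg' : Fin m' → Finset (Fin n))
    (w : Fin m' → Fin m → K) (f j) :
    dmap sg sg' w f j = ∑ k, f k * monomial (ind (sg' k) - ind (sg j)) (w k j) := by
  simp [dmap, Fintype.linearCombination_apply, Finset.sum_apply]

lemma dmap_single {m m' : ℕ} (sg : Fin m → Finset (Fin n)) (sg' : Fin m' → Finset (Fin n))
    (w : Fin m' → Fin m → K) (k j) :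
    dmap sg sg' w (Pi.single k 1) j = monomial (ind (sg' k) - ind (sg j)) (w k j) := by
  rw [dmap, Fintype.linearCombination_apply_single, one_smul]

/-- embedding of the multidegree `a` component -/
noncomputable def emb {m : ℕ} (sg : Fin m → Finset (Fin n)) (a : Fin n →₀ ℕ) (u : Fin m → K) :
    Fin m → MvPolynomial (Fin n) K := fun k => monomial (a - ind (sg k)) (u k)

open Classical in
/-- projection on the multidegree `a` component -/
noncomputable def cmpt {m : ℕ} (sg : Fin m → Finset (Fin n)) (a : Fin n →₀ ℕ)
    (f : Fin m → MvPolynomial (Fin n) K) : Fin m → K :=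
  fun k => if ind (sg k) ≤ a then coeff (a - ind (sg k)) (f k) else 0

lemma cmpt_mem {m : ℕ} (sg : Fin m → Finset (Fin n)) (a : Fin n →₀ ℕ)
    (f : Fin m → MvPolynomial (Fin n) K) : cmpt sg a f ∈ suppSub K sg a.support := by
  intro k hk
  rw [cmpt] at hk
  split_ifs at hk with h
  · exact (ind_le_iff _ _).1 h
  · exact absurd rfl hk

lemma cmpt_zero {m : ℕ} (sg : Fin m → Finset (Fin n)) (a : Fin n →₀ ℕ) :
    cmpt sg a (0 : Fin m → MvPolynomial (Fin n) K) = 0 := by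
  ext k; simp [cmpt]

lemma eq_zero_of_cmpt {m : ℕ} (sg : Fin m → Finset (Fin n))
    (f : Fin m → MvPolynomial (Fin n) K) (h : ∀ a, cmpt sg a f = 0) : f = 0 := by
  funext k
  ext b
  have := congrFun (h (b + ind (sg k))) k
  simpa [cmpt] using this

lemma cmpt_dmap {m m' : ℕ} (sg : Fin m → Finset (Fin n)) (sg' : Fin m' → Finset (Fin n))
    (w : Fin m' → Fin m → K) (hw : ∀ k j, w k j ≠ 0 → sg j ⊆ sg' k) (a f) :
    cmpt sg a (dmap sg sg' w f) = lc w (cmpt sg' a f) := by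
  classical
  ext j
  rw [lc_apply, Finset.sum_apply]
  simp only [cmpt, Pi.smul_apply, smul_eq_mul]
  by_cases hj : ind (sg j) ≤ a
  · rw [if_pos hj, dmap_apply, coeff_sum]
    apply Finset.sum_congr rfl
    intro k _
    rw [coeff_mul_monomial']
    by_cases h0 : w k j = 0
    · simp [h0]
    · have hjk := ind_mono (hw k j h0)
      have e1 : (ind (sg' k) - ind (sg j) ≤ a - ind (sg j)) ↔ ind (sg' k) ≤ a := by
        constructor
        · intro h
          rw [Finsupp.le_def] at *
          intro i
          have := h i; have := hjk i; have := hj i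
          simp only [Finsupp.tsub_apply] at *
          omega
        · intro h
          exact tsub_le_tsub_right h _
      by_cases hk : ind (sg' k) ≤ a
      · rw [if_pos (e1.2 hk), if_pos hk]
        congr 2
        ext i
        have := hk i; have := hjk i; have := hj i
        simp only [Finsupp.tsub_apply]
        omega
      · rw [if_neg (fun h => hk (e1.1 h)), if_neg hk, zero_mul]
  · rw [if_neg hj]
    symm
    apply Finset.sum_eq_zero
    intro k _
    by_cases h0 : w k j = 0
    · simp [h0]
    · rw [if_neg, zero_mul]
      exact fun h => hj ((ind_mono (hw k j h0)).trans h)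

lemma dmap_emb {m m' : ℕ} (sg : Fin m → Finset (Fin n)) (sg' : Fin m' → Finset (Fin n))
    (w : Fin m' → Fin m → K) (hw : ∀ k j, w k j ≠ 0 → sg j ⊆ sg' k) (a u)
    (hu : u ∈ suppSub K sg' a.support) :
    dmap sg sg' w (emb sg' a u) = emb sg a (lc w u) := by
  funext j
  rw [dmap_apply, emb, lc_apply, Finset.sum_apply, map_sum]
  apply Finset.sum_congr rfl
  intro k _
  rw [emb, monomial_mul, Pi.smul_apply, smul_eq_mul]
  by_cases h0 : w k j = 0
  · simp [h0]
  by_cases h1 : u k = 0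
  · simp [h1]
  have hjk := ind_mono (hw k j h0)
  have hk := (ind_le_iff _ _).2 (hu k h1)
  congr 2
  ext i
  have := hk i; have := hjk i
  simp only [Finsupp.tsub_apply, Finsupp.add_apply]
  omega

lemma mem_of_emb {m : ℕ} (sg : Fin m → Finset (Fin n))
    (f : Fin m → MvPolynomial (Fin n) K)
    (M : Submodule (MvPolynomial (Fin n) K) (Fin m → MvPolynomial (Fin n) K))
    (h : ∀ a, emb sg a (cmpt sg a f) ∈ M) : f ∈ M := by
  classical
  let T : Finset (Fin n →₀ ℕ) :=
    Finset.univ.biUnion (fun k => (f k).support.image (fun b => b + ind (sg k)))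
  have : f = ∑ a ∈ T, emb sg a (cmpt sg a f) := by
    funext j
    ext b
    rw [Finset.sum_apply, coeff_sum, Finset.sum_eq_single (b + ind (sg j))]
    · simp [emb, cmpt]
    · intro a _ hne
      rw [emb, coeff_monomial]
      split_ifs with h1
      · rw [cmpt, if_neg]
        intro h2
        apply hne
        rw [← h1, tsub_add_cancel_of_le h2]
      · rfl
    · intro hT
      have : coeff b (f j) = 0 := by
        by_contra hne
        apply hT
        simp only [T, Finset.mem_biUnion, Finset.mem_image]
        exact ⟨j, Finset.mem_univ _, b, by rwa [mem_support_iff], rfl⟩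
      simp [emb, cmpt, this]
  rw [this]
  exact sum_mem (fun a _ => h a)

lemma range_dmap {S S' : St K n} {w} (h : IsStep S S' w) (f) :
    f ∈ LinearMap.range (dmap S.sg S'.sg w) ↔ ∀ a, cmpt S.sg a f ∈ S.N a.support := by
  have hw : ∀ k j, w k j ≠ 0 → S.sg j ⊆ S'.sg k := fun k j h0 => (S.mini _ _ (h.wmem k) j h0).1
  constructor
  · rintro ⟨g, rfl⟩ a
    rw [cmpt_dmap _ _ _ hw]
    exact lc_mem h (cmpt_mem _ _ _)
  · intro hf
    apply mem_of_emb S.sg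
    intro a
    obtain ⟨g, hg, e⟩ := h.gen _ _ (hf a)
    exact ⟨emb S'.sg a g, by rw [dmap_emb _ _ _ hw _ _ hg, e]⟩

lemma ker_dmap {S S' : St K n} {w} (h : IsStep S S' w) (f) :
    f ∈ LinearMap.ker (dmap S.sg S'.sg w) ↔ ∀ a, cmpt S'.sg a f ∈ S'.N a.support := by
  have hw : ∀ k j, w k j ≠ 0 → S.sg j ⊆ S'.sg k := fun k j h0 => (S.mini _ _ (h.wmem k) j h0).1
  rw [LinearMap.mem_ker]
  constructor
  · intro hf a
    rw [h.ker]
    refine ⟨cmpt_mem _ _ _, ?_⟩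
    rw [← cmpt_dmap _ _ _ hw, hf, cmpt_zero]
  · intro hf
    apply eq_zero_of_cmpt S.sg
    intro a
    rw [cmpt_dmap _ _ _ hw]
    exact ((h.ker _ _).1 (hf a)).2

open Classical in
/-- the initial family attached to an up-set -/
noncomputable def S0 (K : Type) [Field K] {n : ℕ} (U : Finset (Fin n) → Prop)
    (hU : ∀ σ τ, σ ⊆ τ → U σ → U τ) (h0 : ¬ U ∅) : St K n where
  m := 1
  sg := fun _ => ∅
  N := fun τ => if U τ then ⊤ else ⊥
  mono := by
    intro σ τ h
    by_cases h1 : U σ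
    · rw [if_pos (hU _ _ h h1)]; exact le_top
    · rw [if_neg h1]; exact bot_le
  mini := by
    intro σ f hf j hj
    by_cases h1 : U σ
    · rw [Finset.empty_ssubset, Finset.nonempty_iff_ne_empty]
      rintro rfl
      exact h0 h1
    · rw [if_neg h1, Submodule.mem_bot] at hf
      rw [hf] at hj
      exact absurd rfl hj

/-- the ideal attached to a family of sets -/
noncomputable def idl (K : Type) [Field K] {n : ℕ} (E : Set (Finset (Fin n))) :
    Ideal (MvPolynomial (Fin n) K) := Ideal.span (edgeMonomial K '' E)

lemma mem_idl (E : Set (Finset (Fin n))) (f : MvPolynomial (Fin n) K) :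
    f ∈ idl K E ↔ ∀ a, coeff a f ≠ 0 → ∃ e ∈ E, e ⊆ a.support := by
  have : edgeMonomial K '' E = (fun s => monomial s (1 : K)) '' (ind '' E) := by
    rw [Set.image_image]
    simp only [edgeMonomial_eq]
  rw [idl, this, mem_ideal_span_monomial_image]
  constructor
  · intro h a ha
    obtain ⟨_, ⟨e, he, rfl⟩, hle⟩ := h a (by rwa [mem_support_iff])
    exact ⟨e, he, (ind_le_iff _ _).1 hle⟩
  · intro h a ha
    obtain ⟨e, he, hle⟩ := h a (by rwa [mem_support_iff] at ha)
    exact ⟨_, ⟨e, he, rfl⟩, (ind_le_iff _ _).2 hle⟩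

/-- the augmentation -/
noncomputable def augm (K : Type) [Field K] (n m : ℕ) :
    (Fin m → MvPolynomial (Fin n) K) →ₗ[MvPolynomial (Fin n) K] MvPolynomial (Fin n) K :=
  Fintype.linearCombination (MvPolynomial (Fin n) K) (fun _ => 1)

lemma augm_single (m : ℕ) (k) : augm K n m (Pi.single k 1) = 1 := by
  rw [augm, Fintype.linearCombination_apply_single, one_smul]

section mk

variable (E : Set (Finset (Fin n))) (U : Finset (Fin n) → Prop)
    (hU : ∀ σ τ, σ ⊆ τ → U σ → U τ) (h0 : ¬ U ∅)

lemma comap_aug (hE : ∀ τ, U τ ↔ ∃ e ∈ E, e ⊆ τ) (S : St K n) (hS : S = S0 K U hU h0) (f : Fin S.m → MvPolynomial (Fin n) K) :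
    augm K n S.m f ∈ idl K E ↔ ∀ a, cmpt S.sg a f ∈ S.N a.support := by
  subst hS
  have : augm K n (S0 K U hU h0).m f = f (0 : Fin 1) := by
    rw [augm, Fintype.linearCombination_apply]
    exact (Fin.sum_univ_one (fun i => f i • (1 : MvPolynomial (Fin n) K))).trans (by simp)
  rw [this, mem_idl]
  apply forall_congr'
  intro a
  have e : cmpt (S0 K U hU h0).sg a f (0 : Fin 1) = coeff a (f (0 : Fin 1)) := by
    simp [cmpt, S0, ind]
  rw [← hE, ← e]
  by_cases h1 : U a.support
  · have : (S0 K U hU h0).N a.support = ⊤ := if_pos h1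
    rw [this]
    exact ⟨fun _ => Submodule.mem_top, fun _ _ => h1⟩
  · have : (S0 K U hU h0).N a.support = ⊥ := if_neg h1
    rw [this, Submodule.mem_bot]
    constructor
    · intro h
      funext k
      have : k = (0 : Fin 1) := Subsingleton.elim (α := Fin 1) _ _
      rw [this]
      by_contra h2
      exact h1 (h h2)
    · intro h h2
      rw [h] at h2
      exact absurd rfl h2

/-- the minimal resolution -/
noncomputable def mkGFR (hE : ∀ τ, U τ ↔ ∃ e ∈ E, e ⊆ τ) (Q : StSeq K n (S0 K U hU h0)) : GFR n K (idl K E) where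
  len := n + 1
  rk := fun i => (Q.S i).m
  rk_zero := fun i hi => Q.m_zero i hi
  tw := fun i j => ((Q.S i).sg j).card
  δ := fun i => dmap (Q.S i).sg (Q.S (i + 1)).sg (Q.w i)
  δ_homog := by
    intro i k j
    rw [dmap_single]
    by_cases h : Q.w i k j = 0
    · left; rw [h, monomial_zero]
    · right
      have hs := ((Q.S i).mini _ _ ((Q.step i).wmem k) j h).1
      refine ⟨Finset.card_le_card hs, ?_⟩
      apply isHomogeneous_monomial
      have := tsub_add_cancel_of_le (ind_mono hs)
      have h2 := congrArg Finsupp.degree this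
      rw [map_add, ind_degree, ind_degree] at h2
      omega
  aug := augm K n (Q.S 0).m
  aug_homog := by
    intro j
    rw [augm_single]
    have : ((Q.S 0).sg j).card = 0 := by
      revert j
      rw [Q.S_zero]
      intro j
      rfl
    rw [this]
    exact isHomogeneous_one _ _
  aug_surj := by
    intro r
    have : 0 < (Q.S 0).m := by rw [Q.S_zero]; exact Nat.one_pos
    refine ⟨r • Pi.single ⟨0, this⟩ 1, ?_⟩
    rw [map_smul, augm_single, smul_eq_mul, mul_one, sub_self]
    exact zero_mem _
  exact_zero := by
    ext f
    rw [range_dmap (Q.step 0), Submodule.mem_comap]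
    exact (comap_aug E U hU h0 hE _ Q.S_zero f).symm
  exact_succ := by
    intro i
    ext f
    rw [range_dmap (Q.step (i + 1)), ker_dmap (Q.step i)]

lemma dmap_min {S S' : St K n} {w} (h : IsStep S S' w) (k : Fin S'.m) (j : Fin S.m) :
    constantCoeff (dmap S.sg S'.sg w (Pi.single k 1) j) = 0 := by
  rw [dmap_single]
  by_cases h0 : w k j = 0
  · rw [h0, monomial_zero, map_zero]
  · rw [constantCoeff_monomial, if_neg]
    have hs := S.mini _ _ (h.wmem k) j h0
    obtain ⟨v, hv, hv'⟩ := Finset.exists_of_ssubset hs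
    intro e
    have := DFunLike.congr_fun e v
    rw [Finsupp.tsub_apply, ind_apply, ind_apply, if_pos hv, if_neg hv'] at this
    simp at this

lemma mkGFR_min (hE : ∀ τ, U τ ↔ ∃ e ∈ E, e ⊆ τ) (Q : StSeq K n (S0 K U hU h0)) (i k j) :
    constantCoeff ((mkGFR E U hU h0 hE Q).δ i (Pi.single k 1) j) = 0 :=
  dmap_min (Q.step i) k j

end mk

end RSec

open MvPolynomial

section CmpSec

variable {K : Type} [Field K] {n : ℕ}

lemma lin_expand {A : Type} [CommRing A] {m : ℕ} {M : Type} [AddCommGroup M] [Module A M]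
    (L : (Fin m → A) →ₗ[A] M) (y : Fin m → A) : L y = ∑ k, y k • L (Pi.single k 1) := by
  classical
  rw [LinearMap.pi_apply_eq_sum_univ L y]
  apply Finset.sum_congr rfl
  intro k _
  congr 2
  funext j
  rw [Pi.single_apply]
  simp only [eq_comm]

lemma exists_lift {A : Type} [CommRing A] {m m' : ℕ} {M : Type} [AddCommGroup M] [Module A M]
    (φ : (Fin m → A) →ₗ[A] M) (ψ : (Fin m' → A) →ₗ[A] M) (T : Submodule A M)
    (P : Fin m → (Fin m' → A) → Prop)
    (h : ∀ k, ∃ x, P k x ∧ φ (Pi.single k 1) - ψ x ∈ T) :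
    ∃ f : (Fin m → A) →ₗ[A] (Fin m' → A), (∀ k, P k (f (Pi.single k 1))) ∧
      ∀ y, φ y - ψ (f y) ∈ T := by
  choose x hx hx' using h
  have e : ∀ k, Fintype.linearCombination A x (Pi.single k 1) = x k := by
    intro k
    rw [Fintype.linearCombination_apply_single, one_smul]
  refine ⟨Fintype.linearCombination A x, fun k => by rw [e]; exact hx k, ?_⟩
  intro y
  have := lin_expand (φ - ψ ∘ₗ Fintype.linearCombination A x) y
  rw [LinearMap.sub_apply, LinearMap.comp_apply] at this
  rw [this]
  apply sum_mem
  intro k _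
  apply T.smul_mem
  rw [LinearMap.sub_apply, LinearMap.comp_apply, e]
  exact hx' k

/-- homogeneous elements of a twisted free module -/
def Hdeg {m : ℕ} (tw : Fin m → ℕ) (d : ℕ) (x : Fin m → MvPolynomial (Fin n) K) : Prop :=
  ∀ j a, coeff a (x j) ≠ 0 → a.degree + tw j = d

/-- homogeneous components in a twisted free module -/
noncomputable def compd {m : ℕ} (tw : Fin m → ℕ) (d : ℕ) (x : Fin m → MvPolynomial (Fin n) K) :
    Fin m → MvPolynomial (Fin n) K :=
  fun j => if tw j ≤ d then homogeneousComponent (d - tw j) (x j) else 0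

lemma coeff_compd {m : ℕ} (tw : Fin m → ℕ) (d : ℕ) (x : Fin m → MvPolynomial (Fin n) K) (j a) :
    coeff a (compd tw d x j) = if a.degree + tw j = d then coeff a (x j) else 0 := by
  rw [compd]
  split_ifs with h1 h2 h2
  · rw [coeff_homogeneousComponent, if_pos (by omega)]
  · rw [coeff_homogeneousComponent, if_neg (by omega)]
  · omega
  · exact coeff_zero _

lemma compd_Hdeg {m : ℕ} (tw : Fin m → ℕ) (d : ℕ) (x : Fin m → MvPolynomial (Fin n) K) :
    Hdeg tw d (compd tw d x) := by
  intro j a h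
  rw [coeff_compd] at h
  by_contra h2
  rw [if_neg h2] at h
  exact h rfl

lemma compd_of_Hdeg {m : ℕ} {tw : Fin m → ℕ} {d : ℕ} {x : Fin m → MvPolynomial (Fin n) K}
    (h : Hdeg tw d x) : compd tw d x = x := by
  funext j
  ext a
  rw [coeff_compd]
  split_ifs with h1
  · rfl
  · by_contra h2
    exact h1 (h j a (Ne.symm h2))

lemma compd_sub {m : ℕ} (tw : Fin m → ℕ) (d : ℕ) (x y : Fin m → MvPolynomial (Fin n) K) :
    compd tw d (x - y) = compd tw d x - compd tw d y := by
  funext j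
  ext a
  rw [Pi.sub_apply, coeff_sub, coeff_compd, coeff_compd, coeff_compd, Pi.sub_apply, coeff_sub]
  split_ifs <;> simp

lemma compd_map {m m' : ℕ} {tw : Fin m → ℕ} {tw' : Fin m' → ℕ}
    (L : (Fin m' → MvPolynomial (Fin n) K) →ₗ[MvPolynomial (Fin n) K]
      (Fin m → MvPolynomial (Fin n) K))
    (hL : ∀ k, Hdeg tw (tw' k) (L (Pi.single k 1))) (d x) :
    L (compd tw' d x) = compd tw d (L x) := by
  classical
  funext j
  ext a
  rw [coeff_compd, lin_expand L, lin_expand L x, Finset.sum_apply, Finset.sum_apply, coeff_sum,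
    coeff_sum]
  simp only [Pi.smul_apply, smul_eq_mul, coeff_mul]
  have key : ∀ k : Fin m', ∀ p ∈ Finset.HasAntidiagonal.antidiagonal a,
      coeff p.1 (compd tw' d x k) * coeff p.2 (L (Pi.single k 1) j) =
      if a.degree + tw j = d then coeff p.1 (x k) * coeff p.2 (L (Pi.single k 1) j) else 0 := by
    intro k p hp
    rw [coeff_compd]
    by_cases h0 : coeff p.2 (L (Pi.single k 1) j) = 0
    · simp [h0]
    · have h1 := hL k j _ h0
      rw [Finset.HasAntidiagonal.mem_antidiagonal] at hp
      have h2 : p.1.degree + p.2.degree = a.degree := by rw [← hp, map_add]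
      split_ifs <;> first | rfl | omega | simp
  rw [Finset.sum_congr rfl (fun k _ => Finset.sum_congr rfl (key k))]
  split_ifs <;> simp

lemma Hdeg_map {m m' : ℕ} {tw : Fin m → ℕ} {tw' : Fin m' → ℕ}
    (L : (Fin m' → MvPolynomial (Fin n) K) →ₗ[MvPolynomial (Fin n) K]
      (Fin m → MvPolynomial (Fin n) K))
    (hL : ∀ k, Hdeg tw (tw' k) (L (Pi.single k 1))) {d x} (hx : Hdeg tw' d x) :
    Hdeg tw d (L x) := by
  rw [← compd_of_Hdeg hx, compd_map L hL]
  exact compd_Hdeg _ _ _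

lemma cc_map {m m' : ℕ}
    (L : (Fin m' → MvPolynomial (Fin n) K) →ₗ[MvPolynomial (Fin n) K]
      (Fin m → MvPolynomial (Fin n) K)) (x) (hx : ∀ k, constantCoeff (x k) = 0) (j) :
    constantCoeff (L x j) = 0 := by
  rw [lin_expand L, Finset.sum_apply, map_sum]
  apply Finset.sum_eq_zero
  intro k _
  rw [Pi.smul_apply, smul_eq_mul, map_mul, hx, zero_mul]

lemma cc_min {m m' : ℕ}
    (L : (Fin m' → MvPolynomial (Fin n) K) →ₗ[MvPolynomial (Fin n) K]
      (Fin m → MvPolynomial (Fin n) K))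
    (hL : ∀ k j, constantCoeff (L (Pi.single k 1) j) = 0) (x) (j) :
    constantCoeff (L x j) = 0 := by
  rw [lin_expand L, Finset.sum_apply, map_sum]
  apply Finset.sum_eq_zero
  intro k _
  rw [Pi.smul_apply, smul_eq_mul, map_mul, hL, mul_zero]

/-- graded lifting -/
lemma exists_glift {m m' l : ℕ} {twA : Fin m → ℕ} {twB : Fin m' → ℕ} {twC : Fin l → ℕ}
    (φ : (Fin m → MvPolynomial (Fin n) K) →ₗ[MvPolynomial (Fin n) K]
      (Fin l → MvPolynomial (Fin n) K))
    (ψ : (Fin m' → MvPolynomial (Fin n) K) →ₗ[MvPolynomial (Fin n) K]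
      (Fin l → MvPolynomial (Fin n) K))
    (hφ : ∀ k, Hdeg twC (twA k) (φ (Pi.single k 1)))
    (hψ : ∀ k, Hdeg twC (twB k) (ψ (Pi.single k 1)))
    (T : Submodule (MvPolynomial (Fin n) K) (Fin l → MvPolynomial (Fin n) K))
    (hT : ∀ x ∈ T, ∀ d, compd twC d x ∈ T)
    (h : ∀ k, ∃ x, φ (Pi.single k 1) - ψ x ∈ T) :
    ∃ f : (Fin m → MvPolynomial (Fin n) K) →ₗ[MvPolynomial (Fin n) K]
      (Fin m' → MvPolynomial (Fin n) K),
      (∀ k, Hdeg twB (twA k) (f (Pi.single k 1))) ∧ ∀ y, φ y - ψ (f y) ∈ T := by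
  apply exists_lift φ ψ T (fun k x => Hdeg twB (twA k) x)
  intro k
  obtain ⟨x, hx⟩ := h k
  refine ⟨compd twB (twA k) x, compd_Hdeg _ _ _, ?_⟩
  rw [compd_map ψ hψ, ← compd_of_Hdeg (hφ k), ← compd_sub]
  exact hT _ hx _

variable {I : Ideal (MvPolynomial (Fin n) K)}

lemma GFR.δ_Hdeg (F : GFR n K I) (i k) :
    Hdeg (F.tw i) (F.tw (i + 1) k) (F.δ i (Pi.single k 1)) := by
  intro j a ha
  rcases F.δ_homog i k j with h | ⟨h1, h2⟩
  · rw [h] at ha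
    exact absurd (coeff_zero _) ha
  · have h3 := h2 ha
    rw [show (Finsupp.weight (1 : Fin n → ℕ)) a = a.degree from (DFunLike.congr_fun Finsupp.degree_eq_weight_one a).symm] at h3
    omega

/-- the augmentation as a map to a rank one free module -/
noncomputable def GFR.aug1 (F : GFR n K I) :
    (Fin (F.rk 0) → MvPolynomial (Fin n) K) →ₗ[MvPolynomial (Fin n) K]
      (Fin 1 → MvPolynomial (Fin n) K) := LinearMap.pi (fun _ => F.aug)

lemma GFR.aug1_Hdeg (F : GFR n K I) (k) :
    Hdeg (fun _ => 0) (F.tw 0 k) (F.aug1 (Pi.single k 1)) := by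
  intro j a ha
  have h3 := F.aug_homog k ha
  rw [show (Finsupp.weight (1 : Fin n → ℕ)) a = a.degree from (DFunLike.congr_fun Finsupp.degree_eq_weight_one a).symm] at h3
  omega

lemma cmp_main (G F : GFR n K I) (hI : ∀ r ∈ I, ∀ d, homogeneousComponent d r ∈ I)
    (hmin : ∀ i k j, constantCoeff (G.δ i (Pi.single k 1) j) = 0) (i : ℕ) :
    ∃ (f : (Fin (G.rk i) → MvPolynomial (Fin n) K) →ₗ[MvPolynomial (Fin n) K]
        (Fin (F.rk i) → MvPolynomial (Fin n) K))
      (g : (Fin (F.rk i) → MvPolynomial (Fin n) K) →ₗ[MvPolynomial (Fin n) K]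
        (Fin (G.rk i) → MvPolynomial (Fin n) K))
      (h : (Fin (G.rk i) → MvPolynomial (Fin n) K) →ₗ[MvPolynomial (Fin n) K]
        (Fin (G.rk (i + 1)) → MvPolynomial (Fin n) K)),
      (∀ k, Hdeg (F.tw i) (G.tw i k) (f (Pi.single k 1))) ∧
      (∀ z ∈ LinearMap.range (G.δ i), f z ∈ LinearMap.range (F.δ i)) ∧
      (∀ z ∈ LinearMap.range (F.δ i), g z ∈ LinearMap.range (G.δ i)) ∧
      (∀ z ∈ LinearMap.range (G.δ i), g (f z) - z = G.δ i (h z)) ∧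
      (∀ y j, constantCoeff ((g (f y) - y) j) = 0) := by
  induction i with
  | zero =>
    obtain ⟨f, hf, hf'⟩ := exists_glift G.aug1 F.aug1 G.aug1_Hdeg F.aug1_Hdeg
      (Submodule.comap (LinearMap.proj 0) I)
      (by
        intro x hx d
        have := hI _ hx d
        simpa [compd] using this)
      (by
        intro k
        obtain ⟨x, hx⟩ := F.aug_surj (G.aug (Pi.single k 1))
        exact ⟨x, hx⟩)
    replace hf' : ∀ y, G.aug y - F.aug (f y) ∈ I := hf'
    obtain ⟨g, -, hg'⟩ := exists_lift F.aug G.aug I (fun _ _ => True)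
      (by
        intro k
        obtain ⟨x, hx⟩ := G.aug_surj (F.aug (Pi.single k 1))
        exact ⟨x, trivial, hx⟩)
    have hr : ∀ y, g (f y) - y ∈ LinearMap.range (G.δ 0) := by
      intro y
      rw [G.exact_zero, Submodule.mem_comap, map_sub]
      have := I.add_mem (hg' (f y)) (hf' y)
      have := I.neg_mem this
      convert this using 1
      ring
    obtain ⟨h, -, hh⟩ := exists_lift (g ∘ₗ f - LinearMap.id) (G.δ 0) ⊥ (fun _ _ => True)
      (by
        intro k
        obtain ⟨x, hx⟩ := hr (Pi.single k 1)
        refine ⟨x, trivial, ?_⟩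
        rw [Submodule.mem_bot, hx]
        simp)
    replace hh : ∀ y, g (f y) - y = G.δ 0 (h y) := by
      intro y
      have := hh y
      rw [Submodule.mem_bot, sub_eq_zero] at this
      simpa using this
    refine ⟨f, g, h, hf, ?_, ?_, fun z _ => hh z, ?_⟩
    · intro z hz
      rw [G.exact_zero, Submodule.mem_comap] at hz
      rw [F.exact_zero, Submodule.mem_comap]
      have := I.sub_mem hz (hf' z)
      simpa using this
    · intro z hz
      rw [F.exact_zero, Submodule.mem_comap] at hz
      rw [G.exact_zero, Submodule.mem_comap]
      have := I.sub_mem hz (hg' z)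
      simpa using this
    · intro y j
      rw [hh]
      exact cc_min _ (hmin 0) _ _
  | succ i ih =>
    obtain ⟨f, g, h, hf, hfz, hgz, hh, -⟩ := ih
    obtain ⟨f', hf', hfc⟩ := exists_glift (twA := G.tw (i + 1)) (twB := F.tw (i + 1))
      (twC := F.tw i) (f ∘ₗ G.δ i) (F.δ i)
      (fun k => Hdeg_map f hf (G.δ_Hdeg i k)) (F.δ_Hdeg i) ⊥
      (by
        intro x hx d
        rw [Submodule.mem_bot] at hx ⊢
        subst hx
        funext j
        simp [compd])
      (by
        intro k
        obtain ⟨x, hx⟩ := hfz (G.δ i (Pi.single k 1)) ⟨_, rfl⟩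
        exact ⟨x, by rw [Submodule.mem_bot, hx]; simp⟩)
    obtain ⟨g', -, hgc⟩ := exists_lift (g ∘ₗ F.δ i) (G.δ i) ⊥ (fun _ _ => True)
      (by
        intro k
        obtain ⟨x, hx⟩ := hgz (F.δ i (Pi.single k 1)) ⟨_, rfl⟩
        exact ⟨x, trivial, by rw [Submodule.mem_bot, hx]; simp⟩)
    replace hfc : ∀ y, F.δ i (f' y) = f (G.δ i y) := by
      intro y
      have := hfc y
      rw [Submodule.mem_bot, sub_eq_zero] at this
      exact this.symm
    replace hgc : ∀ y, G.δ i (g' y) = g (F.δ i y) := by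
      intro y
      have := hgc y
      rw [Submodule.mem_bot, sub_eq_zero] at this
      exact this.symm
    have hr : ∀ y, g' (f' y) - y - h (G.δ i y) ∈ LinearMap.range (G.δ (i + 1)) := by
      intro y
      rw [G.exact_succ, LinearMap.mem_ker, map_sub, map_sub, hgc, hfc, hh _ ⟨_, rfl⟩, sub_self]
    obtain ⟨h', -, hhc⟩ := exists_lift (g' ∘ₗ f' - LinearMap.id - h ∘ₗ G.δ i) (G.δ (i + 1)) ⊥
      (fun _ _ => True)
      (by
        intro k
        obtain ⟨x, hx⟩ := hr (Pi.single k 1)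
        refine ⟨x, trivial, ?_⟩
        rw [Submodule.mem_bot, hx]
        simp)
    replace hhc : ∀ y, g' (f' y) - y = h (G.δ i y) + G.δ (i + 1) (h' y) := by
      intro y
      have := hhc y
      rw [Submodule.mem_bot, sub_eq_zero] at this
      rw [← this]
      simp
    refine ⟨f', g', h', hf', ?_, ?_, ?_, ?_⟩
    · intro z hz
      rw [G.exact_succ, LinearMap.mem_ker] at hz
      rw [F.exact_succ, LinearMap.mem_ker, hfc, hz, map_zero]
    · intro z hz
      rw [F.exact_succ, LinearMap.mem_ker] at hz
      rw [G.exact_succ, LinearMap.mem_ker, hgc, hz, map_zero]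
    · intro z hz
      rw [G.exact_succ, LinearMap.mem_ker] at hz
      rw [hhc, hz, map_zero, zero_add]
    · intro y j
      rw [hhc, Pi.add_apply, map_add, cc_min _ (hmin (i + 1)), add_zero]
      exact cc_map _ _ (cc_min _ (hmin i) _) _

lemma tw_mem (G F : GFR n K I) (hI : ∀ r ∈ I, ∀ d, homogeneousComponent d r ∈ I)
    (hmin : ∀ i k j, constantCoeff (G.δ i (Pi.single k 1) j) = 0) (i : ℕ) (k : Fin (G.rk i)) :
    ∃ j, F.tw i j = G.tw i k := by
  obtain ⟨f, g, h, hf, -, -, -, hc⟩ := cmp_main G F hI hmin i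
  by_contra hne
  push Not at hne
  have h1 : ∀ j, constantCoeff (f (Pi.single k 1) j) = 0 := by
    intro j
    by_contra h2
    rw [constantCoeff_eq] at h2
    have := hf k j 0 h2
    rw [map_zero, zero_add] at this
    exact hne j this
  have h2 := cc_map g _ h1 k
  have h3 := hc (Pi.single k 1) k
  rw [Pi.sub_apply, map_sub, h2, Pi.single_eq_same] at h3
  simp at h3

lemma idl_homog (E : Set (Finset (Fin n))) : ∀ r ∈ idl K E, ∀ d,
    homogeneousComponent d r ∈ idl K E := by
  intro r hr d
  rw [mem_idl] at hr ⊢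
  intro a ha
  apply hr
  rw [coeff_homogeneousComponent] at ha
  intro h0
  rw [h0] at ha
  simp at ha

end CmpSec

section DualSec

variable {K : Type} [Field K] {n : ℕ}

/-- the standard sign -/
def sgn0 (K : Type) [Field K] {n : ℕ} (v : Fin n) (γ : Finset (Fin n)) : K :=
  (-1) ^ (γ.filter (· < v)).card

lemma sgn0_isSign : IsSign (sgn0 K (n := n)) := by
  have key : ∀ (v w : Fin n) γ, v ∈ γ → v < w →
    sgn0 K v γ * sgn0 K w (γ.erase v) + sgn0 K w γ * sgn0 K v (γ.erase w) = 0 := by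
    intro v w γ hv hvw
    have h1 : (γ.erase w).filter (· < v) = γ.filter (· < v) := by
      ext x
      simp only [Finset.mem_filter, Finset.mem_erase]
      constructor
      · rintro ⟨⟨_, h⟩, h2⟩
        exact ⟨h, h2⟩
      · rintro ⟨h, h2⟩
        exact ⟨⟨(h2.trans hvw).ne, h⟩, h2⟩
    have h2 : (γ.erase v).filter (· < w) = (γ.filter (· < w)).erase v := by
      ext x
      simp only [Finset.mem_filter, Finset.mem_erase]
      tauto
    have h3 : ((γ.filter (· < w)).erase v).card + 1 = (γ.filter (· < w)).card :=
      Finset.card_erase_add_one (Finset.mem_filter.2 ⟨hv, hvw⟩)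
    simp only [sgn0]
    rw [h1, h2, ← h3, pow_succ]
    ring
  constructor
  · intro v γ
    rw [sgn0, ← mul_pow]
    simp
  · intro v w γ hv hw hne
    rcases lt_or_gt_of_ne hne with h | h
    · exact key v w γ hv h
    · rw [add_comm]
      exact key w v γ hw h

/-- the dual sign -/
def sdual (s : Fin n → Finset (Fin n) → K) (v : Fin n) (γ : Finset (Fin n)) : K :=
  s v (γ.erase v)ᶜ

lemma sdual_isSign {s : Fin n → Finset (Fin n) → K} (hs : IsSign s) : IsSign (sdual s) := by
  constructor
  · intro v γ
    exact hs.sq _ _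
  · intro v w γ hv hw hne
    have h1 : (γ.erase v)ᶜ = (((γ.erase v).erase w)ᶜ).erase w := by
      ext x
      simp only [Finset.mem_compl, Finset.mem_erase]
      by_cases hx : x = w
      · subst hx
        simp [hw, hne.symm]
      · simp [hx]
    have h2 : (γ.erase w)ᶜ = (((γ.erase v).erase w)ᶜ).erase v := by
      ext x
      simp only [Finset.mem_compl, Finset.mem_erase]
      by_cases hx : x = v
      · subst hx
        simp [hv, hne]
      · simp [hx]
    have h3 : (γ.erase w).erase v = (γ.erase v).erase w := Finset.erase_right_comm
    have := hs.anti v w (((γ.erase v).erase w)ᶜ) (by simp) (by simp) hne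
    simp only [sdual]
    rw [h3, ← this]
    rw [← h1, ← h2]
    ring

/-- exactness of a three term complex given by a matrix and three predicates -/
def Ex {X : Type} [Fintype X] (a : X → X → K) (P0 P1 P2 : X → Prop) : Prop :=
  ∀ c : X → K, (∀ x, ¬ P1 x → c x = 0) → (∀ x, P2 x → ∑ y, a x y * c y = 0) →
    ∃ b : X → K, (∀ x, ¬ P0 x → b x = 0) ∧ ∀ x, P1 x → ∑ y, a x y * b y = c x

lemma Ex.dual {X : Type} [Fintype X] [DecidableEq X] {a : X → X → K} {P0 P1 P2 : X → Prop}
    (h : Ex a P0 P1 P2) : Ex (fun x y => a y x) P2 P1 P0 := by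
  classical
  intro c hc hc0
  let A : (X → K) →ₗ[K] (X → K) :=
    { toFun := fun u x => if P2 x then ∑ y, a x y * (if P1 y then u y else 0) else 0
      map_add' := by
        intro u v
        funext x
        by_cases hx : P2 x
        · simp only [hx, if_true, Pi.add_apply, ← Finset.sum_add_distrib, ← mul_add]
          refine Finset.sum_congr rfl fun y _ => ?_
          split_ifs <;> simp
        · simp [hx]
      map_smul' := by
        intro r u
        funext x
        by_cases hx : P2 x
        · simp only [hx, if_true, Pi.smul_apply, smul_eq_mul, Finset.mul_sum, RingHom.id_apply]
          refine Finset.sum_congr rfl fun y _ => ?_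
          split_ifs
          · ring
          · simp
        · simp [hx] }
  have hA : ∀ u x, A u x = if P2 x then ∑ y, a x y * (if P1 y then u y else 0) else 0 :=
    fun _ _ => rfl
  let φ : Module.Dual K (X → K) := Fintype.linearCombination K c
  have hφ : ∀ u, φ u = ∑ y, u y * c y := by
    intro u
    simp [φ, Fintype.linearCombination_apply]
  have hmem : φ ∈ (LinearMap.ker A).dualAnnihilator := by
    rw [Submodule.mem_dualAnnihilator]
    intro u hu
    rw [LinearMap.mem_ker] at hu
    obtain ⟨b, hb, hb'⟩ := h (fun y => if P1 y then u y else 0) (fun x hx => if_neg hx)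
      (by
        intro x hx
        have := congrFun hu x
        rwa [hA, if_pos hx] at this)
    rw [hφ]
    have e : ∀ y, u y * c y = ∑ z, b z * (a y z * c y) := by
      intro y
      by_cases hy : P1 y
      · have := hb' y hy
        rw [if_pos hy] at this
        rw [← this, Finset.sum_mul]
        exact Finset.sum_congr rfl fun z _ => by ring
      · simp [hc y hy]
    rw [Finset.sum_congr rfl (fun y _ => e y), Finset.sum_comm]
    apply Finset.sum_eq_zero
    intro z _
    rw [← Finset.mul_sum]
    by_cases hz : P0 z
    · rw [hc0 z hz, mul_zero]
    · rw [hb z hz, zero_mul]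
  rw [← LinearMap.range_dualMap_eq_dualAnnihilator_ker] at hmem
  obtain ⟨ψ, hψ⟩ := hmem
  refine ⟨fun y => if P2 y then ψ (Pi.single y 1) else 0, fun x hx => if_neg hx, ?_⟩
  intro x hx
  have e1 : φ (Pi.single x 1) = c x := by
    simp [φ, Fintype.linearCombination_apply_single]
  rw [← e1, ← hψ, LinearMap.dualMap_apply, LinearMap.pi_apply_eq_sum_univ ψ]
  apply Finset.sum_congr rfl
  intro y _
  have e2 : (fun j => if y = j then (1 : K) else 0) = Pi.single y 1 := by
    funext j
    rw [Pi.single_apply]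
    simp only [eq_comm]
  rw [e2, hA]
  by_cases hy : P2 y
  · beta_reduce
    rw [if_pos hy, if_pos hy, smul_eq_mul]
    congr 1
    rw [Finset.sum_eq_single x]
    · simp [hx]
    · intro z _ hz
      simp [hz]
    · simp
  · beta_reduce
    rw [if_neg hy, if_neg hy]
    simp

/-- the matrix of `DD` -/
def DM (s : Fin n → Finset (Fin n) → K) (α : Finset (Fin n)) (γ δ : Finset (Fin n)) : K :=
  ∑ v ∈ γ \ α, if γ.erase v = δ then s v γ else 0

lemma DM_mul (s : Fin n → Finset (Fin n) → K) (α : Finset (Fin n)) (γ) (c : Finset (Fin n) → K) :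
    ∑ δ, DM s α γ δ * c δ = DD s α c γ := by
  simp only [DM, DD, Finset.sum_mul]
  rw [Finset.sum_comm]
  apply Finset.sum_congr rfl
  intro v _
  simp [ite_mul]

lemma DM_mul_T (s : Fin n → Finset (Fin n) → K) (α : Finset (Fin n)) (γ) (hγ : γ ⊆ αᶜ)
    (c : Finset (Fin n) → K) :
    ∑ δ, DM s α δ γᶜ * c δᶜ = DD (sdual s) ∅ c γ := by
  simp only [DM, DD, Finset.sum_mul]
  rw [Finset.sum_sigma', Finset.sdiff_empty]
  have : ∀ v ∈ γ, sdual s v γ • c (γ.erase v) =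
      (if ((γ.erase v)ᶜ).erase v = γᶜ then s v (γ.erase v)ᶜ else 0) * c ((γ.erase v)ᶜ)ᶜ := by
    intro v hv
    rw [if_pos, compl_compl]
    · rfl
    · ext x
      simp only [Finset.mem_compl, Finset.mem_erase]
      by_cases hx : x = v
      · subst hx; simp [hv]
      · simp [hx]
  rw [Finset.sum_congr rfl this]
  symm
  apply Finset.sum_of_injOn (fun v => (⟨(γ.erase v)ᶜ, v⟩ : (_ : Finset (Fin n)) × Fin n))
  · intro v _ w _ h
    simp only [Sigma.mk.injEq] at h
    exact eq_of_heq h.2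
  · intro v hv
    have h2 := hγ hv
    simp only [Finset.coe_sigma, Set.mem_sigma_iff]
    refine ⟨by simp, ?_⟩
    rw [Finset.mem_compl] at h2
    simp [h2]
  · rintro ⟨δ, v⟩ h1 h2
    rw [Finset.mem_sigma, Finset.mem_sdiff] at h1
    rw [if_neg, zero_mul]
    intro h3
    apply h2
    have hv : v ∈ γ := by
      have : v ∉ γᶜ := by rw [← h3]; simp
      simpa using this
    refine ⟨v, hv, ?_⟩
    have : (γ.erase v)ᶜ = δ := by
      ext x
      have := congrArg (x ∈ ·) h3
      simp only [Finset.mem_compl, Finset.mem_erase] at this ⊢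
      by_cases hx : x = v
      · subst hx; simpa using h1.2.1
      · simp only [hx, ne_eq, not_false_eq_true, true_and] at this ⊢
        rw [this]
    simp only [this]
  · intro v _
    rfl

open Classical in
/-- the family attached to a predicate -/
noncomputable def NN (K : Type) [Field K] {n : ℕ} (U : Finset (Fin n) → Prop) :
    Finset (Fin n) → Submodule K (Fin 1 → K) := fun τ => if U τ then ⊤ else ⊥

lemma mem_NN {U : Finset (Fin n) → Prop} {τ} {x : Fin 1 → K} :
    x ∈ NN K U τ ↔ (¬ U τ → x 0 = 0) := by
  rw [NN]
  split_ifs with h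
  · simp [h]
  · simp only [Submodule.mem_bot, h, not_false_eq_true, true_imp_iff]
    constructor
    · rintro rfl; rfl
    · intro h0
      funext i
      rw [Subsingleton.elim i 0]
      exact h0

/-- scalar version of `Van` -/
def VanK (s : Fin n → Finset (Fin n) → K) (U : Finset (Fin n) → Prop)
    (α β : Finset (Fin n)) (j : ℕ) : Prop :=
  ∀ c : Finset (Fin n) → K, (∀ γ, α ⊆ γ → γ ⊆ β → γ.card = j → ¬ U γ → c γ = 0) →
    (∀ γ, α ⊆ γ → γ ⊆ β → γ.card = j + 1 → DD s α c γ = 0) →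
    ∃ b : Finset (Fin n) → K, (∀ γ, α ⊆ γ → γ ⊆ β → γ.card + 1 = j → ¬ U γ → b γ = 0) ∧
      ∀ γ, α ⊆ γ → γ ⊆ β → γ.card = j → DD s α b γ = c γ

lemma van_NN (s : Fin n → Finset (Fin n) → K) (U : Finset (Fin n) → Prop) (α β j) :
    Van s (NN K U) α β j ↔ VanK s U α β j := by
  let p : (Fin 1 → K) →ₗ[K] K := LinearMap.proj 0
  let q : K →ₗ[K] (Fin 1 → K) := LinearMap.pi (fun _ => LinearMap.id)
  have hpq : ∀ x, q (p x) = x := by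
    intro x
    funext i
    rw [Subsingleton.elim i 0]
    rfl
  constructor
  · intro h c hc hdc
    obtain ⟨b, hb, hb'⟩ := h (fun γ => q (c γ)) (fun γ h1 h2 h3 => mem_NN.2 (hc γ h1 h2 h3))
      (by
        intro γ h1 h2 h3
        rw [DD_map, hdc γ h1 h2 h3, map_zero])
    refine ⟨fun γ => p (b γ), fun γ h1 h2 h3 => mem_NN.1 (hb γ h1 h2 h3), ?_⟩
    intro γ h1 h2 h3
    rw [DD_map, hb' γ h1 h2 h3]
    rfl
  · intro h c hc hdc
    obtain ⟨b, hb, hb'⟩ := h (fun γ => p (c γ)) (fun γ h1 h2 h3 => mem_NN.1 (hc γ h1 h2 h3))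
      (by
        intro γ h1 h2 h3
        rw [DD_map, hdc γ h1 h2 h3, map_zero])
    refine ⟨fun γ => q (b γ), fun γ h1 h2 h3 => mem_NN.2 (hb γ h1 h2 h3), ?_⟩
    intro γ h1 h2 h3
    rw [DD_map, hb' γ h1 h2 h3, hpq]

/-- cells of the quotient complex -/
def YY (U : Finset (Fin n) → Prop) (α : Finset (Fin n)) (P : ℕ → Prop) (τ : Finset (Fin n)) :
    Prop := α ⊆ τ ∧ ¬ U τ ∧ P τ.card

lemma vanK_dual (s : Fin n → Finset (Fin n) → K) (U : Finset (Fin n) → Prop)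
    (hU : ∀ σ τ, σ ⊆ τ → U σ → U τ) (α : Finset (Fin n)) {k j : ℕ} (hkj : k + j = n) :
    VanK (sdual s) (fun γ => ¬ U γᶜ) ∅ αᶜ j ↔
      Ex (fun x y => DM s α y x) (YY U α (· = k + 1)) (YY U α (· = k)) (YY U α (· + 1 = k)) := by
  classical
  have hsub : ∀ γ : Finset (Fin n), α ⊆ γᶜ → γ ⊆ αᶜ := by
    intro γ h
    rw [← Finset.compl_subset_compl, compl_compl]
    exact h
  have hsub2 : ∀ γ : Finset (Fin n), γ ⊆ αᶜ → α ⊆ γᶜ := by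
    intro γ h
    rw [← Finset.compl_subset_compl, compl_compl]
    exact h
  have hcard : ∀ γ : Finset (Fin n), γᶜ.card + γ.card = n := by
    intro γ
    simp
  constructor
  · intro h c hc hdc
    obtain ⟨b, hb, hb'⟩ := h (fun γ => c γᶜ)
      (by
        intro γ _ h2 h3 h4
        apply hc
        intro h5
        exact h4 h5.2.1)
      (by
        intro γ _ h2 h3
        rw [← DM_mul_T s α γ h2]
        simp only [compl_compl]
        by_cases hu : U γᶜ
        · apply Finset.sum_eq_zero
          intro δ _
          by_cases h5 : U δ
          · rw [hc δ (fun h => h.2.1 h5), mul_zero]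
          · rw [DM, Finset.sum_eq_zero, zero_mul]
            intro v _
            rw [if_neg]
            intro h6
            rw [← h6] at hu
            exact h5 (hU _ _ (Finset.erase_subset _ _) hu)
        · exact hdc γᶜ ⟨hsub2 γ h2, hu, by have := hcard γ; show _ + 1 = _; omega⟩)
    refine ⟨fun τ => if YY U α (· = k + 1) τ then b τᶜ else 0, fun τ hτ => if_neg hτ, ?_⟩
    intro τ hτ
    have h1 := hb' τᶜ (Finset.empty_subset _) (hsub _ (by rw [compl_compl]; exact hτ.1))
      (by have := hcard τ; have : τ.card = k := hτ.2.2; omega)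
    rw [← DM_mul_T s α τᶜ (hsub _ (by rw [compl_compl]; exact hτ.1)), compl_compl] at h1
    rw [← h1]
    apply Finset.sum_congr rfl
    intro δ _
    beta_reduce
    by_cases hD : DM s α δ τ = 0
    · rw [hD, zero_mul, zero_mul]
    congr 1
    obtain ⟨v, hv, hv'⟩ := Finset.exists_ne_zero_of_sum_ne_zero hD
    have he : δ.erase v = τ := by
      by_contra hne
      exact hv' (if_neg hne)
    rw [Finset.mem_sdiff] at hv
    have hc1 : δ.card = k + 1 := by
      have : τ.card = k := hτ.2.2
      rw [← this, ← he, Finset.card_erase_add_one hv.1]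
    have hα : α ⊆ δ := hτ.1.trans (he ▸ Finset.erase_subset _ _)
    by_cases hu : U δ
    · rw [if_neg (fun h => h.2.1 hu)]
      symm
      apply hb
      · exact Finset.empty_subset _
      · apply hsub; rw [compl_compl]; exact hα
      · have := hcard δ; omega
      · beta_reduce; rw [compl_compl]; exact not_not.2 hu
    · rw [if_pos ⟨hα, hu, hc1⟩]
  · intro h c hc hdc
    obtain ⟨b, hb, hb'⟩ := h (fun τ => if YY U α (· = k) τ then c τᶜ else 0)
      (fun τ hτ => if_neg hτ)
      (by
        intro τ hτ
        have hτα : τᶜ ⊆ αᶜ := hsub _ (by rw [compl_compl]; exact hτ.1)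
        have h1 := hdc τᶜ (Finset.empty_subset _) hτα
          (by have := hcard τ; have : τ.card + 1 = k := hτ.2.2; omega)
        rw [← DM_mul_T s α τᶜ hτα, compl_compl] at h1
        refine Eq.trans ?_ h1
        apply Finset.sum_congr rfl
        intro δ _
        beta_reduce
        by_cases hD : DM s α δ τ = 0
        · rw [hD, zero_mul, zero_mul]
        congr 1
        obtain ⟨v, hv, hv'⟩ := Finset.exists_ne_zero_of_sum_ne_zero hD
        have he : δ.erase v = τ := by
          by_contra hne
          exact hv' (if_neg hne)
        rw [Finset.mem_sdiff] at hv
        have hc1 : δ.card = k := by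
          have : τ.card + 1 = k := hτ.2.2
          rw [← this, ← he, Finset.card_erase_add_one hv.1]
        have hα : α ⊆ δ := hτ.1.trans (he ▸ Finset.erase_subset _ _)
        by_cases hu : U δ
        · rw [if_neg (fun h => h.2.1 hu)]
          symm
          apply hc
          · exact Finset.empty_subset _
          · apply hsub; rw [compl_compl]; exact hα
          · have := hcard δ; omega
          · beta_reduce; rw [compl_compl]; exact not_not.2 hu
        · rw [if_pos ⟨hα, hu, hc1⟩])
    refine ⟨fun γ => b γᶜ, ?_, ?_⟩
    · intro γ _ h2 h3 h4
      apply hb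
      intro h5
      exact h4 h5.2.1
    · intro γ _ h2 h3
      rw [← DM_mul_T s α γ h2]
      simp only [compl_compl]
      by_cases hu : U γᶜ
      · rw [hc γ (Finset.empty_subset _) h2 h3 (not_not.2 hu)]
        apply Finset.sum_eq_zero
        intro δ _
        by_cases h5 : U δ
        · rw [hb δ (fun h => h.2.1 h5), mul_zero]
        · rw [DM, Finset.sum_eq_zero, zero_mul]
          intro v _
          rw [if_neg]
          intro h6
          rw [← h6] at hu
          exact h5 (hU _ _ (Finset.erase_subset _ _) hu)
      · have hY : YY U α (· = k) γᶜ := ⟨hsub2 γ h2, hu, by have := hcard γ; show _ = _; omega⟩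
        have := hb' γᶜ hY
        rw [if_pos hY, compl_compl] at this
        exact this

lemma ex_iff_vanK {s : Fin n → Finset (Fin n) → K} (hs : IsSign s) (U : Finset (Fin n) → Prop)
    (hU : ∀ σ τ, σ ⊆ τ → U σ → U τ) (α : Finset (Fin n)) (hα : α ≠ Finset.univ) (k : ℕ) :
    Ex (DM s α) (YY U α (· + 1 = k)) (YY U α (· = k)) (YY U α (· = k + 1)) ↔
      VanK s U α Finset.univ (k + 1) := by
  classical
  obtain ⟨v0, hv0⟩ : ∃ v, v ∉ α := by
    by_contra h
    push Not at h
    exact hα (Finset.eq_univ_iff_forall.2 h)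
  have full : ∀ i, ∀ c : Finset (Fin n) → K,
      (∀ γ, α ⊆ γ → γ.card = i + 1 → DD s α c γ = 0) →
      ∃ b : Finset (Fin n) → K, ∀ γ, α ⊆ γ → γ.card = i → DD s α b γ = c γ := by
    intro i c hc
    obtain ⟨b, -, hb⟩ := van_cone hs (fun _ => (⊤ : Submodule K K)) hv0 (Finset.mem_univ v0)
      (fun _ => le_rfl) i c (fun _ _ _ _ => Submodule.mem_top)
      (fun γ h1 _ h3 => hc γ h1 h3)
    exact ⟨b, fun γ h1 h2 => hb γ h1 (Finset.subset_univ _) h2⟩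
  have hcut : ∀ (P : ℕ → Prop) (b : Finset (Fin n) → K) (γ : Finset (Fin n)), α ⊆ γ → ¬ U γ →
      (∀ i, i + 1 = γ.card → P i) →
      DD s α (fun τ => if YY U α P τ then b τ else 0) γ = DD s α b γ := by
    intro P b γ h1 h2 h3
    apply DD_congr
    intro v hv hva
    rw [if_pos]
    refine ⟨sub_erase_of h1 hva, fun h => h2 (hU _ _ (Finset.erase_subset _ _) h), ?_⟩
    exact h3 _ (Finset.card_erase_add_one hv)
  constructor
  · intro h c hc hdc
    obtain ⟨b, hb⟩ := full (k + 1) c (fun γ h1 h2 => hdc γ h1 (Finset.subset_univ _) h2)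
    obtain ⟨e, he, he'⟩ := h (fun τ => if YY U α (· = k) τ then b τ else 0)
      (fun τ hτ => if_neg hτ)
      (by
        intro τ hτ
        have hcd : τ.card = k + 1 := hτ.2.2
        rw [DM_mul, hcut _ _ _ hτ.1 hτ.2.1 (fun i hi => by omega), hb τ hτ.1 hτ.2.2]
        exact hc τ hτ.1 (Finset.subset_univ _) hτ.2.2 hτ.2.1)
    refine ⟨fun τ => b τ - DD s α e τ, ?_, ?_⟩
    · intro γ h1 _ h3 h4
      have hY : YY U α (· = k) γ := ⟨h1, h4, by show _ = _; omega⟩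
      have := he' γ hY
      rw [DM_mul, if_pos hY] at this
      beta_reduce
      rw [this, sub_self]
    · intro γ h1 _ h3
      rw [DD_sub, hb γ h1 h3, DD_DD hs, sub_zero]
  · intro h c hc hdc
    obtain ⟨b', hb', hb''⟩ := h (DD s α c)
      (by
        intro γ h1 _ h3 h4
        have := hdc γ ⟨h1, h4, h3⟩
        rwa [DM_mul] at this)
      (fun γ _ _ _ => DD_DD hs _ _ _)
    obtain ⟨b, hb⟩ := full k (fun τ => c τ - b' τ)
      (by
        intro γ h1 h2
        rw [DD_sub, hb'' γ h1 (Finset.subset_univ _) h2, sub_self])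
    refine ⟨fun τ => if YY U α (· + 1 = k) τ then b τ else 0, fun τ hτ => if_neg hτ, ?_⟩
    intro τ hτ
    have hcd : τ.card = k := hτ.2.2
    rw [DM_mul, hcut _ _ _ hτ.1 hτ.2.1 (fun i hi => by omega), hb τ hτ.1 hcd,
      hb' τ hτ.1 (Finset.subset_univ _) (by omega) hτ.2.1, sub_zero]

lemma van_dual {s : Fin n → Finset (Fin n) → K} (hs : IsSign s) (U : Finset (Fin n) → Prop)
    (hU : ∀ σ τ, σ ⊆ τ → U σ → U τ) (α : Finset (Fin n)) (hα : α ≠ Finset.univ) {k j : ℕ}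
    (hkj : k + j = n) :
    Van (sdual s) (NN K (fun γ => ¬ U γᶜ)) ∅ αᶜ j ↔ Van s (NN K U) α Finset.univ (k + 1) := by
  rw [van_NN, van_NN, vanK_dual s U hU α hkj, ← ex_iff_vanK hs U hU α hα k]
  exact ⟨fun h => h.dual, fun h => h.dual⟩

lemma NN_mono (U : Finset (Fin n) → Prop)
    (hU : ∀ σ τ, σ ⊆ τ → U σ → U τ) : ∀ σ τ, σ ⊆ τ → NN K U σ ≤ NN K U τ := by
  intro σ τ h x hx
  rw [mem_NN] at hx ⊢
  exact fun h1 => hx (fun h2 => h1 (hU _ _ h h2))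

lemma van_big (s : Fin n → Finset (Fin n) → K) {W : Type} [AddCommGroup W] [Module K W]
    (N : Finset (Fin n) → Submodule K W) (α β : Finset (Fin n)) (j : ℕ)
    (h : β.card < j) : Van s N α β j := by
  apply van_bot
  intro γ _ h2 h3
  have := Finset.card_le_card h2
  omega

lemma van_AB {s : Fin n → Finset (Fin n) → K} (hs : IsSign s) (U : Finset (Fin n) → Prop)
    (hU : ∀ σ τ, σ ⊆ τ → U σ → U τ) (d : ℕ) (hd : 1 ≤ d) :
    (∀ (σ : Finset (Fin n)) (i : ℕ), d ≤ i → i ≤ σ.card →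
      Van (sdual s) (NN K (fun γ => ¬ U γᶜ)) ∅ σ (σ.card - i)) ↔
    (∀ σ j, d < j → Van s (NN K U) ∅ σ j) := by
  rw [van_iff hs _ (NN_mono U hU)]
  have hcard : ∀ γ : Finset (Fin n), γᶜ.card + γ.card = n := by
    intro γ
    simp
  constructor
  · intro h α j hj
    by_cases hjn : n < j
    · apply van_big
      simpa using hjn
    have hα : α ≠ Finset.univ := by
      rintro rfl
      simp at hj
      omega
    obtain ⟨k, rfl⟩ : ∃ k, j = k + 1 := ⟨j - 1, by omega⟩
    have hc := hcard α
    have := h αᶜ (k - α.card) (by omega) (by omega)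
    rw [van_dual hs U hU α hα (k := k) (by omega)] at this
    exact this
  · intro h σ i hi hσ
    have hc := hcard σ
    have hα : σᶜ ≠ Finset.univ := by
      intro e
      rw [e] at hc
      simp at hc
      subst hc
      simp at hσ
      omega
    have := (van_dual hs U hU σᶜ hα (k := σᶜ.card + i) (j := σ.card - i) (by omega)).2
      (h _ _ (by omega))
    rwa [compl_compl] at this

end DualSec

open MvPolynomial

section FinalSec

variable {K : Type} [Field K] {n : ℕ}

lemma reg_iff (E : Set (Finset (Fin n))) (U : Finset (Fin n) → Prop)
    (hU : ∀ σ τ, σ ⊆ τ → U σ → U τ) (h0 : ¬ U ∅) (hE : ∀ τ, U τ ↔ ∃ e ∈ E, e ⊆ τ)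
    {s : Fin n → Finset (Fin n) → K} (hs : IsSign s) (r : ℕ) :
    (∃ F : GFR n K (idl K E), ∀ (i : ℕ) (j : Fin (F.rk i)), F.tw i j ≤ r + i) ↔
      ∀ σ j, r + 1 < j → Van s (NN K U) ∅ σ j := by
  obtain ⟨Q⟩ := exists_seq (S0 K U hU h0)
  constructor
  · rintro ⟨F, hF⟩ σ j hj
    by_cases hσ : σ.card < j
    · exact van_big _ _ _ _ _ hσ
    have key : ∀ k, (Q.S ((σ.card - j) + 1)).sg k ≠ σ := by
      intro k hk
      obtain ⟨l, hl⟩ := tw_mem (mkGFR E U hU h0 hE Q) F (idl_homog E)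
        (mkGFR_min E U hU h0 hE Q) ((σ.card - j) + 1) k
      have h1 := hF _ l
      have h2 : (mkGFR E U hU h0 hE Q).tw ((σ.card - j) + 1) k = σ.card := congrArg Finset.card hk
      omega
    have := (Q.no_gen_iff hs (σ.card - j) σ).1 key (by omega)
    rw [show σ.card - (σ.card - j) = j by omega] at this
    exact this
  · intro h
    refine ⟨mkGFR E U hU h0 hE Q, ?_⟩
    intro i k
    change ((Q.S i).sg k).card ≤ r + i
    cases i with
    | zero =>
      have : ∀ k, ((Q.S 0).sg k).card = 0 := by
        rw [Q.S_zero]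
        intro j
        rfl
      exact (this k).le.trans (Nat.zero_le _)
    | succ i =>
      by_contra hlt
      exact (Q.no_gen_iff hs i ((Q.S (i + 1)).sg k)).2 (fun _ => h _ _ (by omega)) k rfl

lemma pd_iff (E : Set (Finset (Fin n))) (U : Finset (Fin n) → Prop)
    (hU : ∀ σ τ, σ ⊆ τ → U σ → U τ) (h0 : ¬ U ∅) (h1 : U Finset.univ)
    (hE : ∀ τ, U τ ↔ ∃ e ∈ E, e ⊆ τ)
    {s : Fin n → Finset (Fin n) → K} (hs : IsSign s) (d : ℕ) :
    (∃ F : GFR n K (idl K E), ∀ i : ℕ, d < i → F.rk i = 0) ↔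
      1 ≤ d ∧ ∀ (σ : Finset (Fin n)) (i : ℕ), d ≤ i → i ≤ σ.card →
        Van s (NN K U) ∅ σ (σ.card - i) := by
  obtain ⟨Q⟩ := exists_seq (S0 K U hU h0)
  constructor
  · rintro ⟨F, hF⟩
    have hm : ∀ i, d < i → ∀ k : Fin (Q.S i).m, False := by
      intro i hi k
      obtain ⟨l, -⟩ := tw_mem (mkGFR E U hU h0 hE Q) F (idl_homog E)
        (mkGFR_min E U hU h0 hE Q) i k
      have := hF i hi
      exact absurd l.2 (by omega)
    constructor
    · by_contra hd
      have h2 : ∀ f ∈ (Q.S 0).N Finset.univ, f = 0 := by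
        intro f hf
        obtain ⟨g, -, rfl⟩ := (Q.step 0).gen _ f hf
        rw [lc_apply]
        exact Finset.sum_eq_zero fun k _ => (hm _ (by omega) k).elim
      rw [Q.S_zero] at h2
      have h3 : (fun _ => 1 : Fin 1 → K) ∈ NN K U Finset.univ := mem_NN.2 (fun h => absurd h1 h)
      have := congrFun (h2 _ h3) (0 : Fin 1)
      exact one_ne_zero this
    · intro σ i hi hσ
      exact (Q.no_gen_iff hs i σ).1 (fun k => (hm (i + 1) (by omega) k).elim) hσ
  · rintro ⟨hd, h⟩
    refine ⟨mkGFR E U hU h0 hE Q, ?_⟩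
    intro i hi
    change (Q.S i).m = 0
    obtain ⟨i, rfl⟩ : ∃ i', i = i' + 1 := ⟨i - 1, by omega⟩
    by_contra hne
    have k : Fin (Q.S (i + 1)).m := ⟨0, Nat.pos_of_ne_zero hne⟩
    exact (Q.no_gen_iff hs i ((Q.S (i + 1)).sg k)).2 (fun hle => h _ _ (by omega) hle) k rfl

lemma edges_nonempty (C : Clutter n) (h : idealHeight (C.edgeIdeal K) = 1) :
    C.edges.Nonempty := by
  by_contra hne
  rw [Finset.not_nonempty_iff_eq_empty] at hne
  have hI : C.edgeIdeal K = ⊥ := by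
    simp [Clutter.edgeIdeal, hne]
  have hle : idealHeight (C.edgeIdeal K) ≤ 0 := by
    let p : PrimeSpectrum (MvPolynomial (Fin n) K) := ⟨⊥, Ideal.isPrime_bot⟩
    have hp : Order.height p = 0 := by
      rw [Order.height_eq_zero]
      intro q _
      exact (bot_le : (⊥ : Ideal _) ≤ q.asIdeal)
    refine (iInf₂_le p (by rw [hI])).trans ?_
    exact hp.le
  rw [h] at hle
  exact absurd hle (by decide)

lemma empty_not_mem (C : Clutter n) (h : idealHeight (C.edgeIdeal K) = 1) : ∅ ∉ C.edges := by
  intro hm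
  have hI : C.edgeIdeal K = ⊤ := by
    rw [Ideal.eq_top_iff_one]
    exact Ideal.subset_span ⟨∅, hm, by simp [edgeMonomial]⟩
  have : idealHeight (C.edgeIdeal K) = ⊤ := by
    rw [eq_top_iff]
    refine le_iInf₂ ?_
    intro p hp
    rw [hI, top_le_iff] at hp
    exact absurd hp p.isPrime.ne_top
  rw [this] at h
  exact absurd h (by decide)

end FinalSec

/-- If `ht(I(C)) = 1`, then `reg(R/I(C)) = pd(R/I_c(C)) - 1`. -/
theorem stmt_0 (K : Type) [Field K] {n : ℕ} (C : Clutter n)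
    (h : idealHeight (C.edgeIdeal K) = 1) :
    regR (C.edgeIdeal K) = pdR (C.coverIdeal K) - 1 := by
  classical
  obtain ⟨e0, he0⟩ := edges_nonempty C h
  have hemp := empty_not_mem C h
  let U : Finset (Fin n) → Prop := fun τ => ∃ e ∈ (C.edges : Set (Finset (Fin n))), e ⊆ τ
  have hU : ∀ σ τ, σ ⊆ τ → U σ → U τ := fun σ τ hst ⟨e, he, hs⟩ => ⟨e, he, hs.trans hst⟩
  have hU0 : ¬ U ∅ := by
    rintro ⟨e, he, hs⟩
    rw [Finset.subset_empty] at hs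
    subst hs
    exact hemp he
  have hU1 : U Finset.univ := ⟨e0, he0, Finset.subset_univ _⟩
  let L : Finset (Fin n) → Prop := fun γ => ¬ U γᶜ
  have hL : ∀ σ τ, σ ⊆ τ → L σ → L τ := by
    intro σ τ hst h1 h2
    exact h1 (hU _ _ (Finset.compl_subset_compl.2 hst) h2)
  have hL0 : ¬ L ∅ := by
    intro h1
    apply h1
    rw [Finset.compl_empty]
    exact hU1
  have hL1 : L Finset.univ := by
    intro h1
    rw [Finset.compl_univ] at h1
    exact hU0 h1
  have hLc : ∀ τ, L τ ↔ C.IsVertexCover τ := by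
    intro τ
    constructor
    · intro h1 e he
      by_contra h2
      push Not at h2
      exact h1 ⟨e, he, fun i hi => Finset.mem_compl.2 (h2 i hi)⟩
    · rintro h1 ⟨e, he, hs⟩
      obtain ⟨i, hi, hi'⟩ := h1 e he
      exact Finset.mem_compl.1 (hs hi) hi'
  have hLE : ∀ τ, L τ ↔ ∃ e ∈ {S : Finset (Fin n) | C.IsVertexCover S}, e ⊆ τ := by
    intro τ
    constructor
    · intro h1
      exact ⟨τ, (hLc τ).1 h1, Finset.Subset.refl _⟩
    · rintro ⟨e, he, hs⟩
      exact hL _ _ hs ((hLc e).2 he)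
  have hs : IsSign (sgn0 K (n := n)) := sgn0_isSign
  have hreg := reg_iff (K := K) (C.edges : Set (Finset (Fin n))) U hU hU0 (fun _ => Iff.rfl) hs
  have hpd := pd_iff (K := K) {S : Finset (Fin n) | C.IsVertexCover S} L hL hL0 hL1 hLE
    (sdual_isSign hs)
  have hR : regR (C.edgeIdeal K) = sInf {r : ℕ | ∀ σ j, r + 1 < j →
      Van (sgn0 K (n := n)) (NN K U) ∅ σ j} := by
    rw [regR]
    congr 1
    ext r
    exact hreg r
  have hP : pdR (C.coverIdeal K) = sInf {d : ℕ | 1 ≤ d ∧ ∀ σ j, d < j →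
      Van (sgn0 K (n := n)) (NN K U) ∅ σ j} := by
    rw [pdR]
    congr 1
    ext d
    refine (hpd d).trans ?_
    constructor
    · rintro ⟨h1, h2⟩
      exact ⟨h1, (van_AB hs U hU d h1).1 h2⟩
    · rintro ⟨h1, h2⟩
      exact ⟨h1, (van_AB hs U hU d h1).2 h2⟩
  rw [hR, hP]
  set A := {r : ℕ | ∀ σ j, r + 1 < j → Van (sgn0 K (n := n)) (NN K U) ∅ σ j} with hA
  set B := {d : ℕ | 1 ≤ d ∧ ∀ σ j, d < j → Van (sgn0 K (n := n)) (NN K U) ∅ σ j} with hB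
  have hAne : A.Nonempty := ⟨n, fun σ j hj => van_big _ _ _ _ _ (by
    have := Finset.card_le_univ σ
    simp at this
    omega)⟩
  have h1 := Nat.sInf_mem hAne
  have h2 : sInf A + 1 ∈ B := ⟨by omega, h1⟩
  have h3 := Nat.sInf_mem ⟨_, h2⟩
  have h4 := Nat.sInf_le h2
  have h5 : 1 ≤ sInf B := h3.1
  have h6 : sInf B - 1 ∈ A := by
    intro σ j hj
    exact h3.2 σ j (by omega)
  have h7 := Nat.sInf_le h6
  omega
end

section
/- Let C be a clutter with edge ideal I(C) ⊂ R = K[x_1,...,x_n]. If D = C[S] is the induced subclutter of C on a subset S of the vertices, then reg(R/I(D)) ≤ reg(R/I(C)). -/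
open MvPolynomial

/-- The induced subclutter `C[S]` on a set `S` of vertices: its edges are precisely the
edges of `C` contained in `S`. -/
def Clutter.induced {n : ℕ} (C : Clutter n) (S : Finset (Fin n)) : Clutter n where
  edges := C.edges.filter (fun e => e ⊆ S)
  antichain := fun e he f hf hef =>
    C.antichain e (Finset.mem_filter.mp he).1 f (Finset.mem_filter.mp hf).1 hef


open Matrix

namespace Reg

section lift

variable {R : Type} [CommRing R]

theorem dot_mem {B : Type} [Fintype B] {I : Ideal R} (v w : B → R) (h : ∀ b, w b ∈ I) :
    v ⬝ᵥ w ∈ I :=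
  Ideal.sum_mem _ fun b _ => I.mul_mem_left _ (h b)

theorem of_row {B B' R : Type} (f : B → B' → R) (b : B) : (Matrix.of f) b = f b := rfl

/-- Lifting lemma: constructs comparison maps and homotopies at once. -/
theorem lift {B B' : Type} [Fintype B] [Fintype B'] (deg : B → ℕ) (D : Matrix B B R)
    (hdeg : ∀ b c, D b c ≠ 0 → deg c < deg b) (D' : Matrix B' B' R) (a' : B' → R) (I' : Ideal R)
    (T : Matrix B B' R) (s : B → R) (ε : R) (hDD : D * D = 0)
    (hT : ε • (D * T) + T * D' = 0)
    (hs : ∀ b, ε * (D *ᵥ s) b + (T *ᵥ a') b ∈ I')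
    (W N : B → (B' → R) → Prop)
    (hW : ∀ (Φ : Matrix B B' R) b, (∀ c, deg c < deg b → N c (Φ c)) →
      W b (ε • (D b ᵥ* Φ) + T b))
    (solv : ∀ b w, W b w → w ᵥ* D' = 0 → w ⬝ᵥ a' ∈ I' →
      ∃ x, N b x ∧ x ᵥ* D' = w ∧ x ⬝ᵥ a' - s b ∈ I') :
    ∃ Φ : Matrix B B' R, Φ * D' = ε • (D * Φ) + T ∧ (∀ b, (Φ *ᵥ a') b - s b ∈ I') ∧
      ∀ b, N b (Φ b) := by
  classical
  have key : ∀ M : ℕ, ∃ Φ : Matrix B B' R, ∀ b, deg b < M →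
      (N b (Φ b) ∧ Φ b ᵥ* D' = ε • (D b ᵥ* Φ) + T b ∧ Φ b ⬝ᵥ a' - s b ∈ I') := by
    intro M
    induction M with
    | zero => exact ⟨0, fun b hb => absurd hb (by omega)⟩
    | succ M ih =>
      obtain ⟨Φ, hΦ⟩ := ih
      have step : ∀ b, deg b = M → ∃ x, N b x ∧ x ᵥ* D' = ε • (D b ᵥ* Φ) + T b ∧
          x ⬝ᵥ a' - s b ∈ I' := by
        intro b hb
        apply solv
        · apply hW
          intro c hc
          exact (hΦ c (by omega)).1
        · have h1 : D b ᵥ* (Φ * D') = D b ᵥ* (ε • (D * Φ) + T) := by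
            ext j
            simp only [vecMul, dotProduct]
            refine Finset.sum_congr rfl fun c _ => ?_
            by_cases h0 : D b c = 0
            · simp [h0]
            · have := (hΦ c (by have := hdeg b c h0; omega)).2.1
              have h2 := congrFun this j
              congr 1
          have h3 : D b ᵥ* (D * Φ) = 0 := by
            have : D b ᵥ* D = (D * D) b := rfl
            rw [← vecMul_vecMul, this, hDD]
            exact zero_vecMul _
          have h4 := congrFun hT b
          have h5 : D b ᵥ* T = (D * T) b := rfl
          have h6 : T b ᵥ* D' = (T * D') b := rfl
          rw [add_vecMul, smul_vecMul, vecMul_vecMul, h1, vecMul_add, vecMul_smul, h3, h5, h6,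
            smul_zero, zero_add]
          exact h4
        · have h1 : D b ⬝ᵥ (Φ *ᵥ a') - D b ⬝ᵥ s ∈ I' := by
            rw [← dotProduct_sub]
            refine Ideal.sum_mem _ fun c _ => ?_
            by_cases h0 : D b c = 0
            · simp [h0]
            · exact I'.mul_mem_left _ (hΦ c (by have := hdeg b c h0; omega)).2.2
          have h2 := hs b
          have h3 : (D *ᵥ s) b = D b ⬝ᵥ s := rfl
          have h4 : (T *ᵥ a') b = T b ⬝ᵥ a' := rfl
          rw [h3, h4] at h2
          rw [add_dotProduct, smul_dotProduct, ← dotProduct_mulVec, smul_eq_mul]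
          have := I'.add_mem (I'.mul_mem_left ε h1) h2
          convert this using 1
          ring
      choose f hf using step
      refine ⟨Matrix.of fun b => if h : deg b = M then f b h else Φ b, ?_⟩
      intro b hb
      have e : ∀ b, deg b ≤ M → D b ᵥ* (Matrix.of fun b => if h : deg b = M then f b h else Φ b)
          = D b ᵥ* Φ := by
        intro b hb
        ext j
        simp only [vecMul, dotProduct]
        refine Finset.sum_congr rfl fun c _ => ?_
        by_cases h0 : D b c = 0
        · simp [h0]
        · have := hdeg b c h0
          have h1 : deg c ≠ M := by omega
          simp [h1]
      have e' := e b (by omega)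
      by_cases h : deg b = M
      · have := hf b h
        rw [← e'] at this
        simpa [h, -Matrix.of_apply, Reg.of_row] using this
      · have := hΦ b (by omega)
        rw [← e'] at this
        simpa [h, -Matrix.of_apply, Reg.of_row] using this
  obtain ⟨Φ, hΦ⟩ := key (Finset.univ.sup deg + 1)
  have h : ∀ b, deg b < Finset.univ.sup deg + 1 := fun b =>
    Nat.lt_succ_of_le (Finset.le_sup (Finset.mem_univ b))
  exact ⟨Φ, funext fun b => (hΦ b (h b)).2.1, fun b => (hΦ b (h b)).2.2, fun b => (hΦ b (h b)).1⟩

end lift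

section defs

variable {n : ℕ} {K : Type} [Field K]

structure PreRes (K : Type) [Field K] (S : Finset (Fin n)) (I : Ideal (MvPolynomial (Fin n) K))
    (B : Type) [Fintype B] where
  deg : B → ℕ
  tw : B → ℕ
  D : Matrix B B (MvPolynomial (Fin n) K)
  a : B → MvPolynomial (Fin n) K
  hD : ∀ b c μ, coeff μ (D b c) ≠ 0 →
    deg b = deg c + 1 ∧ μ.degree + tw c = tw b ∧ μ.support ⊆ S
  ha : ∀ b μ, coeff μ (a b) ≠ 0 → deg b = 0 ∧ μ.degree = tw b ∧ μ.support ⊆ S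
  DD : D * D = 0
  Da : ∀ b, (D *ᵥ a) b ∈ I

structure PreRes.IsRes {S : Finset (Fin n)} {I : Ideal (MvPolynomial (Fin n) K)}
    {B : Type} [Fintype B] (P : PreRes K S I B) : Prop where
  ex : ∀ x : B → MvPolynomial (Fin n) K, x ᵥ* P.D = 0 → x ⬝ᵥ P.a ∈ I → ∃ y, y ᵥ* P.D = x
  surj : ∃ x : B → MvPolynomial (Fin n) K, x ᵥ* P.D = 0 ∧ 1 - x ⬝ᵥ P.a ∈ I

theorem PreRes.D_deg {S : Finset (Fin n)} {I : Ideal (MvPolynomial (Fin n) K)}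
    {B : Type} [Fintype B] (P : PreRes K S I B) (b c : B) (h : P.D b c ≠ 0) :
    P.deg b = P.deg c + 1 := by
  obtain ⟨μ, hμ⟩ := MvPolynomial.ne_zero_iff.1 h
  exact (P.hD b c μ hμ).1

theorem PreRes.a_deg {S : Finset (Fin n)} {I : Ideal (MvPolynomial (Fin n) K)}
    {B : Type} [Fintype B] (P : PreRes K S I B) (b : B) (h : P.a b ≠ 0) :
    P.deg b = 0 := by
  obtain ⟨μ, hμ⟩ := MvPolynomial.ne_zero_iff.1 h
  exact (P.ha b μ hμ).1

theorem IsRes.solve {S : Finset (Fin n)} {I : Ideal (MvPolynomial (Fin n) K)}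
    {B : Type} [Fintype B] {P : PreRes K S I B} (hP : P.IsRes) (w : B → MvPolynomial (Fin n) K)
    (s : MvPolynomial (Fin n) K) (h1 : w ᵥ* P.D = 0) (h2 : w ⬝ᵥ P.a ∈ I) :
    ∃ x, x ᵥ* P.D = w ∧ x ⬝ᵥ P.a - s ∈ I := by
  obtain ⟨y, hy⟩ := hP.ex w h1 h2
  obtain ⟨z, hz, hz'⟩ := hP.surj
  refine ⟨y + (s - y ⬝ᵥ P.a) • z, ?_, ?_⟩
  · rw [add_vecMul, smul_vecMul, hz, hy]; simp
  · rw [add_dotProduct, smul_dotProduct, smul_eq_mul]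
    have := I.mul_mem_left (-(s - y ⬝ᵥ P.a)) hz'
    convert this using 1
    ring

/-- keep only the monomials satisfying a predicate -/
noncomputable def keep (Q : (Fin n →₀ ℕ) → Prop) (p : MvPolynomial (Fin n) K) :
    MvPolynomial (Fin n) K := by
  classical
  exact ∑ μ ∈ p.support, if Q μ then monomial μ (coeff μ p) else 0

open Classical in
theorem coeff_keep (Q : (Fin n →₀ ℕ) → Prop) (p : MvPolynomial (Fin n) K) (μ : Fin n →₀ ℕ) :
    coeff μ (keep Q p) = if Q μ then coeff μ p else 0 := by
  unfold keep
  rw [coeff_sum]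
  rw [Finset.sum_eq_single μ]
  · split_ifs <;> simp
  · intro b _ hb
    split_ifs <;> simp [coeff_monomial, hb]
  · intro h
    have : coeff μ p = 0 := by simpa using h
    split_ifs <;> simp [this]

theorem keep_mul (Q Q' : (Fin n →₀ ℕ) → Prop) (p q : MvPolynomial (Fin n) K)
    (h : ∀ μ ν, coeff ν q ≠ 0 → (Q μ ↔ Q' (μ + ν))) :
    keep Q p * q = keep Q' (p * q) := by
  classical
  ext μ
  have e : ∀ (s : Finset ((Fin n →₀ ℕ) × (Fin n →₀ ℕ))) (f : (Fin n →₀ ℕ) × (Fin n →₀ ℕ) → K),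
      (if Q' μ then ∑ x ∈ s, f x else 0) = ∑ x ∈ s, if Q' μ then f x else 0 := by
    intro s f
    split_ifs <;> simp
  rw [coeff_keep, coeff_mul, coeff_mul, e]
  refine Finset.sum_congr rfl ?_
  intro x hx
  rw [coeff_keep]
  by_cases h0 : coeff x.2 q = 0
  · simp [h0]
  · have := h x.1 x.2 h0
    rw [Finset.HasAntidiagonal.mem_antidiagonal.1 hx] at this
    by_cases hq : Q' μ
    · simp [hq, this.2 hq]
    · have : ¬ Q x.1 := fun h => hq (this.1 h)
      simp [hq, this]

theorem keep_sum (Q : (Fin n →₀ ℕ) → Prop) {ι : Type} (s : Finset ι)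
    (f : ι → MvPolynomial (Fin n) K) :
    keep Q (∑ i ∈ s, f i) = ∑ i ∈ s, keep Q (f i) := by
  classical
  ext μ
  simp only [coeff_keep, coeff_sum]
  split_ifs <;> simp

theorem keep_sub (Q : (Fin n →₀ ℕ) → Prop) (p q : MvPolynomial (Fin n) K) :
    keep Q (p - q) = keep Q p - keep Q q := by
  classical
  ext μ
  simp only [coeff_keep, coeff_sub]
  split_ifs <;> simp

theorem keep_self (Q : (Fin n →₀ ℕ) → Prop) (p : MvPolynomial (Fin n) K)
    (h : ∀ μ, coeff μ p ≠ 0 → Q μ) : keep Q p = p := by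
  classical
  ext μ
  rw [coeff_keep]
  split_ifs with h1
  · rfl
  · by_contra h2
    exact h1 (h μ (Ne.symm h2))

theorem keep_false (Q : (Fin n →₀ ℕ) → Prop) (p : MvPolynomial (Fin n) K)
    (h : ∀ μ, ¬ Q μ) : keep Q p = 0 := by
  classical
  ext μ
  rw [coeff_keep]
  simp [h]

end defs

section cone

variable {n : ℕ} {K : Type} [Field K]

theorem coeff_mul_ne {p q : MvPolynomial (Fin n) K} {μ : Fin n →₀ ℕ} (h : coeff μ (p * q) ≠ 0) :
    ∃ μ₁ μ₂, μ₁ + μ₂ = μ ∧ coeff μ₁ p ≠ 0 ∧ coeff μ₂ q ≠ 0 := by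
  classical
  rw [coeff_mul] at h
  obtain ⟨x, hx, hx'⟩ := Finset.exists_ne_zero_of_sum_ne_zero h
  exact ⟨x.1, x.2, Finset.HasAntidiagonal.mem_antidiagonal.1 hx, left_ne_zero_of_mul hx', right_ne_zero_of_mul hx'⟩

theorem coeff_sum_ne {ι : Type} {s : Finset ι} {f : ι → MvPolynomial (Fin n) K}
    {μ : Fin n →₀ ℕ} (h : coeff μ (∑ i ∈ s, f i) ≠ 0) : ∃ i ∈ s, coeff μ (f i) ≠ 0 := by
  rw [coeff_sum] at h
  exact Finset.exists_ne_zero_of_sum_ne_zero h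

theorem supp_add {S : Finset (Fin n)} (μ ν : Fin n →₀ ℕ) :
    (μ + ν).support ⊆ S ↔ μ.support ⊆ S ∧ ν.support ⊆ S := by
  classical
  have : (μ + ν).support = μ.support ∪ ν.support := by
    ext i
    simp only [Finsupp.mem_support_iff, Finsupp.add_apply, Finset.mem_union]
    omega
  rw [this, Finset.union_subset_iff]

theorem compare {S : Finset (Fin n)} {I : Ideal (MvPolynomial (Fin n) K)} {B B' : Type}
    [Fintype B] [Fintype B'] (P : PreRes K S I B) (P' : PreRes K S I B') (hP' : P'.IsRes)
    (hI : ∀ (Q : (Fin n →₀ ℕ) → Prop) (p : MvPolynomial (Fin n) K), p ∈ I → keep Q p ∈ I) :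
    ∃ Φ : Matrix B B' (MvPolynomial (Fin n) K), Φ * P'.D = P.D * Φ ∧
      (∀ b, (Φ *ᵥ P'.a) b - P.a b ∈ I) ∧
      ∀ b j μ, coeff μ (Φ b j) ≠ 0 →
        P'.deg j = P.deg b ∧ μ.degree + P'.tw j = P.tw b ∧ μ.support ⊆ S := by
  have := lift P.deg P.D (fun b c h => by have := P.D_deg b c h; omega) P'.D P'.a I 0 P.a 1 P.DD
    (by simp) (by simpa using P.Da)
    (fun b w => ∀ j μ, coeff μ (w j) ≠ 0 →
        P.deg b = P'.deg j + 1 ∧ μ.degree + P'.tw j = P.tw b ∧ μ.support ⊆ S)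
    (fun b w => ∀ j μ, coeff μ (w j) ≠ 0 →
        P'.deg j = P.deg b ∧ μ.degree + P'.tw j = P.tw b ∧ μ.support ⊆ S) ?_ ?_
  · simpa using this
  · intro Φ b h j μ hμ
    have hμ' : coeff μ (∑ c, P.D b c * Φ c j) ≠ 0 := by
      simpa [vecMul, dotProduct] using hμ
    obtain ⟨c, -, hc⟩ := coeff_sum_ne hμ'
    obtain ⟨μ₁, μ₂, rfl, h1, h2⟩ := coeff_mul_ne hc
    have h3 := P.hD b c μ₁ h1
    have h4 := h c (by omega) j μ₂ h2
    rw [supp_add, map_add]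
    exact ⟨by omega, by omega, h3.2.2, h4.2.2⟩
  · intro b w hW h1 h2
    obtain ⟨x, hx, hx'⟩ := IsRes.solve hP' w (P.a b) h1 h2
    refine ⟨fun j => keep (fun μ => P'.deg j = P.deg b ∧ μ.degree + P'.tw j = P.tw b ∧
      μ.support ⊆ S) (x j), ?_, ?_, ?_⟩
    · intro j μ hμ
      classical
      rw [coeff_keep] at hμ
      by_contra h
      rw [if_neg h] at hμ
      exact hμ rfl
    · ext1 c
      rw [← keep_self (fun μ => P.deg b = P'.deg c + 1 ∧ μ.degree + P'.tw c = P.tw b ∧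
        μ.support ⊆ S) (w c) (hW c), ← hx]
      simp only [vecMul, dotProduct]
      rw [keep_sum]
      refine Finset.sum_congr rfl fun j _ => ?_
      apply keep_mul
      intro μ ν hν
      have := P'.hD j c ν hν
      rw [supp_add, map_add]
      constructor
      · rintro ⟨h1, h2, h3⟩
        exact ⟨by omega, by omega, h3, this.2.2⟩
      · rintro ⟨h1, h2, h3, _⟩
        exact ⟨by omega, by omega, h3⟩
    · have := hI (fun μ => P.deg b = 0 ∧ μ.degree = P.tw b ∧ μ.support ⊆ S) _ hx'
      rw [keep_sub, keep_self _ (P.a b) (P.ha b)] at this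
      convert this using 2
      simp only [dotProduct]
      rw [keep_sum]
      refine Finset.sum_congr rfl fun j _ => ?_
      apply keep_mul
      intro μ ν hν
      have := P'.ha j ν hν
      rw [supp_add, map_add]
      constructor
      · rintro ⟨h1, h2, h3⟩
        exact ⟨by omega, by omega, h3, this.2.2⟩
      · rintro ⟨h1, h2, h3, _⟩
        exact ⟨by omega, by omega, h3⟩

theorem cone {S : Finset (Fin n)} {I' J I : Ideal (MvPolynomial (Fin n) K)} {B₁ B₂ : Type}
    [Fintype B₁] [Fintype B₂] (P₁ : PreRes K S J B₁) (P₂ : PreRes K S I' B₂)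
    (h₁ : P₁.IsRes) (h₂ : P₂.IsRes) (m : MvPolynomial (Fin n) K) (d : ℕ)
    (hm : ∀ μ, coeff μ m ≠ 0 → μ.degree = d ∧ μ.support ⊆ S)
    (hJ : ∀ p, p ∈ J ↔ m * p ∈ I') (hI : ∀ p, p ∈ I ↔ ∃ r, p - m * r ∈ I')
    (hk : ∀ (Q : (Fin n →₀ ℕ) → Prop) (p : MvPolynomial (Fin n) K), p ∈ I' → keep Q p ∈ I') :
    ∃ P : PreRes K S I (B₁ ⊕ B₂), P.IsRes := by
  let P₁' : PreRes K S I' B₁ :=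
    { deg := P₁.deg
      tw := fun b => P₁.tw b + d
      D := P₁.D
      a := m • P₁.a
      hD := by
        intro b c μ h
        have := P₁.hD b c μ h
        exact ⟨this.1, by omega, this.2.2⟩
      ha := by
        intro b μ h
        obtain ⟨μ₁, μ₂, rfl, h1, h2⟩ := coeff_mul_ne h
        have := hm _ h1
        have h3 := P₁.ha _ _ h2
        rw [supp_add, map_add]
        exact ⟨h3.1, by omega, this.2, h3.2.2⟩
      DD := P₁.DD
      Da := by
        intro b
        rw [mulVec_smul]
        exact (hJ _).1 (P₁.Da b) }
  obtain ⟨Φ, hΦ, hΦa, hΦh⟩ := compare P₁' P₂ h₂ hk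
  change Φ * P₂.D = P₁.D * Φ at hΦ
  have hΦa' : ∀ x : B₁ → MvPolynomial (Fin n) K, (x ᵥ* Φ) ⬝ᵥ P₂.a - m * (x ⬝ᵥ P₁.a) ∈ I' := by
    intro x
    have := dot_mem x _ hΦa
    have e : x ⬝ᵥ (fun b => (Φ *ᵥ P₂.a) b - P₁'.a b) = x ⬝ᵥ (Φ *ᵥ P₂.a) - x ⬝ᵥ P₁'.a :=
      dotProduct_sub x _ _
    rw [e, dotProduct_mulVec] at this
    change _ - x ⬝ᵥ (m • P₁.a) ∈ I' at this
    rwa [dotProduct_smul, smul_eq_mul] at this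
  have hI'I : ∀ p ∈ I', p ∈ I := fun p hp => (hI p).2 ⟨0, by simpa using hp⟩
  have hvD : ∀ x : B₁ ⊕ B₂ → MvPolynomial (Fin n) K,
      x ᵥ* (fromBlocks (-P₁.D) Φ 0 P₂.D) = Sum.elim (-((x ∘ Sum.inl) ᵥ* P₁.D))
        ((x ∘ Sum.inl) ᵥ* Φ + (x ∘ Sum.inr) ᵥ* P₂.D) := by
    intro x
    rw [vecMul_fromBlocks, vecMul_neg, vecMul_zero, add_zero]
  have hva : ∀ x : B₁ ⊕ B₂ → MvPolynomial (Fin n) K,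
      x ⬝ᵥ (Sum.elim 0 P₂.a) = (x ∘ Sum.inr) ⬝ᵥ P₂.a := by
    intro x
    simp [dotProduct]
  refine ⟨{ deg := Sum.elim (fun b => P₁.deg b + 1) P₂.deg
            tw := Sum.elim (fun b => P₁.tw b + d) P₂.tw
            D := fromBlocks (-P₁.D) Φ 0 P₂.D
            a := Sum.elim 0 P₂.a
            hD := ?_, ha := ?_, DD := ?_, Da := ?_ }, ?_, ?_⟩
  · rintro (b | b) (c | c) μ h
    · have := P₁.hD b c μ (by simpa using h)
      exact ⟨by simp; omega, by simp; omega, this.2.2⟩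
    · have := hΦh b c μ (by simpa using h)
      change P₂.deg c = P₁.deg b ∧ μ.degree + P₂.tw c = P₁.tw b + d ∧ _ at this
      exact ⟨by simp; omega, by simp; omega, this.2.2⟩
    · simp at h
    · exact P₂.hD b c μ (by simpa using h)
  · rintro (b | b) μ h
    · simp at h
    · exact P₂.ha b μ (by simpa using h)
  · rw [fromBlocks_multiply, hΦ]
    simp [P₁.DD, P₂.DD]
  · rintro (b | b)
    · have := hΦa b
      have e : (fromBlocks (-P₁.D) Φ 0 P₂.D *ᵥ Sum.elim 0 P₂.a) (Sum.inl b) =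
          (Φ *ᵥ P₂.a) b := by
        simp [fromBlocks_mulVec]
      rw [e, hI]
      exact ⟨P₁.a b, this⟩
    · have e : (fromBlocks (-P₁.D) Φ 0 P₂.D *ᵥ Sum.elim 0 P₂.a) (Sum.inr b) =
          (P₂.D *ᵥ P₂.a) b := by
        simp [fromBlocks_mulVec]
      rw [e]
      exact hI'I _ (P₂.Da b)
  · intro x hx hxa
    simp only at hx hxa ⊢
    rw [hvD] at hx
    rw [hva] at hxa
    set x₁ := x ∘ Sum.inl with hx₁
    set x₂ := x ∘ Sum.inr with hx₂
    have e1 : x₁ ᵥ* P₁.D = 0 := by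
      ext1 b
      simpa using congrFun hx (Sum.inl b)
    have e2 : x₁ ᵥ* Φ + x₂ ᵥ* P₂.D = 0 := by
      ext1 b
      simpa using congrFun hx (Sum.inr b)
    obtain ⟨y₁, hy₁⟩ := h₁.ex x₁ e1 (by
      rw [hJ]
      have h3 := hΦa' x₁
      have h4 : (x₂ ᵥ* P₂.D) ⬝ᵥ P₂.a ∈ I' := by
        rw [← dotProduct_mulVec]
        exact dot_mem _ _ P₂.Da
      have h5 : (x₁ ᵥ* Φ) ⬝ᵥ P₂.a + (x₂ ᵥ* P₂.D) ⬝ᵥ P₂.a = 0 := by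
        rw [← add_dotProduct, e2, zero_dotProduct]
      have := I'.neg_mem (I'.add_mem h3 h4)
      convert this using 1
      linear_combination h5)
    obtain ⟨r, hr⟩ := (hI _).1 hxa
    obtain ⟨z, hz, hza⟩ := h₁.surj
    obtain ⟨y₂, hy₂⟩ := h₂.ex (x₂ + (y₁ - (r + y₁ ⬝ᵥ P₁.a) • z) ᵥ* Φ) (by
      rw [add_vecMul, vecMul_vecMul, hΦ, ← vecMul_vecMul, sub_vecMul, hy₁, smul_vecMul, hz,
        smul_zero, sub_zero, add_comm]
      exact e2) (by
      rw [add_dotProduct]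
      have h3 := hΦa' (y₁ - (r + y₁ ⬝ᵥ P₁.a) • z)
      have h4 := (hJ _).1 hza
      have := I'.add_mem (I'.add_mem hr h3) (I'.mul_mem_left (r + y₁ ⬝ᵥ P₁.a) h4)
      convert this using 1
      rw [sub_dotProduct, smul_dotProduct, smul_eq_mul]
      ring)
    refine ⟨Sum.elim (-(y₁ - (r + y₁ ⬝ᵥ P₁.a) • z)) y₂, ?_⟩
    rw [hvD, Sum.elim_comp_inl, Sum.elim_comp_inr, hy₂, neg_vecMul, neg_vecMul, neg_neg, sub_vecMul,
      hy₁, smul_vecMul, hz, smul_zero, sub_zero]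
    ext1 b
    rcases b with b | b
    · simp [hx₁]
    · simp [hx₂]
  · obtain ⟨z, hz, hza⟩ := h₂.surj
    refine ⟨Sum.elim 0 z, ?_, ?_⟩
    · simp only
      rw [hvD, Sum.elim_comp_inl, Sum.elim_comp_inr, hz]
      ext1 b
      rcases b with b | b <;> simp
    · simp only
      rw [hva, Sum.elim_comp_inr]
      exact hI'I _ hza

noncomputable def EI (K : Type) [Field K] (E : Finset (Finset (Fin n))) :
    Ideal (MvPolynomial (Fin n) K) :=
  Ideal.span (edgeMonomial K '' (E : Set (Finset (Fin n))))

theorem edgeMonomial_eq (e : Finset (Fin n)) :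
    edgeMonomial K e = monomial (∑ i ∈ e, Finsupp.single i 1) 1 := by
  rw [monomial_sum_one]
  rfl

theorem ind_apply (e : Finset (Fin n)) (j : Fin n) [Decidable (j ∈ e)] :
    (∑ i ∈ e, Finsupp.single i 1 : Fin n →₀ ℕ) j = if j ∈ e then 1 else 0 := by
  classical
  rw [Finsupp.finsetSum_apply]
  simp [Finsupp.single_apply]

theorem mem_EI (E : Finset (Finset (Fin n))) (p : MvPolynomial (Fin n) K) :
    p ∈ EI K E ↔ ∀ μ, coeff μ p ≠ 0 → ∃ e ∈ E, ∀ i ∈ e, μ i ≠ 0 := by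
  classical
  have : edgeMonomial K '' (E : Set (Finset (Fin n))) = (fun s => monomial s (1 : K)) ''
      ((fun e : Finset (Fin n) => ∑ i ∈ e, Finsupp.single i 1) '' (E : Set (Finset (Fin n)))) := by
    rw [Set.image_image]
    exact Set.image_congr fun e _ => edgeMonomial_eq e
  unfold EI
  rw [this, mem_ideal_span_monomial_image]
  simp only [mem_support_iff, Set.mem_image, Finset.mem_coe, exists_exists_and_eq_and]
  refine forall₂_congr fun μ _ => exists_congr fun e => and_congr_right fun _ => ?_
  rw [Finsupp.le_def]
  refine forall_congr' fun i => ?_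
  rw [ind_apply]
  split_ifs with h
  · simp only [h, forall_const]; omega
  · simp [h]

theorem EI_keep (E : Finset (Finset (Fin n))) (Q : (Fin n →₀ ℕ) → Prop)
    (p : MvPolynomial (Fin n) K) (h : p ∈ EI K E) : keep Q p ∈ EI K E := by
  classical
  rw [mem_EI] at h ⊢
  intro μ hμ
  rw [coeff_keep] at hμ
  apply h
  intro h0
  simp [h0] at hμ

theorem EI_colon [DecidableEq (Fin n)] (E : Finset (Finset (Fin n))) (f : Finset (Fin n))
    (p : MvPolynomial (Fin n) K) :
    p ∈ EI K (E.image (· \ f)) ↔ edgeMonomial K f * p ∈ EI K E := by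
  rw [mem_EI, mem_EI]
  have e : ∀ (μ : Fin n →₀ ℕ) (g : Finset (Fin n)), (∀ i ∈ g \ f, μ i ≠ 0) ↔
      ∀ i ∈ g, ((∑ i ∈ f, Finsupp.single i 1 : Fin n →₀ ℕ) + μ) i ≠ 0 := by
    intro μ g
    refine forall_congr' fun i => ?_
    rw [Finsupp.add_apply, ind_apply, Finset.mem_sdiff]
    split_ifs with h <;> simp [h]
  rw [edgeMonomial_eq]
  constructor
  · intro h μ hμ
    obtain ⟨μ₁, μ₂, rfl, h1, h2⟩ := coeff_mul_ne hμ
    rw [coeff_monomial] at h1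
    have h3 : (∑ i ∈ f, Finsupp.single i 1 : Fin n →₀ ℕ) = μ₁ := by
      by_contra h3
      rw [if_neg h3] at h1
      exact h1 rfl
    obtain ⟨g', hg', hg⟩ := h μ₂ h2
    obtain ⟨g, hgE, rfl⟩ := Finset.mem_image.1 hg'
    exact ⟨g, hgE, h3 ▸ (e μ₂ g).1 hg⟩
  · intro h μ hμ
    obtain ⟨g, hgE, hg⟩ := h ((∑ i ∈ f, Finsupp.single i 1 : Fin n →₀ ℕ) + μ) (by
      rw [coeff_monomial_mul]; simpa using hμ)
    exact ⟨g \ f, Finset.mem_image_of_mem _ hgE, (e μ g).2 hg⟩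

theorem EI_insert [DecidableEq (Finset (Fin n))] (E : Finset (Finset (Fin n)))
    (f : Finset (Fin n)) (p : MvPolynomial (Fin n) K) :
    p ∈ EI K (insert f E) ↔ ∃ r, p - edgeMonomial K f * r ∈ EI K E := by
  unfold EI
  rw [Finset.coe_insert, Set.image_insert_eq, Ideal.mem_span_insert]
  constructor
  · rintro ⟨r, z, hz, rfl⟩
    exact ⟨r, by convert hz using 1; ring⟩
  · rintro ⟨r, hr⟩
    exact ⟨r, _, hr, by ring⟩

theorem exists_res (S : Finset (Fin n)) : ∀ (N : ℕ) (E : Finset (Finset (Fin n))),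
    E.card ≤ N → (∀ e ∈ E, e ⊆ S) →
    ∃ (B : Type) (_ : Fintype B) (P : PreRes K S (EI K E) B), P.IsRes := by
  classical
  have base : ∃ (B : Type) (_ : Fintype B) (P : PreRes K S (EI K (∅ : Finset (Finset (Fin n)))) B),
      P.IsRes := by
    have hE : EI K (∅ : Finset (Finset (Fin n))) = ⊥ := by simp [EI]
    refine ⟨Unit, inferInstance,
      { deg := fun _ => 0
        tw := fun _ => 0
        D := 0
        a := 1
        hD := ?_
        ha := ?_
        DD := by simp
        Da := by simp }, ?_, ?_⟩
    · intro b c μ h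
      simp at h
    · intro b μ h
      have : μ = 0 := by
        by_contra h0
        apply h
        simp [coeff_one, Ne.symm h0]
      subst this
      simp
    · intro x _ hx
      refine ⟨0, ?_⟩
      rw [hE] at hx
      ext1 b
      have h1 : x b = 0 := by simpa [dotProduct] using hx
      simp [h1]
    · exact ⟨1, by simp, by simp [dotProduct]⟩
  intro N
  induction N with
  | zero =>
    intro E hE _
    have : E = ∅ := by simpa using hE
    subst this
    exact base
  | succ N ih =>
    intro E hE hS
    rcases E.eq_empty_or_nonempty with rfl | ⟨f, hf⟩
    · exact base
    · have hc : (E.erase f).card ≤ N := by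
        rw [Finset.card_erase_of_mem hf]; omega
      have hS' : ∀ e ∈ E.erase f, e ⊆ S := fun e he => hS e (Finset.mem_of_mem_erase he)
      obtain ⟨B₂, i₂, P₂, h₂⟩ := ih (E.erase f) hc hS'
      obtain ⟨B₁, i₁, P₁, h₁⟩ := ih ((E.erase f).image (· \ f))
        (Finset.card_image_le.trans hc) (by
          intro e he
          obtain ⟨g, hg, rfl⟩ := Finset.mem_image.1 he
          exact Finset.sdiff_subset.trans (hS' g hg))
      have := cone (I := EI K E) P₁ P₂ h₁ h₂ (edgeMonomial K f)
        (∑ i ∈ f, Finsupp.single i 1 : Fin n →₀ ℕ).degree ?_ (EI_colon _ f) ?_ (EI_keep _)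
      · obtain ⟨P, hP⟩ := this
        exact ⟨_, _, P, hP⟩
      · intro μ hμ
        rw [edgeMonomial_eq, coeff_monomial] at hμ
        have h3 : (∑ i ∈ f, Finsupp.single i 1 : Fin n →₀ ℕ) = μ := by
          by_contra h3
          rw [if_neg h3] at hμ
          exact hμ rfl
        refine ⟨by rw [h3], ?_⟩
        intro i hi
        rw [← h3, Finsupp.mem_support_iff, ind_apply] at hi
        apply hS f hf
        by_contra h
        simp [h] at hi
      · intro p
        rw [← EI_insert, Finset.insert_erase hf]

end cone

section cancel

variable {n : ℕ} {K : Type} [Field K]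

theorem cancel {S : Finset (Fin n)} {I : Ideal (MvPolynomial (Fin n) K)} {B : Type}
    [Fintype B] [DecidableEq B] (P : PreRes K S I B) (hP : P.IsRes) (k j : B)
    (h : coeff 0 (P.D k j) ≠ 0) :
    ∃ P' : PreRes K S I {b : B // b ≠ j ∧ b ≠ k}, P'.IsRes := by
  obtain ⟨hdeg, htw, -⟩ := P.hD k j 0 h
  rw [map_zero, zero_add] at htw
  have hkj : k ≠ j := by
    rintro rfl
    omega
  have hak : P.a k = 0 := by
    by_contra h0
    have := P.a_deg k h0
    omega
  obtain ⟨u, hu⟩ : ∃ u : K, P.D k j = C u := by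
    refine ⟨coeff 0 (P.D k j), ?_⟩
    classical
    ext μ
    rw [coeff_C]
    split_ifs with h0
    · rw [h0]
    · by_contra h1
      have h2 := P.hD k j μ h1
      have h3 : μ.degree = 0 := by omega
      exact h0 ((Finsupp.degree_eq_zero_iff μ).1 h3).symm
  have hu0 : u ≠ 0 := by
    rintro rfl
    simp [hu] at h
  obtain ⟨v, hv, hvC⟩ : ∃ v : MvPolynomial (Fin n) K, v * P.D k j = 1 ∧
      ∀ μ, coeff μ v ≠ 0 → μ = 0 := by
    refine ⟨C u⁻¹, ?_, ?_⟩
    · rw [hu, ← C_mul, inv_mul_cancel₀ hu0, C_1]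
    · intro μ hμ
      classical
      rw [coeff_C] at hμ
      by_contra h0
      rw [if_neg (Ne.symm h0)] at hμ
      exact hμ rfl
  let D₂ : Matrix B B (MvPolynomial (Fin n) K) := fun b => P.D b - (P.D b j * v) • P.D k
  have hrow : ∀ b, P.D b ᵥ* P.D = 0 := fun b => congrFun P.DD b
  have F1 : ∀ x : B → MvPolynomial (Fin n) K,
      x ᵥ* D₂ = x ᵥ* P.D - ((x ᵥ* P.D) j * v) • P.D k := by
    intro x
    ext1 c
    simp only [vecMul, dotProduct, D₂, Pi.sub_apply, Pi.smul_apply, smul_eq_mul, mul_sub,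
      Finset.sum_sub_distrib, Finset.sum_mul]
    congr 1
    exact Finset.sum_congr rfl fun b _ => by ring
  have hD₂k : D₂ k = 0 := by
    ext1 c
    simp only [D₂, Pi.sub_apply, Pi.smul_apply, smul_eq_mul, Pi.zero_apply]
    linear_combination (-P.D k c) * hv
  have hD₂j : ∀ b, D₂ b j = 0 := by
    intro b
    simp only [D₂, Pi.sub_apply, Pi.smul_apply, smul_eq_mul]
    linear_combination (-P.D b j) * hv
  have hD₂D : ∀ b, D₂ b ᵥ* P.D = 0 := by
    intro b
    simp only [D₂]
    rw [sub_vecMul, smul_vecMul, hrow, hrow]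
    simp
  let D₃ : Matrix {b : B // b ≠ j ∧ b ≠ k} {b : B // b ≠ j ∧ b ≠ k} (MvPolynomial (Fin n) K) :=
    fun b c => D₂ b c
  let a₃ : {b : B // b ≠ j ∧ b ≠ k} → MvPolynomial (Fin n) K := fun b => P.a b
  have hsum : ∀ g : B → MvPolynomial (Fin n) K, g j = 0 → g k = 0 →
      ∑ b : {b : B // b ≠ j ∧ b ≠ k}, g b = ∑ b, g b := by
    intro g hj hk
    refine Fintype.sum_of_injective (fun b => b.1) Subtype.val_injective _ _ ?_ (fun _ => rfl)
    intro b hb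
    by_cases h1 : b = j
    · rw [h1, hj]
    · by_cases h2 : b = k
      · rw [h2, hk]
      · exact absurd ⟨⟨b, h1, h2⟩, rfl⟩ hb
  have F2 : ∀ (y : B → MvPolynomial (Fin n) K) (c : {b : B // b ≠ j ∧ b ≠ k}), y j = 0 →
      ((fun b : {b : B // b ≠ j ∧ b ≠ k} => y b) ᵥ* D₃) c = (y ᵥ* D₂) c := by
    intro y c hy
    simp only [vecMul, dotProduct, D₃]
    exact hsum (fun b => y b * D₂ b c) (by simp [hy]) (by simp [hD₂k])
  have F3 : ∀ (y : B → MvPolynomial (Fin n) K), y j = 0 →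
      (fun b : {b : B // b ≠ j ∧ b ≠ k} => y b) ⬝ᵥ a₃ = y ⬝ᵥ P.a := by
    intro y hy
    simp only [dotProduct, a₃]
    exact hsum (fun b => y b * P.a b) (by simp [hy]) (by simp [hak])
  have fix : ∀ y : B → MvPolynomial (Fin n) K, ∃ y' : B → MvPolynomial (Fin n) K,
      y' j = 0 ∧ y' ᵥ* P.D = y ᵥ* P.D ∧ y ⬝ᵥ P.a - y' ⬝ᵥ P.a ∈ I := by
    intro y
    refine ⟨y - (y j * v) • P.D k, ?_, ?_, ?_⟩
    · simp only [Pi.sub_apply, Pi.smul_apply, smul_eq_mul]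
      linear_combination (-y j) * hv
    · rw [sub_vecMul, smul_vecMul, hrow]
      simp
    · rw [sub_dotProduct, sub_sub_cancel, smul_dotProduct]
      exact I.mul_mem_left _ (P.Da k)
  refine ⟨{ deg := fun b => P.deg b
            tw := fun b => P.tw b
            D := D₃
            a := a₃
            hD := ?_
            ha := fun b => P.ha b
            DD := ?_
            Da := ?_ }, ?_, ?_⟩
  · intro b c μ hμ
    change coeff μ (P.D b c - P.D b j * v * P.D k c) ≠ 0 at hμ
    rw [coeff_sub] at hμ
    by_cases h1 : coeff μ (P.D b c) = 0
    · rw [h1, zero_sub, neg_ne_zero] at hμ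
      obtain ⟨μ₁, μ₂, rfl, h2, h3⟩ := coeff_mul_ne hμ
      obtain ⟨μ₃, μ₄, rfl, h4, h5⟩ := coeff_mul_ne h2
      have := hvC _ h5
      subst this
      have h6 := P.hD _ _ _ h4
      have h7 := P.hD _ _ _ h3
      rw [supp_add, add_zero, map_add]
      exact ⟨by omega, by omega, h6.2.2, h7.2.2⟩
    · exact P.hD _ _ _ h1
  · refine Matrix.ext fun b c => ?_
    change ((fun e : {b : B // b ≠ j ∧ b ≠ k} => D₂ b e) ᵥ* D₃) c = 0
    rw [F2 (D₂ b) c (hD₂j b), F1, hD₂D]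
    simp
  · intro b
    have := F3 (D₂ b) (hD₂j b)
    change (fun c : {b : B // b ≠ j ∧ b ≠ k} => D₂ b c) ⬝ᵥ a₃ ∈ I
    rw [this]
    simp only [D₂]
    rw [sub_dotProduct, smul_dotProduct]
    exact I.sub_mem (P.Da b) (I.mul_mem_left _ (P.Da k))
  · intro x hx hxa
    simp only at hx hxa ⊢
    let x₀ : B → MvPolynomial (Fin n) K := fun b => if h : b ≠ j ∧ b ≠ k then x ⟨b, h⟩ else 0
    have hx₀ : x = fun b : {b : B // b ≠ j ∧ b ≠ k} => x₀ b := by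
      ext1 b
      simp [x₀, b.2.1, b.2.2]
    have hx₀j : x₀ j = 0 := by simp [x₀]
    let x₁ : B → MvPolynomial (Fin n) K := x₀ - ((x₀ ᵥ* P.D) j * v) • Pi.single k 1
    have hx₁D : x₁ ᵥ* P.D = x₀ ᵥ* D₂ := by
      rw [F1]
      simp only [x₁]
      rw [sub_vecMul, smul_vecMul, single_one_vecMul]
      rfl
    have hw : ∀ c, c ≠ k → (x₀ ᵥ* D₂) c = 0 := by
      intro c hc
      by_cases h1 : c = j
      · subst h1
        simp only [vecMul, dotProduct, hD₂j, mul_zero, Finset.sum_const_zero]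
      · rw [← F2 x₀ ⟨c, h1, hc⟩ hx₀j, ← hx₀, hx]
        rfl
    have hw2 : x₀ ᵥ* D₂ = 0 := by
      have h1 : ((x₀ ᵥ* D₂) ᵥ* P.D) j = 0 := by
        rw [← hx₁D, vecMul_vecMul, P.DD]
        simp
      have h2 : ((x₀ ᵥ* D₂) ᵥ* P.D) j = (x₀ ᵥ* D₂) k * P.D k j := by
        conv_lhs => rw [vecMul, dotProduct]
        rw [Finset.sum_eq_single k]
        · intro b _ hb
          rw [hw b hb, zero_mul]
        · simp
      ext1 c
      by_cases hc : c = k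
      · subst hc
        rw [h1] at h2
        rw [Pi.zero_apply]
        linear_combination (-(x₀ ᵥ* D₂) c) * hv - v * h2
      · exact hw c hc
    have hx₁a : x₁ ⬝ᵥ P.a = x ⬝ᵥ a₃ := by
      conv_rhs => rw [hx₀]
      rw [F3 x₀ hx₀j]
      simp only [x₁]
      rw [sub_dotProduct, smul_dotProduct, single_one_dotProduct, hak]
      simp
    have hx₁j : x₁ j = 0 := by
      simp [x₁, hx₀j, hkj.symm]
    obtain ⟨y, hy⟩ := hP.ex x₁ (hx₁D.trans hw2) (hx₁a ▸ hxa)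
    obtain ⟨y', hy'j, hy'D, -⟩ := fix y
    refine ⟨fun b => y' b, ?_⟩
    ext1 c
    rw [F2 y' c hy'j, F1, hy'D, hy, hx₁j]
    rw [hx₀]
    simp [x₁, c.2.2]
  · obtain ⟨z, hz, hza⟩ := hP.surj
    obtain ⟨z', hz'j, hz'D, hz'a⟩ := fix z
    refine ⟨fun b => z' b, ?_, ?_⟩
    · simp only
      ext1 c
      rw [F2 z' c hz'j, F1, hz'D, hz]
      simp
    · simp only
      rw [F3 z' hz'j]
      have := I.add_mem hza hz'a
      convert this using 1
      ring

end cancel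

section main

variable {n : ℕ} {K : Type} [Field K]

/-- set the variables outside `S` to zero -/
noncomputable def sig (K : Type) [Field K] (S : Finset (Fin n)) :
    MvPolynomial (Fin n) K →+* MvPolynomial (Fin n) K :=
  (aeval (R := K) (fun i => if i ∈ S then (X i : MvPolynomial (Fin n) K) else 0)).toRingHom

theorem sig_X (S : Finset (Fin n)) (i : Fin n) :
    sig K S (X i) = if i ∈ S then X i else 0 := by
  simp [sig]

theorem sig_C (S : Finset (Fin n)) (c : K) : sig K S (C c) = C c := by
  simp [sig]

theorem sig_fix (S : Finset (Fin n)) (p : MvPolynomial (Fin n) K)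
    (h : ∀ μ, coeff μ p ≠ 0 → μ.support ⊆ S) : sig K S p = p := by
  conv_rhs => rw [p.as_sum]
  conv_lhs => rw [p.as_sum]
  rw [map_sum]
  refine Finset.sum_congr rfl fun μ hμ => ?_
  have h1 := h μ (mem_support_iff.1 hμ)
  rw [monomial_eq, map_mul, sig_C, Finsupp.prod, map_prod]
  congr 1
  refine Finset.prod_congr rfl fun i hi => ?_
  rw [map_pow, sig_X, if_pos (h1 hi)]

theorem sig_coeff (S : Finset (Fin n)) (p : MvPolynomial (Fin n) K) :
    constantCoeff (sig K S p) = constantCoeff p := by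
  have : (constantCoeff (R := K)).comp (sig K S) = constantCoeff := by
    apply MvPolynomial.ringHom_ext
    · intro c
      simp [sig_C]
    · intro i
      rw [RingHom.comp_apply, sig_X]
      split_ifs <;> simp
  exact congrArg (fun f : MvPolynomial (Fin n) K →+* K => f p) this

theorem sig_mem (S : Finset (Fin n)) (E : Finset (Finset (Fin n))) (p : MvPolynomial (Fin n) K)
    (h : p ∈ EI K E) : sig K S p ∈ EI K (E.filter (fun e => e ⊆ S)) := by
  have : EI K E ≤ Ideal.comap (sig K S) (EI K (E.filter (fun e => e ⊆ S))) := by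
    unfold EI
    rw [Ideal.span_le]
    rintro _ ⟨e, he, rfl⟩
    rw [SetLike.mem_coe, Ideal.mem_comap]
    by_cases heS : e ⊆ S
    · have : sig K S (edgeMonomial K e) = edgeMonomial K e := by
        unfold edgeMonomial
        rw [map_prod]
        exact Finset.prod_congr rfl fun i hi => by rw [sig_X, if_pos (heS hi)]
      rw [this]
      apply Ideal.subset_span
      exact ⟨e, by simpa [heS] using he, rfl⟩
    · obtain ⟨i, hi, hiS⟩ := Finset.not_subset.1 heS
      have : sig K S (edgeMonomial K e) = 0 := by
        unfold edgeMonomial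
        rw [map_prod]
        exact Finset.prod_eq_zero hi (by rw [sig_X, if_neg hiS])
      rw [this]
      exact Ideal.zero_mem _
  exact this h

theorem bad_unit (S : Finset (Fin n)) (E : Finset (Finset (Fin n))) {B B' : Type} [Fintype B]
    [Fintype B'] (P : PreRes K S (EI K (E.filter (fun e => e ⊆ S))) B) (hP : P.IsRes)
    (F : PreRes K Finset.univ (EI K E) B') (hF : F.IsRes) (r : ℕ)
    (hr : ∀ j, F.tw j ≤ r + F.deg j) (k : B) (hk : r + P.deg k < P.tw k) :
    ∃ b c, coeff 0 (P.D b c) ≠ 0 := by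
  classical
  have hle : EI K (E.filter (fun e => e ⊆ S)) ≤ EI K E := by
    apply Ideal.span_mono
    apply Set.image_mono
    exact Finset.coe_subset.2 (Finset.filter_subset _ _)
  let PC : PreRes K Finset.univ (EI K E) B :=
    { deg := P.deg
      tw := P.tw
      D := P.D
      a := P.a
      hD := fun b c μ h => ⟨(P.hD b c μ h).1, (P.hD b c μ h).2.1, Finset.subset_univ _⟩
      ha := fun b μ h => ⟨(P.ha b μ h).1, (P.ha b μ h).2.1, Finset.subset_univ _⟩
      DD := P.DD
      Da := fun b => hle (P.Da b) }
  obtain ⟨Φ, hΦ, hΦa, hΦh⟩ := compare PC F hF (EI_keep E)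
  change Φ * F.D = P.D * Φ at hΦ
  change ∀ b, (Φ *ᵥ F.a) b - P.a b ∈ _ at hΦa
  change ∀ b j μ, coeff μ (Φ b j) ≠ 0 → F.deg j = P.deg b ∧ μ.degree + F.tw j = P.tw b ∧ _ at hΦh
  set σ := sig K S with hσ
  have hPD : P.D.map σ = P.D := by
    ext1 b c
    exact sig_fix S _ fun μ h => (P.hD b c μ h).2.2
  have hPa : ∀ b, σ (P.a b) = P.a b := fun b => sig_fix S _ fun μ h => (P.ha b μ h).2.2
  have e1 : Φ.map σ * F.D.map σ = P.D * Φ.map σ := by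
    rw [← Matrix.map_mul, hΦ, Matrix.map_mul, hPD]
  have e2 : ∀ b, (Φ.map σ *ᵥ (σ ∘ F.a)) b - P.a b ∈ EI K (E.filter (fun e => e ⊆ S)) := by
    intro b
    have := sig_mem S E _ (hΦa b)
    rw [map_sub, ← hσ, hPa, RingHom.map_mulVec] at this
    exact this
  obtain ⟨Ψ, hΨ, hΨa, -⟩ := lift F.deg (F.D.map σ) (fun b c h => by
      have : F.D b c ≠ 0 := by
        intro h0
        apply h
        rw [Matrix.map_apply, h0, map_zero]
      have := F.D_deg b c this
      omega) P.D P.a (EI K (E.filter (fun e => e ⊆ S))) 0 (σ ∘ F.a) 1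
      (by rw [← Matrix.map_mul, F.DD]; ext1 b c; simp) (by simp) (by
        intro b
        have := sig_mem S E _ (F.Da b)
        rw [← hσ, RingHom.map_mulVec] at this
        simpa using this) (fun _ _ => True) (fun _ _ => True) (fun _ _ _ => trivial)
      (fun b w _ h1 h2 => by
        obtain ⟨x, hx⟩ := IsRes.solve hP w ((σ ∘ F.a) b) h1 h2
        exact ⟨x, trivial, hx⟩)
  rw [one_smul, add_zero] at hΨ
  obtain ⟨H, hH, -, -⟩ := lift P.deg P.D (fun b c h => by
      have := P.D_deg b c h
      omega) P.D P.a (EI K (E.filter (fun e => e ⊆ S))) (1 - Φ.map σ * Ψ) 0 (-1)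
      P.DD (by
        rw [Matrix.mul_sub, Matrix.sub_mul, Matrix.mul_assoc (Φ.map σ), hΨ, ← Matrix.mul_assoc,
          ← Matrix.mul_assoc, e1]
        simp) (by
        intro b
        have h1 := dot_mem (Φ.map σ b) _ hΨa
        have h2 := e2 b
        have h3 : Φ.map σ b ⬝ᵥ (fun b => (Ψ *ᵥ P.a) b - (σ ∘ F.a) b) =
          (Φ.map σ *ᵥ (Ψ *ᵥ P.a)) b - (Φ.map σ *ᵥ (σ ∘ F.a)) b :=
            dotProduct_sub (Φ.map σ b) _ _
        rw [h3] at h1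
        have := neg_mem (Ideal.add_mem _ h1 h2)
        rw [mulVec_zero, sub_mulVec, one_mulVec, ← mulVec_mulVec]
        convert this using 1
        simp only [Pi.sub_apply, Pi.zero_apply]
        ring) (fun _ _ => True) (fun _ _ => True) (fun _ _ _ => trivial)
      (fun b w _ h1 h2 => by
        obtain ⟨x, hx⟩ := IsRes.solve hP w ((0 : B → MvPolynomial (Fin n) K) b) h1 h2
        exact ⟨x, trivial, hx⟩)
  by_contra! hcon
  have hcon' : ∀ b c, constantCoeff (P.D b c) = 0 := hcon
  have h1 := congrArg constantCoeff (congrFun (congrFun hH k) k)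
  simp only [Matrix.add_apply, Matrix.sub_apply, Matrix.smul_apply, Matrix.mul_apply,
    Matrix.one_apply_eq, map_add, map_sub, map_sum, map_mul, smul_eq_mul, hcon', map_one,
    mul_zero, zero_mul, Finset.sum_const_zero, zero_add, Matrix.map_apply] at h1
  have h2 : ∀ j, constantCoeff (σ (Φ k j)) = 0 := by
    intro j
    rw [hσ, sig_coeff]
    by_contra h3
    have h4 := hΦh k j 0 h3
    have h5 := hr j
    rw [map_zero] at h4
    omega
  simp [h2] at h1

theorem exists_good (S : Finset (Fin n)) (E : Finset (Finset (Fin n))) {B' : Type}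
    [Fintype B'] (F : PreRes K Finset.univ (EI K E) B') (hF : F.IsRes) (r : ℕ)
    (hr : ∀ j, F.tw j ≤ r + F.deg j) : ∀ (N : ℕ) (B : Type) [Fintype B]
    (P : PreRes K S (EI K (E.filter (fun e => e ⊆ S))) B), P.IsRes → Fintype.card B ≤ N →
    ∃ (B : Type) (_ : Fintype B) (P : PreRes K S (EI K (E.filter (fun e => e ⊆ S))) B),
      P.IsRes ∧ ∀ b, P.tw b ≤ r + P.deg b := by
  classical
  intro N
  induction N with
  | zero =>
    intro B _ P hP hc
    have : IsEmpty B := Fintype.card_eq_zero_iff.1 (by omega)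
    exact ⟨B, _, P, hP, fun b => this.elim b⟩
  | succ N ih =>
    intro B _ P hP hc
    by_cases hg : ∀ b, P.tw b ≤ r + P.deg b
    · exact ⟨B, _, P, hP, hg⟩
    · push Not at hg
      obtain ⟨k, hk⟩ := hg
      obtain ⟨b, c, hbc⟩ := bad_unit S E P hP F hF r hr k hk
      obtain ⟨P', hP'⟩ := cancel P hP b c hbc
      refine ih _ P' hP' ?_
      have : Fintype.card {x : B // x ≠ c ∧ x ≠ b} < Fintype.card B :=
        Fintype.card_subtype_lt (x := b) (by simp)
      omega

end main

section conv

variable {n : ℕ} {K : Type} [Field K]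

theorem homog_iff (p : MvPolynomial (Fin n) K) (d : ℕ) :
    p.IsHomogeneous d ↔ ∀ μ, coeff μ p ≠ 0 → μ.degree = d := by
  unfold MvPolynomial.IsHomogeneous MvPolynomial.IsWeightedHomogeneous
  refine forall_congr' fun μ => ?_
  rw [Finsupp.degree_eq_weight_one]
  rfl

/-- place a vector of homological degree `i` -/
noncomputable def inc {n : ℕ} {K : Type} [Field K] (rk : ℕ → ℕ) (i : ℕ)
    (x : Fin (rk i) → MvPolynomial (Fin n) K) (c : Σ i : ℕ, Fin (rk i)) :
    MvPolynomial (Fin n) K :=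
  if h : c.1 = i then x (h ▸ c.2) else 0

theorem inc_self (rk : ℕ → ℕ) (i : ℕ) (x : Fin (rk i) → MvPolynomial (Fin n) K) (j : Fin (rk i)) :
    inc rk i x ⟨i, j⟩ = x j := by
  simp [inc]

theorem inc_ne (rk : ℕ → ℕ) (i i' : ℕ) (x : Fin (rk i) → MvPolynomial (Fin n) K)
    (j : Fin (rk i')) (h : i' ≠ i) : inc rk i x ⟨i', j⟩ = 0 := by
  simp [inc, h]

theorem ofGFR {I : Ideal (MvPolynomial (Fin n) K)} (F : GFR n K I) :
    ∃ (B : Type) (_ : Fintype B) (P : PreRes K Finset.univ I B), P.IsRes ∧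
      ∀ r, (∀ i j, F.tw i j ≤ r + i) → ∀ b, P.tw b ≤ r + P.deg b := by
  classical
  have hfin : Finite (Σ i : ℕ, Fin (F.rk i)) := by
    refine Finite.of_surjective
      (fun p : Σ i : Fin (F.len + 1), Fin (F.rk i) => (⟨p.1, p.2⟩ : Σ i : ℕ, Fin (F.rk i))) ?_
    rintro ⟨i, j⟩
    have hi : i < F.len + 1 := by
      by_contra h
      have h0 := F.rk_zero i (by omega)
      have := j.2
      omega
    exact ⟨⟨⟨i, hi⟩, j⟩, rfl⟩
  let inst : Fintype (Σ i : ℕ, Fin (F.rk i)) := Fintype.ofFinite _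
  let D : Matrix (Σ i : ℕ, Fin (F.rk i)) (Σ i : ℕ, Fin (F.rk i)) (MvPolynomial (Fin n) K) :=
    fun b => match b with
      | ⟨0, _⟩ => 0
      | ⟨i + 1, k⟩ => inc F.rk i (F.δ i (Pi.single k 1))
  let a : (Σ i : ℕ, Fin (F.rk i)) → MvPolynomial (Fin n) K :=
    inc F.rk 0 (fun j => F.aug (Pi.single j 1))
  have hvD : ∀ (x : (Σ i : ℕ, Fin (F.rk i)) → MvPolynomial (Fin n) K) (i : ℕ) (j : Fin (F.rk i)),
      (x ᵥ* D) ⟨i, j⟩ = F.δ i (fun k => x ⟨i + 1, k⟩) j := by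
    intro x i j
    rw [LinearMap.pi_apply_eq_sum_univ (F.δ i), Finset.sum_apply]
    simp only [vecMul, dotProduct]
    symm
    refine Fintype.sum_of_injective (fun k : Fin (F.rk (i + 1)) => ⟨i + 1, k⟩)
      (fun k k' h => by simpa using h) _ _ ?_ ?_
    · rintro ⟨i', k⟩ hk
      have : D ⟨i', k⟩ ⟨i, j⟩ = 0 := by
        rcases i' with _ | i'
        · rfl
        · by_cases h : i = i'
          · subst h
            exact absurd ⟨k, rfl⟩ hk
          · exact inc_ne _ _ _ _ _ h
      rw [this, mul_zero]
    · intro k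
      change _ = x ⟨i + 1, k⟩ * inc F.rk i (F.δ i (Pi.single k 1)) ⟨i, j⟩
      rw [inc_self, Pi.smul_apply, smul_eq_mul]
      have hs : (Pi.single k 1 : Fin (F.rk (i + 1)) → MvPolynomial (Fin n) K) =
          fun l => if k = l then 1 else 0 := by
        ext1 l
        simp [Pi.single_apply, eq_comm]
      rw [hs]
      try rfl
  have hva : ∀ x : (Σ i : ℕ, Fin (F.rk i)) → MvPolynomial (Fin n) K,
      x ⬝ᵥ a = F.aug (fun k => x ⟨0, k⟩) := by
    intro x
    rw [LinearMap.pi_apply_eq_sum_univ F.aug]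
    simp only [dotProduct]
    symm
    refine Fintype.sum_of_injective (fun k : Fin (F.rk 0) => ⟨0, k⟩)
      (fun k k' h => by simpa using h) _ _ ?_ ?_
    · rintro ⟨i', k⟩ hk
      have : a ⟨i', k⟩ = 0 := by
        by_cases h : i' = 0
        · subst h
          exact absurd ⟨k, rfl⟩ hk
        · exact inc_ne _ _ _ _ _ h
      rw [this, mul_zero]
    · intro k
      change _ = x ⟨0, k⟩ * inc F.rk 0 (fun j => F.aug (Pi.single j 1)) ⟨0, k⟩
      rw [inc_self, smul_eq_mul]
      congr 2
      ext1 l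
      simp [Pi.single_apply, eq_comm]
  have hδδ : ∀ i x, F.δ i (F.δ (i + 1) x) = 0 := by
    intro i x
    have : F.δ (i + 1) x ∈ LinearMap.ker (F.δ i) := by
      rw [← F.exact_succ]
      exact ⟨x, rfl⟩
    exact this
  have hrow : ∀ (i i' : ℕ) (x : Fin (F.rk i) → MvPolynomial (Fin n) K), i ≠ i' →
      (fun k => inc F.rk i x ⟨i', k⟩) = 0 := by
    intro i i' x h
    ext1 k
    exact inc_ne _ _ _ _ _ h.symm
  have hrow' : ∀ (i : ℕ) (x : Fin (F.rk i) → MvPolynomial (Fin n) K),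
      (fun k => inc F.rk i x ⟨i, k⟩) = x := by
    intro i x
    ext1 k
    exact inc_self _ _ _ _
  refine ⟨Σ i : ℕ, Fin (F.rk i), inst,
    { deg := fun b => b.1
      tw := fun b => F.tw b.1 b.2
      D := D
      a := a
      hD := ?_
      ha := ?_
      DD := ?_
      Da := ?_ }, ⟨?_, ?_⟩, ?_⟩
  · rintro ⟨i', k⟩ ⟨i, j⟩ μ hμ
    rcases i' with _ | i'
    · exact absurd rfl hμ
    · change coeff μ (inc F.rk i' (F.δ i' (Pi.single k 1)) ⟨i, j⟩) ≠ 0 at hμ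
      by_cases h : i = i'
      · subst h
        rw [inc_self] at hμ
        rcases F.δ_homog i k j with h0 | ⟨h1, h2⟩
        · rw [h0] at hμ
          simp at hμ
        · have := (homog_iff _ _).1 h2 μ hμ
          refine ⟨rfl, ?_, Finset.subset_univ _⟩
          simp only
          omega
      · rw [inc_ne _ _ _ _ _ h] at hμ
        simp at hμ
  · rintro ⟨i, j⟩ μ hμ
    change coeff μ (inc F.rk 0 (fun j => F.aug (Pi.single j 1)) ⟨i, j⟩) ≠ 0 at hμ
    by_cases h : i = 0
    · subst h
      rw [inc_self] at hμ
      exact ⟨rfl, (homog_iff _ _).1 (F.aug_homog j) μ hμ, Finset.subset_univ _⟩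
    · rw [inc_ne _ _ _ _ _ h] at hμ
      simp at hμ
  · refine Matrix.ext fun b c => ?_
    obtain ⟨i', k⟩ := b
    obtain ⟨i, j⟩ := c
    change (D ⟨i', k⟩ ᵥ* D) ⟨i, j⟩ = 0
    rw [hvD]
    rcases i' with _ | i'
    · change F.δ i 0 j = 0
      simp
    · change F.δ i (fun l => inc F.rk i' (F.δ i' (Pi.single k 1)) ⟨i + 1, l⟩) j = 0
      by_cases h : i' = i + 1
      · subst h
        rw [hrow', hδδ]
        rfl
      · rw [hrow _ _ _ h]
        simp
  · rintro ⟨i', k⟩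
    change D ⟨i', k⟩ ⬝ᵥ a ∈ I
    rw [hva]
    rcases i' with _ | i'
    · change F.aug 0 ∈ I
      simp
    · change F.aug (fun l => inc F.rk i' (F.δ i' (Pi.single k 1)) ⟨0, l⟩) ∈ I
      by_cases h : i' = 0
      · subst h
        rw [hrow']
        have : F.δ 0 (Pi.single k 1) ∈ Submodule.comap F.aug I := by
          rw [← F.exact_zero]
          exact ⟨_, rfl⟩
        exact this
      · rw [hrow _ _ _ h]
        simp
  · intro x hx hxa
    simp only at hx hxa ⊢
    have : ∀ i, ∃ y : Fin (F.rk (i + 1)) → MvPolynomial (Fin n) K,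
        F.δ i y = fun k => x ⟨i, k⟩ := by
      intro i
      rcases i with _ | i
      · have : (fun k => x ⟨0, k⟩) ∈ Submodule.comap F.aug I := by
          rw [Submodule.mem_comap, ← hva]
          exact hxa
        rw [← F.exact_zero] at this
        exact this
      · have : (fun k => x ⟨i + 1, k⟩) ∈ LinearMap.ker (F.δ i) := by
          rw [LinearMap.mem_ker]
          ext1 j
          rw [← hvD, hx]
          rfl
        rw [← F.exact_succ] at this
        exact this
    choose y hy using this
    refine ⟨fun b => match b with
      | ⟨0, _⟩ => 0
      | ⟨i + 1, k⟩ => y i k, ?_⟩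
    ext1 ⟨i, j⟩
    rw [hvD]
    exact congrFun (hy i) j
  · obtain ⟨x, hx⟩ := F.aug_surj 1
    refine ⟨inc F.rk 0 x, ?_, ?_⟩
    · simp only
      ext1 ⟨i, j⟩
      rw [hvD, hrow _ _ _ (by omega)]
      simp
    · simp only
      rw [hva, hrow']
      exact hx
  · intro r hr b
    exact hr b.1 b.2

theorem toGFR {S : Finset (Fin n)} {I : Ideal (MvPolynomial (Fin n) K)} {B : Type} [Fintype B]
    (P : PreRes K S I B) (hP : P.IsRes) :
    ∃ F : GFR n K I, ∀ r, (∀ b, P.tw b ≤ r + P.deg b) → ∀ i j, F.tw i j ≤ r + i := by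
  classical
  let rk : ℕ → ℕ := fun i => Fintype.card {b : B // P.deg b = i}
  let e : ∀ i, Fin (rk i) ≃ {b : B // P.deg b = i} := fun i => (Fintype.equivFin _).symm
  let res : ∀ i, (B → MvPolynomial (Fin n) K) → (Fin (rk i) → MvPolynomial (Fin n) K) :=
    fun i y j => y (e i j)
  let ext : ∀ i, (Fin (rk i) → MvPolynomial (Fin n) K) → (B → MvPolynomial (Fin n) K) :=
    fun i x b => if h : P.deg b = i then x ((e i).symm ⟨b, h⟩) else 0
  have res_ext : ∀ i x, res i (ext i x) = x := by
    intro i x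
    ext1 j
    simp [res, ext, (e i j).2]
  have res_ext_ne : ∀ i i' x, i' ≠ i → res i' (ext i x) = 0 := by
    intro i i' x h
    ext1 j
    simp [res, ext, (e i' j).2, h]
  have eq_zero : ∀ y, (∀ i, res i y = 0) → y = 0 := by
    intro y h
    ext1 b
    have := congrFun (h (P.deg b)) ((e (P.deg b)).symm ⟨b, rfl⟩)
    simpa [res] using this
  let δ : ∀ i, ((Fin (rk (i + 1)) → MvPolynomial (Fin n) K) →ₗ[MvPolynomial (Fin n) K]
      (Fin (rk i) → MvPolynomial (Fin n) K)) := fun i =>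
    (Matrix.of fun k j => P.D (e (i + 1) k) (e i j)).vecMulLinear
  let aug : (Fin (rk 0) → MvPolynomial (Fin n) K) →ₗ[MvPolynomial (Fin n) K]
      MvPolynomial (Fin n) K :=
    Fintype.linearCombination (MvPolynomial (Fin n) K) (fun j => P.a (e 0 j))
  have L1 : ∀ i y, δ i (res (i + 1) y) = res i (y ᵥ* P.D) := by
    intro i y
    ext1 j
    simp only [δ, res, vecMulLinear_apply, vecMul, dotProduct, Matrix.of_apply]
    refine Fintype.sum_of_injective (fun k => ((e (i + 1) k : {b : B // P.deg b = i + 1}) : B))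
      (fun k k' h => (e (i + 1)).injective (Subtype.ext h)) _ _ ?_ (fun k => rfl)
    intro b hb
    have : P.D b (e i j) = 0 := by
      by_contra h0
      have h1 := P.D_deg _ _ h0
      rw [(e i j).2] at h1
      exact hb ⟨(e (i + 1)).symm ⟨b, h1⟩, by simp⟩
    rw [this, mul_zero]
  have L2 : ∀ y, aug (res 0 y) = y ⬝ᵥ P.a := by
    intro y
    simp only [aug, res, Fintype.linearCombination_apply, dotProduct, smul_eq_mul]
    refine Fintype.sum_of_injective (fun k => ((e 0 k : {b : B // P.deg b = 0}) : B))
      (fun k k' h => (e 0).injective (Subtype.ext h)) _ _ ?_ (fun k => rfl)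
    intro b hb
    have : P.a b = 0 := by
      by_contra h0
      have h1 := P.a_deg _ h0
      exact hb ⟨(e 0).symm ⟨b, h1⟩, by simp⟩
    rw [this, mul_zero]
  have hδ1 : ∀ i k j, δ i (Pi.single k 1) j = P.D (e (i + 1) k) (e i j) := by
    intro i k j
    simp only [δ, vecMulLinear_apply, single_one_vecMul]
    rfl
  have haug1 : ∀ j, aug (Pi.single j 1) = P.a (e 0 j) := by
    intro j
    simp [aug, Fintype.linearCombination_apply_single]
  refine ⟨{ len := Finset.univ.sup P.deg
            rk := rk
            rk_zero := ?_
            tw := fun i j => P.tw (e i j)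
            δ := δ
            δ_homog := ?_
            aug := aug
            aug_homog := ?_
            aug_surj := ?_
            exact_zero := ?_
            exact_succ := ?_ }, ?_⟩
  · intro i hi
    refine Fintype.card_eq_zero_iff.2 ⟨fun b => ?_⟩
    have : P.deg b.1 ≤ Finset.univ.sup P.deg := Finset.le_sup (Finset.mem_univ _)
    have := b.2
    omega
  · intro i k j
    rw [hδ1]
    by_cases h0 : P.D (e (i + 1) k) (e i j) = 0
    · exact Or.inl h0
    · right
      obtain ⟨ν, hν⟩ := MvPolynomial.ne_zero_iff.1 h0
      have h1 := P.hD _ _ _ hν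
      refine ⟨by omega, (homog_iff _ _).2 fun μ hμ => ?_⟩
      have h2 := P.hD _ _ _ hμ
      omega
  · intro j
    rw [haug1]
    exact (homog_iff _ _).2 fun μ hμ => (P.ha _ _ hμ).2.1
  · intro r
    obtain ⟨z, hz, hza⟩ := hP.surj
    refine ⟨res 0 (r • z), ?_⟩
    rw [L2, smul_dotProduct, smul_eq_mul]
    have := I.mul_mem_left r hza
    convert this using 1
    ring
  · apply le_antisymm
    · rintro _ ⟨x, rfl⟩
      rw [Submodule.mem_comap, ← res_ext 1 x]
      have := L1 0 (ext 1 x)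
      rw [this, L2, ← dotProduct_mulVec]
      exact dot_mem _ _ P.Da
    · intro x hx
      rw [Submodule.mem_comap] at hx
      obtain ⟨y, hy⟩ := hP.ex (ext 0 x) (by
        apply eq_zero
        intro i
        rw [← L1, res_ext_ne _ _ _ (by omega), map_zero]) (by
        rw [← L2, res_ext]
        exact hx)
      refine ⟨res 1 y, ?_⟩
      have := L1 0 y
      rw [hy, res_ext] at this
      exact this
  · intro i
    apply le_antisymm
    · rintro _ ⟨x, rfl⟩
      rw [LinearMap.mem_ker, ← res_ext (i + 1 + 1) x, L1, L1, vecMul_vecMul, P.DD, vecMul_zero]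
      rfl
    · intro x hx
      rw [LinearMap.mem_ker] at hx
      obtain ⟨y, hy⟩ := hP.ex (ext (i + 1) x) (by
        apply eq_zero
        intro i'
        rw [← L1]
        by_cases h : i' = i
        · subst h
          rw [res_ext, hx]
        · rw [res_ext_ne _ _ _ (by omega), map_zero]) (by
        rw [← L2, res_ext_ne _ _ _ (by omega), map_zero]
        exact I.zero_mem)
      refine ⟨res (i + 1 + 1) y, ?_⟩
      rw [L1, hy, res_ext]
  · intro r hr i j
    have := hr (e i j)
    rw [(e i j).2] at this
    exact this

end conv

end Reg

/-- The regularity of an induced subclutter is at most the regularity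
of the clutter: `reg(R/I(C[S])) ≤ reg(R/I(C))`. -/
theorem stmt_3 (K : Type) [Field K] {n : ℕ} (C : Clutter n) (S : Finset (Fin n)) :
    regR ((C.induced S).edgeIdeal K) ≤ regR (C.edgeIdeal K) := by
  classical
  have hC : C.edgeIdeal K = Reg.EI K C.edges := rfl
  have hD : (C.induced S).edgeIdeal K = Reg.EI K (C.edges.filter (fun e => e ⊆ S)) := rfl
  have hne : { r : ℕ | ∃ F : GFR n K (C.edgeIdeal K), ∀ (i : ℕ) (j : Fin (F.rk i)),
      F.tw i j ≤ r + i }.Nonempty := by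
    obtain ⟨B, _, P, hP⟩ := Reg.exists_res (K := K) Finset.univ _ C.edges le_rfl
      (fun e _ => Finset.subset_univ e)
    obtain ⟨F, hF⟩ := Reg.toGFR P hP
    exact ⟨Finset.univ.sup P.tw, F, hF _ fun b =>
      (Finset.le_sup (Finset.mem_univ b)).trans (Nat.le_add_right _ _)⟩
  obtain ⟨F, hF⟩ := Nat.sInf_mem hne
  change ∀ (i : ℕ) (j : Fin (F.rk i)), F.tw i j ≤ regR (C.edgeIdeal K) + i at hF
  apply Nat.sInf_le
  obtain ⟨B', _, F', hF', hr⟩ := Reg.ofGFR F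
  obtain ⟨B, _, P, hP⟩ := Reg.exists_res (K := K) S _ (C.edges.filter (fun e => e ⊆ S)) le_rfl
    (fun e he => (Finset.mem_filter.1 he).2)
  have hG := Reg.exists_good (K := K) S C.edges F' hF' _ (hr _ hF) _ B P hP le_rfl
  obtain ⟨B₁, _, P₁, hP₁, hg⟩ := hG
  obtain ⟨G, hG⟩ := Reg.toGFR P₁ hP₁
  have hfin : ∃ G : GFR n K ((C.induced S).edgeIdeal K), ∀ (i : ℕ) (j : Fin (G.rk i)),
      G.tw i j ≤ regR (C.edgeIdeal K) + i := by
    rw [hD]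
    convert (⟨G, hG _ hg⟩ : ∃ G : GFR n K _, ∀ (i : ℕ) (j : Fin (G.rk i)),
      G.tw i j ≤ regR (C.edgeIdeal K) + i)
  exact hfin
end
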